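/- For the cardinality two-dimensional geometric knapsack problem with guillotine cuts (2GGK-C) on an N×N knapsack, let OPT be an optimal solution and let OPT_{L&C} be a maximum-cardinality subset of the input items that admits a guillotine-separable L&C packing. Then there is a universal constant C such that for every ε ∈ (0,1), |OPT_{L&C}| ≥ (3/4 − C·ε)·|OPT|. -/

import Mathlib

/-- An axis-aligned rectangle, given by the coordinates of its corners. -/
structure Rect where
  x1 : ℝ
  x2 : ℝ
  y1 : ℝ
  y2 : ℝ

namespace Rect

def width (r : Rect) : ℝ := r.x2 - r.x1

def height (r : Rect) : ℝ := r.y2 - r.y1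

def area (r : Rect) : ℝ := r.width * r.height

/-- The open interior of an axis-aligned rectangle. -/
def toSet (r : Rect) : Set (ℝ × ℝ) :=
  {p : ℝ × ℝ | r.x1 < p.1 ∧ p.1 < r.x2 ∧ r.y1 < p.2 ∧ p.2 < r.y2}

/-- `r.SubRect s` : the rectangle `r` is contained in the rectangle `s`. -/
def SubRect (r s : Rect) : Prop :=
  s.x1 ≤ r.x1 ∧ r.x2 ≤ s.x2 ∧ s.y1 ≤ r.y1 ∧ r.y2 ≤ s.y2

noncomputable instance (r s : Rect) : Decidable (r.SubRect s) :=
  inferInstanceAs (Decidable (s.x1 ≤ r.x1 ∧ r.x2 ≤ s.x2 ∧ s.y1 ≤ r.y1 ∧ r.y2 ≤ s.y2))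

end Rect

/-- The square knapsack `[0,N] × [0,N]`. -/
def knapsack (N : ℝ) : Rect := ⟨0, N, 0, N⟩

/-- A placement of the items of `S` (with prescribed widths and heights) as
pairwise non-overlapping axis-aligned rectangles inside the piece `P`. -/
structure IsPacking {ι : Type*} (wd ht : ι → ℝ) (S : Finset ι)
    (place : ι → Rect) (P : Rect) : Prop where
  hw : ∀ i ∈ S, (place i).width = wd i
  hh : ∀ i ∈ S, (place i).height = ht i
  hin : ∀ i ∈ S, (place i).SubRect P
  hdisj : ∀ i ∈ S, ∀ j ∈ S, i ≠ j → Disjoint (place i).toSet (place j).toSet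

/-- Guillotine separability of the placed items of `S` inside the piece `P`:
either the piece contains at most one item, or some axis-parallel end-to-end cut
splits the piece into two rectangular subpieces, crossing the interior of no item,
and the items of each subpiece are recursively guillotine separable. -/
inductive GuillotineSep {ι : Type*} (place : ι → Rect) : Rect → Finset ι → Prop
  | base (P : Rect) (S : Finset ι) (hS : S.card ≤ 1) : GuillotineSep place P S
  | vcut (P : Rect) (S : Finset ι) (c : ℝ) (h1 : P.x1 < c) (h2 : c < P.x2)
      (hcross : ∀ i ∈ S, (place i).x2 ≤ c ∨ c ≤ (place i).x1)
      (hL : GuillotineSep place ⟨P.x1, c, P.y1, P.y2⟩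
              (S.filter fun i => (place i).x2 ≤ c))
      (hR : GuillotineSep place ⟨c, P.x2, P.y1, P.y2⟩
              (S.filter fun i => ¬ (place i).x2 ≤ c)) :
      GuillotineSep place P S
  | hcut (P : Rect) (S : Finset ι) (c : ℝ) (h1 : P.y1 < c) (h2 : c < P.y2)
      (hcross : ∀ i ∈ S, (place i).y2 ≤ c ∨ c ≤ (place i).y1)
      (hB : GuillotineSep place ⟨P.x1, P.x2, P.y1, c⟩
              (S.filter fun i => (place i).y2 ≤ c))
      (hT : GuillotineSep place ⟨P.x1, P.x2, c, P.y2⟩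
              (S.filter fun i => ¬ (place i).y2 ≤ c)) :
      GuillotineSep place P S

/-- A guillotine-separable packing of the items of `S` into the piece `P`. -/
def GuillotinePacking {ι : Type*} (wd ht : ι → ℝ) (S : Finset ι)
    (place : ι → Rect) (P : Rect) : Prop :=
  IsPacking wd ht S place P ∧ GuillotineSep place P S

/-- Labels of containers. -/
inductive CLabel
  | large
  | horizontal
  | vertical
  | area

/-- The constraints of a container packing: a large container contains a single item,
in a horizontal container the items are stacked one above another, in a vertical
container the items are placed side by side, and every item placed in an area
container has width (resp. height) at most an `ε`-fraction of the container's
width (resp. height). -/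
def ContainerLabelOK {ι : Type*} (T : Finset ι) (place : ι → Rect)
    (k : ℕ) (cont : ℕ → Rect) (lab : ℕ → CLabel) (asg : ι → ℕ) (ε : ℝ) : Prop :=
  (∀ j < k, lab j = CLabel.large →
      ∀ i ∈ T, ∀ i' ∈ T, asg i = j → asg i' = j → i = i') ∧
  (∀ j < k, lab j = CLabel.horizontal →
      ∀ i ∈ T, ∀ i' ∈ T, asg i = j → asg i' = j → i ≠ i' →
        (place i).y2 ≤ (place i').y1 ∨ (place i').y2 ≤ (place i).y1) ∧
  (∀ j < k, lab j = CLabel.vertical →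
      ∀ i ∈ T, ∀ i' ∈ T, asg i = j → asg i' = j → i ≠ i' →
        (place i).x2 ≤ (place i').x1 ∨ (place i').x2 ≤ (place i).x1) ∧
  (∀ j < k, lab j = CLabel.area → ∀ i ∈ T, asg i = j →
      (place i).width ≤ ε * (cont j).width ∧ (place i).height ≤ ε * (cont j).height)

/-- An `L&C` packing of the items of `S` into the `N × N` knapsack: a guillotine
separable packing in which the items of a subset `SL` are long and are placed inside
a boundary-`L` (wide items in the horizontal arm `[0,N] × [0,N1]`, tall items in the
vertical arm `[0,N2] × [0,N]`), while all remaining items are placed inside at most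
`k` pairwise non-overlapping containers contained in the region not occupied by the
boundary-`L`. -/
def IsLCPacking {ι : Type*} [DecidableEq ι] (wd ht : ι → ℝ) (N ε : ℝ)
    (S : Finset ι) (place : ι → Rect) (k : ℕ) : Prop :=
  ∃ (N1 N2 : ℝ) (SL : Finset ι) (cont : ℕ → Rect) (lab : ℕ → CLabel) (asg : ι → ℕ),
    0 ≤ N1 ∧ N1 ≤ N ∧ 0 ≤ N2 ∧ N2 ≤ N ∧ SL ⊆ S ∧
    IsPacking wd ht S place (knapsack N) ∧
    GuillotineSep place (knapsack N) S ∧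
    (∀ i ∈ SL, N / 2 < wd i ∨ N / 2 < ht i) ∧
    (∀ i ∈ SL, N / 2 < wd i → (place i).SubRect ⟨0, N, 0, N1⟩) ∧
    (∀ i ∈ SL, ¬ N / 2 < wd i → (place i).SubRect ⟨0, N2, 0, N⟩) ∧
    (∀ j < k, (cont j).SubRect (knapsack N)) ∧
    (∀ j < k, Disjoint (cont j).toSet
        (Rect.toSet ⟨0, N, 0, N1⟩ ∪ Rect.toSet ⟨0, N2, 0, N⟩)) ∧
    (∀ j < k, ∀ j' < k, j ≠ j' → Disjoint (cont j).toSet (cont j').toSet) ∧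
    (∀ i ∈ S \ SL, asg i < k ∧ (place i).SubRect (cont (asg i))) ∧
    ContainerLabelOK (S \ SL) place k cont lab asg ε

/-!
Scale the knapsack to the unit square and choose scales `u < t` such that only a small fraction of
the optimal packing is critical, i.e. has a side in the window between `u` and `t` or nearly as long
as the knapsack. Without these items the packing consists of boundedly many big items, of wide items
`H`, of tall items `V`, and of small items `Q`; up to transposition `|H| ≤ |V|`.

Almost all of `V` and half of `H` are kept. Of the wide items spanning almost the whole knapsack
keep the thinner half `H₀`, of total height at most `1/2`; every other wide item avoids the left or
the right side strip, so one of these strips is avoided by half of them, and inside it there is a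
vertical strip of constant width that meets few tall items. Collapsing this strip and the rows of
`H₀` leaves a guillotine separable packing in a smaller box. Resource augmentation gives back the
space that was freed when it is turned into a constant number of containers. The wide arm of the
boundary-`L` is `H₀`; the tall items that shared rows with `H₀` have negligible total width and form
the other arm. The area bound for next-fit decreasing height then shows that almost all of `Q` still
fits. Altogether about `|H|/2 + |V| + |Q| ≥ (3/4) |OPT|` items are packed.
-/

universe u

section Counting

variable {ι : Type u} [DecidableEq ι]

lemma card_union_sdiff_union_le (S₁ S₂ A B : Finset ι) :
    ((S₁ ∪ S₂) \ (A ∪ B)).card ≤ (S₁ \ A).card + (S₂ \ B).card := by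
  refine (Finset.card_le_card fun x hx => ?_).trans (Finset.card_union_le _ _)
  simp only [Finset.mem_sdiff, Finset.mem_union] at hx ⊢
  tauto

/-- Greedy filling in decreasing order of `key`: `D` holds the item that overflows, if any. -/
lemma exists_greedy_split (key f : ι → ℝ) (S : Finset ι) {a : ℝ} (ha : 0 ≤ a) :
    ∃ P D R : Finset ι, Disjoint P D ∧ Disjoint P R ∧ Disjoint D R ∧ S = P ∪ D ∪ R ∧
      D.card ≤ 1 ∧ ∑ i ∈ P, f i ≤ a ∧ (R.Nonempty → a ≤ ∑ i ∈ P, f i + ∑ i ∈ D, f i) ∧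
      ∀ i ∈ P ∪ D, ∀ j ∈ R, key j ≤ key i := by
  induction S using Finset.strongInduction generalizing a with
  | H S ih =>
    rcases S.eq_empty_or_nonempty with rfl | hne
    · exact ⟨∅, ∅, ∅, by simpa using ha⟩
    obtain ⟨m, hm, hmax⟩ := S.exists_max_image key hne
    by_cases hfa : f m ≤ a
    · obtain ⟨P, D, R, hPD, hPR, hDR, hS, hD, hP, hR, hkey⟩ :=
        ih (S.erase m) (Finset.erase_ssubset hm) (sub_nonneg.2 hfa)
      have hm' : m ∉ P ∪ D ∪ R := hS ▸ Finset.notMem_erase m S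
      simp only [Finset.mem_union, not_or] at hm'
      have hsum : ∑ i ∈ insert m P, f i = f m + ∑ i ∈ P, f i := Finset.sum_insert hm'.1.1
      refine ⟨insert m P, D, R, Finset.disjoint_insert_left.2 ⟨hm'.1.2, hPD⟩,
        Finset.disjoint_insert_left.2 ⟨hm'.2, hPR⟩, hDR, ?_, hD, by linarith,
        fun h => by linarith [hR h], fun i hi j hj => ?_⟩
      · rw [Finset.insert_union, Finset.insert_union, ← hS, Finset.insert_erase hm]
      · rw [Finset.insert_union, Finset.mem_insert] at hi
        rcases hi with rfl | hi
        · have : j ∈ S.erase i := hS ▸ Finset.mem_union_right _ hj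
          exact hmax j (Finset.mem_of_mem_erase this)
        · exact hkey i hi j hj
    · refine ⟨∅, {m}, S.erase m, by simp, by simp, by simp, ?_, by simp, by simpa using ha, ?_, ?_⟩
      · rw [Finset.empty_union, ← Finset.insert_eq, Finset.insert_erase hm]
      · intro _
        simpa using (not_le.1 hfa).le
      · simpa using fun j _ hj => hmax j hj

lemma exists_split_of_sum_le_add (f : ι → ℝ) (S : Finset ι) {a b : ℝ} (ha : 0 ≤ a) (hb : 0 ≤ b)
    (hS : ∑ i ∈ S, f i ≤ a + b) :
    ∃ P D R : Finset ι, Disjoint P D ∧ Disjoint P R ∧ Disjoint D R ∧ S = P ∪ D ∪ R ∧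
      D.card ≤ 1 ∧ ∑ i ∈ P, f i ≤ a ∧ ∑ i ∈ R, f i ≤ b := by
  obtain ⟨P, D, R, hPD, hPR, hDR, rfl, hD, hP, hfull, -⟩ := exists_greedy_split f f S ha
  refine ⟨P, D, R, hPD, hPR, hDR, rfl, hD, hP, ?_⟩
  rcases R.eq_empty_or_nonempty with rfl | hR
  · simpa using hb
  · rw [Finset.sum_union (Finset.disjoint_union_left.2 ⟨hPR, hDR⟩), Finset.sum_union hPD] at hS
    linarith [hfull hR]

end Counting

/-! ### Guillotine trees -/

section LeafConditions

variable {ι : Type u} {wd ht : ι → ℝ} {w h w' h' : ℝ} {S : Finset ι}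

lemma eq_empty_or_singleton_of_card_le_one (hS : S.card ≤ 1) : S = ∅ ∨ ∃ x, S = {x} :=
  (Nat.le_one_iff_eq_zero_or_eq_one.1 hS).imp Finset.card_eq_zero.1 Finset.card_eq_one.1

/-- Leaf condition: at most one item, and it fits into the `w × h` piece. -/
def SingleItem (wd ht : ι → ℝ) (w h : ℝ) (S : Finset ι) : Prop :=
  S.card ≤ 1 ∧ ∀ i ∈ S, wd i ≤ w ∧ ht i ≤ h

/-- Leaf condition: the items can be piled up, or placed side by side, in the `w × h` piece. -/
def Stacked (wd ht : ι → ℝ) (w h : ℝ) (S : Finset ι) : Prop :=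
  ((∀ i ∈ S, wd i ≤ w) ∧ ∑ i ∈ S, ht i ≤ h) ∨ ((∀ i ∈ S, ht i ≤ h) ∧ ∑ i ∈ S, wd i ≤ w)

lemma SingleItem.mono (hS : SingleItem wd ht w h S) (hw : w ≤ w') (hh : h ≤ h') :
    SingleItem wd ht w' h' S :=
  ⟨hS.1, fun i hi => ⟨(hS.2 i hi).1.trans hw, (hS.2 i hi).2.trans hh⟩⟩

lemma SingleItem.swap (hS : SingleItem wd ht w h S) : SingleItem ht wd h w S :=
  ⟨hS.1, fun i hi => (hS.2 i hi).symm⟩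

lemma SingleItem.stacked (hS : SingleItem wd ht w h S) (hh : 0 ≤ h) : Stacked wd ht w h S := by
  refine Or.inl ⟨fun i hi => (hS.2 i hi).1, ?_⟩
  rcases eq_empty_or_singleton_of_card_le_one hS.1 with rfl | ⟨x, rfl⟩
  · simpa using hh
  · simpa using (hS.2 x (by simp)).2

lemma Stacked.mono (hS : Stacked wd ht w h S) (hw : w ≤ w') (hh : h ≤ h') :
    Stacked wd ht w' h' S :=
  hS.imp (fun hS => ⟨fun i hi => (hS.1 i hi).trans hw, hS.2.trans hh⟩)
    fun hS => ⟨fun i hi => (hS.1 i hi).trans hh, hS.2.trans hw⟩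

lemma Stacked.swap (hS : Stacked wd ht w h S) : Stacked ht wd h w S := Or.symm hS

end LeafConditions

section TotalArea

variable {ι : Type u} {wd ht : ι → ℝ} {S : Finset ι}

/-- The total area of the items of `S`. -/
def totalArea (wd ht : ι → ℝ) (S : Finset ι) : ℝ := ∑ i ∈ S, wd i * ht i

lemma totalArea_swap : totalArea wd ht S = totalArea ht wd S :=
  Finset.sum_congr rfl fun i _ => mul_comm (wd i) (ht i)

lemma totalArea_union [DecidableEq ι] {A B : Finset ι} (hd : Disjoint A B) :
    totalArea wd ht (A ∪ B) = totalArea wd ht A + totalArea wd ht B :=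
  Finset.sum_union hd

lemma totalArea_nonneg (hwd : ∀ i, 0 ≤ wd i) (hht : ∀ i, 0 ≤ ht i) : 0 ≤ totalArea wd ht S :=
  Finset.sum_nonneg fun i _ => mul_nonneg (hwd i) (hht i)

lemma eq_empty_of_totalArea_nonpos (hwd : ∀ i, 0 < wd i) (hht : ∀ i, 0 < ht i)
    (hS : totalArea wd ht S ≤ 0) : S = ∅ := by
  by_contra hne
  exact (Finset.sum_pos (fun i _ => mul_pos (hwd i) (hht i))
    (Finset.nonempty_iff_ne_empty.2 hne)).not_ge hS

end TotalArea

section GuillotineTree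

variable {ι : Type u} [DecidableEq ι]

/-- A guillotine cutting scheme of a `w × h` piece without coordinates: `S` is distributed over at
most `k` leaf pieces, each of which satisfies `L width height contents`. -/
inductive GuillotineTree (L : ℝ → ℝ → Finset ι → Prop) : ℝ → ℝ → ℕ → Finset ι → Prop
  | leaf {w h : ℝ} {k : ℕ} {S : Finset ι} (hw : 0 ≤ w) (hh : 0 ≤ h) (hk : 1 ≤ k) (hL : L w h S) :
      GuillotineTree L w h k S
  | vcut {w h w₁ w₂ : ℝ} {k k₁ k₂ : ℕ} {S S₁ S₂ : Finset ι} (hd : Disjoint S₁ S₂)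
      (hS : S = S₁ ∪ S₂) (hw : w₁ + w₂ ≤ w) (hk : k₁ + k₂ ≤ k)
      (t₁ : GuillotineTree L w₁ h k₁ S₁) (t₂ : GuillotineTree L w₂ h k₂ S₂) :
      GuillotineTree L w h k S
  | hcut {w h h₁ h₂ : ℝ} {k k₁ k₂ : ℕ} {S S₁ S₂ : Finset ι} (hd : Disjoint S₁ S₂)
      (hS : S = S₁ ∪ S₂) (hh : h₁ + h₂ ≤ h) (hk : k₁ + k₂ ≤ k)
      (t₁ : GuillotineTree L w h₁ k₁ S₁) (t₂ : GuillotineTree L w h₂ k₂ S₂) :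
      GuillotineTree L w h k S

/-- Leaf condition: the `w × h` piece is a container, i.e. a stack or an area container. -/
def ContainerLeaf (wd ht : ι → ℝ) (ε w h : ℝ) (S : Finset ι) : Prop :=
  Stacked wd ht w h S ∨
    (∃ m, GuillotineTree (SingleItem wd ht) w h m S) ∧ ∀ i ∈ S, wd i ≤ ε * w ∧ ht i ≤ ε * h

variable {L L' : ℝ → ℝ → Finset ι → Prop} {w h w' h' ε : ℝ} {k k' : ℕ} {S : Finset ι}
  {wd ht : ι → ℝ}

namespace GuillotineTree

lemma nonneg (t : GuillotineTree L w h k S) : 0 ≤ w ∧ 0 ≤ h := by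
  induction t with
  | leaf hw hh => exact ⟨hw, hh⟩
  | vcut _ _ hw _ _ _ ih₁ ih₂ => exact ⟨by linarith [ih₁.1, ih₂.1], ih₁.2⟩
  | hcut _ _ hh _ _ _ ih₁ ih₂ => exact ⟨ih₁.1, by linarith [ih₁.2, ih₂.2]⟩

lemma mono_count (t : GuillotineTree L w h k S) (hk' : k ≤ k') : GuillotineTree L w h k' S := by
  cases t with
  | leaf hw hh hk hL => exact .leaf hw hh (hk.trans hk') hL
  | vcut hd hS hw hk t₁ t₂ => exact .vcut hd hS hw (hk.trans hk') t₁ t₂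
  | hcut hd hS hh hk t₁ t₂ => exact .hcut hd hS hh (hk.trans hk') t₁ t₂

lemma mono (hL : ∀ w h w' h' S, L w h S → w ≤ w' → h ≤ h' → L w' h' S)
    (t : GuillotineTree L w h k S) (hw' : w ≤ w') (hh' : h ≤ h') :
    GuillotineTree L w' h' k S := by
  induction t generalizing w' h' with
  | leaf hw hh hk hl =>
    exact .leaf (hw.trans hw') (hh.trans hh') hk (hL _ _ _ _ _ hl hw' hh')
  | vcut hd hS hw hk _ _ ih₁ ih₂ =>
    exact .vcut hd hS (hw.trans hw') hk (ih₁ le_rfl hh') (ih₂ le_rfl hh')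
  | hcut hd hS hh hk _ _ ih₁ ih₂ =>
    exact .hcut hd hS (hh.trans hh') hk (ih₁ hw' le_rfl) (ih₂ hw' le_rfl)

lemma swap (hL : ∀ w h S, L w h S → L' h w S) (t : GuillotineTree L w h k S) :
    GuillotineTree L' h w k S := by
  induction t with
  | leaf hw hh hk hl => exact .leaf hh hw hk (hL _ _ _ hl)
  | vcut hd hS hw hk _ _ ih₁ ih₂ => exact .hcut hd hS hw hk ih₁ ih₂
  | hcut hd hS hh hk _ _ ih₁ ih₂ => exact .vcut hd hS hh hk ih₁ ih₂

lemma map_scale {a b : ℝ} (ha : 0 ≤ a) (hb : 0 ≤ b)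
    (hL : ∀ w h S, L w h S → L' (a * w) (b * h) S) (t : GuillotineTree L w h k S) :
    GuillotineTree L' (a * w) (b * h) k S := by
  induction t with
  | leaf hw hh hk hl => exact .leaf (mul_nonneg ha hw) (mul_nonneg hb hh) hk (hL _ _ _ hl)
  | vcut hd hS hw hk _ _ ih₁ ih₂ =>
    exact .vcut hd hS ((mul_add a _ _).symm.trans_le (mul_le_mul_of_nonneg_left hw ha)) hk ih₁ ih₂
  | hcut hd hS hh hk _ _ ih₁ ih₂ =>
    exact .hcut hd hS ((mul_add b _ _).symm.trans_le (mul_le_mul_of_nonneg_left hh hb)) hk ih₁ ih₂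

lemma map (hL : ∀ w h S, L w h S → L' w h S) (t : GuillotineTree L w h k S) :
    GuillotineTree L' w h k S := by
  simpa using t.map_scale (L' := L') zero_le_one zero_le_one (by simpa using hL)

lemma bind {a : ℝ} (ha : 0 ≤ a) {K d : ℕ} (t : GuillotineTree L w h k S)
    (hL : ∀ w' h' S', L w' h' S' → w' ≤ w → h' ≤ h →
      ∃ A ⊆ S', (S' \ A).card ≤ d ∧ GuillotineTree L' (a * w') h' K A) :
    ∃ A ⊆ S, (S \ A).card ≤ k * d ∧ GuillotineTree L' (a * w) h (k * K) A := by
  have combine {k k₁ k₂ : ℕ} (hk : k₁ + k₂ ≤ k) (m : ℕ) : k₁ * m + k₂ * m ≤ k * m :=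
    (add_mul k₁ k₂ m).symm.trans_le (Nat.mul_le_mul_right m hk)
  induction t with
  | leaf _ _ hk hl =>
    obtain ⟨A, hA, hd, t'⟩ := hL _ _ _ hl le_rfl le_rfl
    exact ⟨A, hA, hd.trans (Nat.le_mul_of_pos_left _ hk),
      t'.mono_count (Nat.le_mul_of_pos_left _ hk)⟩
  | vcut hd hS hw hk t₁ t₂ ih₁ ih₂ =>
    subst hS
    obtain ⟨A, hA, hdA, tA⟩ := ih₁ fun w' h' S' hl hw' =>
      hL w' h' S' hl (by linarith [t₂.nonneg.1])
    obtain ⟨B, hB, hdB, tB⟩ := ih₂ fun w' h' S' hl hw' =>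
      hL w' h' S' hl (by linarith [t₁.nonneg.1])
    exact ⟨A ∪ B, Finset.union_subset_union hA hB,
      (card_union_sdiff_union_le _ _ _ _).trans ((add_le_add hdA hdB).trans (combine hk d)),
      .vcut (hd.mono hA hB) rfl ((mul_add a _ _).symm.trans_le (mul_le_mul_of_nonneg_left hw ha))
        (combine hk K) tA tB⟩
  | hcut hd hS hh hk t₁ t₂ ih₁ ih₂ =>
    subst hS
    obtain ⟨A, hA, hdA, tA⟩ := ih₁ fun w' h' S' hl hw' hh' =>
      hL w' h' S' hl hw' (by linarith [t₂.nonneg.2])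
    obtain ⟨B, hB, hdB, tB⟩ := ih₂ fun w' h' S' hl hw' hh' =>
      hL w' h' S' hl hw' (by linarith [t₁.nonneg.2])
    exact ⟨A ∪ B, Finset.union_subset_union hA hB,
      (card_union_sdiff_union_le _ _ _ _).trans ((add_le_add hdA hdB).trans (combine hk d)),
      .hcut (hd.mono hA hB) rfl hh (combine hk K) tA tB⟩

/-- Cuts that separate off an empty set of items are not performed, so the count stays linear in
the number of items. -/
lemma vcut_count_card (hL : ∀ w h w' h' S, L w h S → w ≤ w' → h ≤ h' → L w' h' S)
    {w₁ w₂ : ℝ} {S₁ S₂ : Finset ι} (hd : Disjoint S₁ S₂) (hw : w₁ + w₂ ≤ w)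
    (t₁ : GuillotineTree L w₁ h (max 1 S₁.card) S₁)
    (t₂ : GuillotineTree L w₂ h (max 1 S₂.card) S₂) :
    GuillotineTree L w h (max 1 (S₁ ∪ S₂).card) (S₁ ∪ S₂) := by
  rcases S₁.eq_empty_or_nonempty with rfl | hS₁
  · rw [Finset.empty_union]
    exact t₂.mono hL (by linarith [t₁.nonneg.1]) le_rfl
  rcases S₂.eq_empty_or_nonempty with rfl | hS₂
  · rw [Finset.union_empty]
    exact t₁.mono hL (by linarith [t₂.nonneg.1]) le_rfl
  refine .vcut hd rfl hw ?_ t₁ t₂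
  rw [Finset.card_union_of_disjoint hd]
  have := hS₁.card_pos
  have := hS₂.card_pos
  omega

end GuillotineTree

lemma ContainerLeaf.swap (hS : ContainerLeaf wd ht ε w h S) : ContainerLeaf ht wd ε h w S :=
  hS.imp Stacked.swap fun ⟨⟨m, t⟩, hsmall⟩ =>
    ⟨⟨m, t.swap fun _ _ _ => SingleItem.swap⟩, fun i hi => (hsmall i hi).symm⟩

namespace GuillotineTree

lemma fits (t : GuillotineTree (SingleItem wd ht) w h k S) : ∀ i ∈ S, wd i ≤ w ∧ ht i ≤ h := by
  induction t with
  | leaf _ _ _ hl => exact hl.2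
  | vcut _ hS _ _ t₁ t₂ ih₁ ih₂ =>
    have := t₁.nonneg
    have := t₂.nonneg
    subst hS
    rintro i hi
    rcases Finset.mem_union.1 hi with hi | hi
    · exact ⟨by linarith [ih₁ i hi], (ih₁ i hi).2⟩
    · exact ⟨by linarith [ih₂ i hi], (ih₂ i hi).2⟩
  | hcut _ hS _ _ t₁ t₂ ih₁ ih₂ =>
    have := t₁.nonneg
    have := t₂.nonneg
    subst hS
    rintro i hi
    rcases Finset.mem_union.1 hi with hi | hi
    · exact ⟨(ih₁ i hi).1, by linarith [ih₁ i hi]⟩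
    · exact ⟨(ih₂ i hi).1, by linarith [ih₂ i hi]⟩

lemma totalArea_le (hht : ∀ i, 0 ≤ ht i) (t : GuillotineTree (SingleItem wd ht) w h k S) :
    totalArea wd ht S ≤ w * h := by
  induction t with
  | @leaf w h _ S hw hh _ hl =>
    rcases eq_empty_or_singleton_of_card_le_one hl.1 with rfl | ⟨x, rfl⟩
    · simpa [totalArea] using mul_nonneg hw hh
    · obtain ⟨hxw, hxh⟩ := hl.2 x (Finset.mem_singleton_self x)
      simpa [totalArea] using mul_le_mul hxw hxh (hht x) hw
  | vcut hd hS hw _ t₁ _ ih₁ ih₂ =>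
    rw [hS, totalArea_union hd]
    linarith [mul_le_mul_of_nonneg_right hw t₁.nonneg.2]
  | hcut hd hS hh _ t₁ _ ih₁ ih₂ =>
    rw [hS, totalArea_union hd]
    linarith [mul_le_mul_of_nonneg_left hh t₁.nonneg.1]

lemma toStacked (t : GuillotineTree (SingleItem wd ht) w h k S) :
    GuillotineTree (Stacked wd ht) w h (max 1 S.card) S := by
  induction t with
  | leaf hw hh _ hl => exact .leaf hw hh (le_max_left _ _) (hl.stacked hh)
  | vcut hd hS hw _ _ _ ih₁ ih₂ =>
    subst hS
    exact vcut_count_card (L := Stacked wd ht) (fun _ _ _ _ _ => Stacked.mono) hd hw ih₁ ih₂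
  | hcut hd hS hh _ _ _ ih₁ ih₂ =>
    subst hS
    refine .swap (L := Stacked ht wd) (fun _ _ _ => Stacked.swap) ?_
    exact vcut_count_card (L := Stacked ht wd) (fun _ _ _ _ _ => Stacked.mono) hd hh
      (ih₁.swap fun _ _ _ => Stacked.swap) (ih₂.swap fun _ _ _ => Stacked.swap)

end GuillotineTree

end GuillotineTree

/-! ### Deleting strips from a guillotine packing -/

section LengthOutside

open MeasureTheory Set

/-- The length of the part of `(a, b]` that lies outside `U`: the side length of a piece after
the strips over `U` have been deleted. -/
noncomputable def lengthOutside (U : Set ℝ) (a b : ℝ) : ℝ := volume.real (Ioc a b \ U)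

variable {U V : Set ℝ} {a b c d : ℝ}

lemma lengthOutside_nonneg : 0 ≤ lengthOutside U a b := measureReal_nonneg

lemma volume_Ioc_diff_ne_top : volume (Ioc a b \ U) ≠ ⊤ :=
  measure_ne_top_of_subset sdiff_subset (by simp)

lemma lengthOutside_anti (hVU : V ⊆ U) : lengthOutside U a b ≤ lengthOutside V a b :=
  measureReal_mono (sdiff_subset_sdiff_right hVU) volume_Ioc_diff_ne_top

lemma lengthOutside_add_le (hU : MeasurableSet U) (hab : a ≤ b) (hbc : b ≤ c) :
    lengthOutside U a b + lengthOutside U b c ≤ lengthOutside U a c := by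
  have hdisj : Disjoint (Ioc a b \ U) (Ioc b c \ U) :=
    (Ioc_disjoint_Ioc_of_le le_rfl).mono sdiff_subset sdiff_subset
  rw [lengthOutside, lengthOutside, ← measureReal_union hdisj (measurableSet_Ioc.diff hU)
    volume_Ioc_diff_ne_top volume_Ioc_diff_ne_top, ← union_sdiff_distrib,
    Ioc_union_Ioc_eq_Ioc hab hbc, lengthOutside]

lemma sub_le_lengthOutside (hac : a ≤ c) (hdb : d ≤ b) (hU : Disjoint (Ioo c d) U) :
    d - c ≤ lengthOutside U a b := by
  rcases le_total d c with h | h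
  · exact (sub_nonpos.2 h).trans lengthOutside_nonneg
  calc d - c = volume.real (Ioo c d) := by rw [Real.volume_real_Ioo_of_le h]
    _ ≤ lengthOutside U a b := measureReal_mono (subset_sdiff.2
        ⟨Ioo_subset_Ioc_self.trans (Ioc_subset_Ioc hac hdb), hU⟩) volume_Ioc_diff_ne_top

lemma lengthOutside_le_sub (hab : a ≤ b) (hV : MeasurableSet V) (hVU : V ⊆ U)
    (hVab : V ⊆ Ioc a b) : lengthOutside U a b ≤ (b - a) - volume.real V :=
  calc lengthOutside U a b ≤ lengthOutside V a b := lengthOutside_anti hVU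
    _ = (b - a) - volume.real V := by
      rw [lengthOutside, measureReal_sdiff hVab hV measure_Ioc_lt_top.ne,
        Real.volume_real_Ioc_of_le hab]

end LengthOutside

/-- The open projection of a rectangle to the first axis. -/
abbrev Rect.xSpan (r : Rect) : Set ℝ := Set.Ioo r.x1 r.x2

/-- The open projection of a rectangle to the second axis. -/
abbrev Rect.ySpan (r : Rect) : Set ℝ := Set.Ioo r.y1 r.y2

section TreeOutside

variable {ι : Type u} [DecidableEq ι] {wd ht : ι → ℝ} {Ux Uy : Set ℝ} {place : ι → Rect}
  {P : Rect} {S T : Finset ι}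

lemma GuillotineSep.exists_tree_outside (hUx : MeasurableSet Ux) (hUy : MeasurableSet Uy)
    (g : GuillotineSep place P S) (hTS : T ⊆ S)
    (hT : ∀ i ∈ T, (place i).SubRect P ∧ wd i = (place i).width ∧ ht i = (place i).height ∧
      Disjoint (place i).xSpan Ux ∧ Disjoint (place i).ySpan Uy) :
    ∃ k, GuillotineTree (SingleItem wd ht) (lengthOutside Ux P.x1 P.x2)
      (lengthOutside Uy P.y1 P.y2) k T := by
  induction g generalizing T with
  | base P S hS =>
    refine ⟨1, .leaf lengthOutside_nonneg lengthOutside_nonneg le_rfl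
      ⟨(Finset.card_le_card hTS).trans hS, fun i hi => ?_⟩⟩
    obtain ⟨⟨hx1, hx2, hy1, hy2⟩, hwd, hht, hUx, hUy⟩ := hT i hi
    rw [hwd, hht]
    exact ⟨sub_le_lengthOutside hx1 hx2 hUx, sub_le_lengthOutside hy1 hy2 hUy⟩
  | vcut P S c h₁ h₂ hcross _ _ ihL ihR =>
    obtain ⟨k₁, t₁⟩ := ihL (Finset.filter_subset_filter _ hTS) fun i hi => by
      obtain ⟨⟨hx1, -, hy⟩, hrest⟩ := hT i (Finset.mem_of_mem_filter i hi)
      exact ⟨⟨hx1, (Finset.mem_filter.1 hi).2, hy⟩, hrest⟩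
    obtain ⟨k₂, t₂⟩ := ihR (Finset.filter_subset_filter _ hTS) fun i hi => by
      obtain ⟨⟨-, hx2, hy⟩, hrest⟩ := hT i (Finset.mem_of_mem_filter i hi)
      obtain ⟨hiT, hic⟩ := Finset.mem_filter.1 hi
      exact ⟨⟨(hcross i (hTS hiT)).resolve_left hic, hx2, hy⟩, hrest⟩
    exact ⟨k₁ + k₂, .vcut (Finset.disjoint_filter_filter_not _ _ _)
      (Finset.filter_union_filter_not_eq _ _).symm (lengthOutside_add_le hUx h₁.le h₂.le) le_rfl
      t₁ t₂⟩
  | hcut P S c h₁ h₂ hcross _ _ ihB ihT =>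
    obtain ⟨k₁, t₁⟩ := ihB (Finset.filter_subset_filter _ hTS) fun i hi => by
      obtain ⟨⟨hx1, hx2, hy1, -⟩, hrest⟩ := hT i (Finset.mem_of_mem_filter i hi)
      exact ⟨⟨hx1, hx2, hy1, (Finset.mem_filter.1 hi).2⟩, hrest⟩
    obtain ⟨k₂, t₂⟩ := ihT (Finset.filter_subset_filter _ hTS) fun i hi => by
      obtain ⟨⟨hx1, hx2, -, hy2⟩, hrest⟩ := hT i (Finset.mem_of_mem_filter i hi)
      obtain ⟨hiT, hic⟩ := Finset.mem_filter.1 hi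
      exact ⟨⟨hx1, hx2, (hcross i (hTS hiT)).resolve_left hic, hy2⟩, hrest⟩
    exact ⟨k₁ + k₂, .hcut (Finset.disjoint_filter_filter_not _ _ _)
      (Finset.filter_union_filter_not_eq _ _).symm (lengthOutside_add_le hUy h₁.le h₂.le) le_rfl
      t₁ t₂⟩

end TreeOutside

/-! ### Long items form a chain around a corner -/

section CornerChain

variable {ι : Type u} [DecidableEq ι] {wd ht : ι → ℝ} {w h w' h' : ℝ} {k : ℕ}
  {S A SH SV : Finset ι}

/-- A `w × h` box is filled by peeling off items at its corner, one at a time: an item of `SV`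
uses up a full-height vertical strip, an item of `SH` a full-width horizontal strip. -/
inductive CornerChain (wd ht : ι → ℝ) : ℝ → ℝ → Finset ι → Finset ι → Prop
  | nil {w h : ℝ} (hw : 0 ≤ w) (hh : 0 ≤ h) : CornerChain wd ht w h ∅ ∅
  | consV {w h : ℝ} {SH SV : Finset ι} (i : ι) (hi : i ∉ SV) (hi' : i ∉ SH) (hw : wd i ≤ w)
      (hh : ht i ≤ h) (c : CornerChain wd ht (w - wd i) h SH SV) :
      CornerChain wd ht w h SH (insert i SV)
  | consH {w h : ℝ} {SH SV : Finset ι} (i : ι) (hi : i ∉ SH) (hi' : i ∉ SV) (hw : wd i ≤ w)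
      (hh : ht i ≤ h) (c : CornerChain wd ht w (h - ht i) SH SV) :
      CornerChain wd ht w h (insert i SH) SV

namespace CornerChain

lemma swap (c : CornerChain wd ht w h SH SV) : CornerChain ht wd h w SV SH := by
  induction c with
  | nil hw hh => exact .nil hh hw
  | consV i hi hi' hw hh _ ih => exact .consH i hi hi' hh hw ih
  | consH i hi hi' hw hh _ ih => exact .consV i hi hi' hh hw ih

lemma mono (c : CornerChain wd ht w h SH SV) (hw' : w ≤ w') (hh' : h ≤ h') :
    CornerChain wd ht w' h' SH SV := by
  induction c generalizing w' h' with
  | nil hw hh => exact .nil (hw.trans hw') (hh.trans hh')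
  | consV i hi hi' hw hh _ ih =>
    exact .consV i hi hi' (hw.trans hw') (hh.trans hh') (ih (sub_le_sub_right hw' _) hh')
  | consH i hi hi' hw hh _ ih =>
    exact .consH i hi hi' (hw.trans hw') (hh.trans hh') (ih hw' (sub_le_sub_right hh' _))

lemma sums_le (c : CornerChain wd ht w h SH SV) : ∑ i ∈ SV, wd i ≤ w ∧ ∑ i ∈ SH, ht i ≤ h := by
  induction c with
  | nil hw hh => simpa using ⟨hw, hh⟩
  | consV i hi _ _ _ _ ih => rw [Finset.sum_insert hi]; exact ⟨by linarith [ih.1], ih.2⟩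
  | consH i hi _ _ _ _ ih => rw [Finset.sum_insert hi]; exact ⟨ih.1, by linarith [ih.2]⟩

lemma union_vertical (hwd : ∀ i, 0 ≤ wd i) (hAH : Disjoint A SH) (hAV : Disjoint A SV)
    (hA : ∀ i ∈ A, ht i ≤ h) (c : CornerChain wd ht (w - ∑ i ∈ A, wd i) h SH SV) :
    CornerChain wd ht w h SH (A ∪ SV) := by
  induction A using Finset.induction_on generalizing w with
  | empty => simpa using c
  | insert a A ha ih =>
    rw [Finset.disjoint_insert_left] at hAH hAV
    rw [Finset.insert_union]
    rw [Finset.sum_insert ha] at c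
    have haw : wd a ≤ w := by
      linarith [c.sums_le.1, Finset.sum_nonneg fun i (_ : i ∈ SV) => hwd i,
        Finset.sum_nonneg fun i (_ : i ∈ A) => hwd i]
    refine .consV a (by simp [ha, hAV.1]) hAH.1 haw (hA a (Finset.mem_insert_self a A)) ?_
    exact ih hAH.2 hAV.2 (fun i hi => hA i (Finset.mem_insert_of_mem hi)) (by rwa [sub_sub])

end CornerChain

lemma GuillotineTree.sum_width_le_of_tall (t : GuillotineTree (SingleItem wd ht) w h k S)
    (hh : h ≤ 1) (hS : ∀ i ∈ S, 1 / 2 < ht i) : ∑ i ∈ S, wd i ≤ w := by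
  induction t with
  | @leaf w h _ S hw _ _ hl =>
    rcases eq_empty_or_singleton_of_card_le_one hl.1 with rfl | ⟨x, rfl⟩
    · simpa using hw
    · simpa using (hl.2 x (Finset.mem_singleton_self x)).1
  | vcut hd hS' hw _ _ _ ih₁ ih₂ =>
    subst hS'
    rw [Finset.sum_union hd]
    linarith [ih₁ hh fun i hi => hS i (Finset.mem_union_left _ hi),
      ih₂ hh fun i hi => hS i (Finset.mem_union_right _ hi)]
  | @hcut _ _ _ _ _ _ _ _ S₁ S₂ hd hS' hw _ t₁ t₂ ih₁ ih₂ =>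
    subst hS'
    have hn₁ := t₁.nonneg
    have hn₂ := t₂.nonneg
    rcases S₁.eq_empty_or_nonempty with rfl | ⟨x, hx⟩
    · simpa using ih₂ (by linarith) (by simpa using hS)
    rcases S₂.eq_empty_or_nonempty with rfl | ⟨y, hy⟩
    · simpa using ih₁ (by linarith) (by simpa using hS)
    linarith [(t₁.fits x hx).2, (t₂.fits y hy).2, hS x (Finset.mem_union_left _ hx),
      hS y (Finset.mem_union_right _ hy)]

/-- A vertical cut has a side of width at most `1 / 2`, which contains vertical items only. -/
lemma CornerChain.add_narrow_side (hwd : ∀ i, 0 ≤ wd i) (p : ι → Prop) [DecidablePred p]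
    {w₁ w₂ : ℝ} {S₁ S₂ : Finset ι} (hd : Disjoint S₁ S₂) (hw : w₁ + w₂ ≤ w) (hw₁ : w₁ ≤ 1 / 2)
    (hh : h ≤ 1) (t : GuillotineTree (SingleItem wd ht) w₁ h k S₁)
    (hH : ∀ i ∈ S₁, p i → 1 / 2 < wd i) (hV : ∀ i ∈ S₁, ¬ p i → 1 / 2 < ht i)
    (c : CornerChain wd ht w₂ h (S₂.filter p) (S₂.filter fun i => ¬ p i)) :
    CornerChain wd ht w h ((S₁ ∪ S₂).filter p) ((S₁ ∪ S₂).filter fun i => ¬ p i) := by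
  have hp : ∀ i ∈ S₁, ¬ p i := fun i hi hpi => by linarith [hH i hi hpi, (t.fits i hi).1]
  rw [Finset.filter_union, Finset.filter_union, Finset.filter_false_of_mem hp,
    Finset.filter_true_of_mem hp, Finset.empty_union]
  refine .union_vertical hwd (hd.mono_right (Finset.filter_subset _ _))
    (hd.mono_right (Finset.filter_subset _ _)) (fun i hi => (t.fits i hi).2) (c.mono ?_ le_rfl)
  linarith [t.sum_width_le_of_tall hh fun i hi => hV i hi (hp i hi)]

lemma CornerChain.add_flat_side (hht : ∀ i, 0 ≤ ht i) (p : ι → Prop) [DecidablePred p]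
    {h₁ h₂ : ℝ} {S₁ S₂ : Finset ι} (hd : Disjoint S₁ S₂) (hh : h₁ + h₂ ≤ h) (hh₁ : h₁ ≤ 1 / 2)
    (hw : w ≤ 1) (t : GuillotineTree (SingleItem wd ht) w h₁ k S₁)
    (hH : ∀ i ∈ S₁, p i → 1 / 2 < wd i) (hV : ∀ i ∈ S₁, ¬ p i → 1 / 2 < ht i)
    (c : CornerChain wd ht w h₂ (S₂.filter p) (S₂.filter fun i => ¬ p i)) :
    CornerChain wd ht w h ((S₁ ∪ S₂).filter p) ((S₁ ∪ S₂).filter fun i => ¬ p i) := by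
  simpa only [not_not] using (CornerChain.add_narrow_side hht (fun i => ¬ p i) hd hh hh₁ hw
    (t.swap fun _ _ _ => SingleItem.swap) hV (by simpa only [not_not] using hH)
    (by simpa only [not_not] using c.swap)).swap

lemma GuillotineTree.cornerChain_filter (hwd : ∀ i, 0 ≤ wd i) (hht : ∀ i, 0 ≤ ht i)
    (p : ι → Prop) [DecidablePred p] (t : GuillotineTree (SingleItem wd ht) w h k S) (hw : w ≤ 1)
    (hh : h ≤ 1) (hH : ∀ i ∈ S, p i → 1 / 2 < wd i) (hV : ∀ i ∈ S, ¬ p i → 1 / 2 < ht i) :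
    CornerChain wd ht w h (S.filter p) (S.filter fun i => ¬ p i) := by
  induction t with
  | leaf hw₀ hh₀ _ hl =>
    rcases eq_empty_or_singleton_of_card_le_one hl.1 with rfl | ⟨x, rfl⟩
    · simpa using CornerChain.nil hw₀ hh₀
    · obtain ⟨hxw, hxh⟩ := hl.2 x (Finset.mem_singleton_self x)
      by_cases hx : p x
      · simpa [Finset.filter_singleton, hx] using CornerChain.consH x (Finset.notMem_empty x)
          (Finset.notMem_empty x) hxw hxh (.nil hw₀ (sub_nonneg.2 hxh))
      · simpa [Finset.filter_singleton, hx] using CornerChain.consV x (Finset.notMem_empty x)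
          (Finset.notMem_empty x) hxw hxh (.nil (sub_nonneg.2 hxw) hh₀)
  | @vcut _ _ w₁ w₂ _ _ _ _ S₁ S₂ hd hS hw' _ t₁ t₂ ih₁ ih₂ =>
    subst hS
    simp only [Finset.mem_union, or_imp, forall_and] at hH hV
    rcases le_total w₁ w₂ with hle | hle
    · exact .add_narrow_side hwd p hd hw' (by linarith) hh t₁ hH.1 hV.1
        (ih₂ (by linarith [t₁.nonneg.1]) hh hH.2 hV.2)
    · rw [Finset.union_comm]
      exact .add_narrow_side hwd p hd.symm (by linarith) (by linarith) hh t₂ hH.2 hV.2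
        (ih₁ (by linarith [t₂.nonneg.1]) hh hH.1 hV.1)
  | @hcut _ _ h₁ h₂ _ _ _ _ S₁ S₂ hd hS hh' _ t₁ t₂ ih₁ ih₂ =>
    subst hS
    simp only [Finset.mem_union, or_imp, forall_and] at hH hV
    rcases le_total h₁ h₂ with hle | hle
    · exact .add_flat_side hht p hd hh' (by linarith) hw t₁ hH.1 hV.1
        (ih₂ hw (by linarith [t₁.nonneg.2]) hH.2 hV.2)
    · rw [Finset.union_comm]
      exact .add_flat_side hht p hd.symm (by linarith) (by linarith) hw t₂ hH.2 hV.2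
        (ih₁ hw (by linarith [t₂.nonneg.2]) hH.1 hV.1)

lemma GuillotineTree.cornerChain (hwd : ∀ i, 0 ≤ wd i) (hht : ∀ i, 0 ≤ ht i)
    (hd : Disjoint SH SV) (t : GuillotineTree (SingleItem wd ht) w h k (SH ∪ SV)) (hw : w ≤ 1)
    (hh : h ≤ 1) (hH : ∀ i ∈ SH, 1 / 2 < wd i) (hV : ∀ i ∈ SV, 1 / 2 < ht i) :
    CornerChain wd ht w h SH SV := by
  have hnot : ∀ i ∈ SV, i ∉ SH := fun i hi hi' => Finset.disjoint_left.1 hd hi' hi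
  have hSH : (SH ∪ SV).filter (· ∈ SH) = SH := by
    rw [Finset.filter_union, Finset.filter_true_of_mem fun _ => id,
      Finset.filter_false_of_mem hnot, Finset.union_empty]
  have hSV : (SH ∪ SV).filter (· ∉ SH) = SV := by
    rw [Finset.filter_union, Finset.filter_false_of_mem fun _ => not_not_intro,
      Finset.filter_true_of_mem hnot, Finset.empty_union]
  have c := t.cornerChain_filter hwd hht (· ∈ SH) hw hh (fun i _ hi => hH i hi) fun i hi hi' =>
    hV i ((Finset.mem_union.1 hi).resolve_left hi')
  rwa [hSH, hSV] at c

end CornerChain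

/-! ### Separating lattice-wide items from high items -/

section PureLeaves

variable {ι : Type u} [DecidableEq ι] {wd ht : ι → ℝ} {ρ δ w h w' h' : ℝ} {k m : ℕ}
  {S : Finset ι}

/-- Leaf condition: a guillotine packing of items whose widths are all multiples of `ρ`, or whose
heights are all at least `δ`. -/
def PureLeaf (wd ht : ι → ℝ) (ρ δ w h : ℝ) (S : Finset ι) : Prop :=
  (∃ k, GuillotineTree (SingleItem wd ht) w h k S) ∧
    ((∀ i ∈ S, ∃ n : ℕ, wd i = n * ρ) ∨ ∀ i ∈ S, δ ≤ ht i)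

lemma PureLeaf.mono (hS : PureLeaf wd ht ρ δ w h S) (hw : w ≤ w') (hh : h ≤ h') :
    PureLeaf wd ht ρ δ w' h' S :=
  ⟨hS.1.imp fun _ t => t.mono (fun _ _ _ _ _ => SingleItem.mono) hw hh, hS.2⟩

lemma floor_div_add_floor_div_le {a b c : ℝ} (ha : 0 ≤ a) (hb : 0 ≤ b) (hρ : 0 < ρ)
    (habc : a + b ≤ c) : ⌊a / ρ⌋₊ + ⌊b / ρ⌋₊ ≤ ⌊c / ρ⌋₊ := by
  apply Nat.le_floor
  push_cast
  calc (⌊a / ρ⌋₊ : ℝ) + ⌊b / ρ⌋₊ ≤ a / ρ + b / ρ :=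
        add_le_add (Nat.floor_le (by positivity)) (Nat.floor_le (by positivity))
    _ ≤ c / ρ := by rw [← add_div]; exact div_le_div_of_nonneg_right habc hρ.le

lemma mul_floor_div_le {a : ℝ} (ha : 0 ≤ a) (hρ : 0 < ρ) : ρ * ⌊a / ρ⌋₊ ≤ a := by
  rw [mul_comm, ← le_div_iff₀ hρ]
  exact Nat.floor_le (by positivity)

lemma GuillotineTree.shrink_width (hρ : 0 < ρ) (t : GuillotineTree (SingleItem wd ht) w h k S)
    (hS : ∀ i ∈ S, ∃ n : ℕ, wd i = n * ρ) :
    GuillotineTree (SingleItem wd ht) (ρ * ⌊w / ρ⌋₊) h k S := by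
  induction t with
  | leaf _ hh hk hl =>
    refine .leaf (by positivity) hh hk ⟨hl.1, fun i hi => ⟨?_, (hl.2 i hi).2⟩⟩
    obtain ⟨n, hn⟩ := hS i hi
    have hnw : (n : ℝ) ≤ _ / ρ := (le_div_iff₀ hρ).2 (hn ▸ (hl.2 i hi).1)
    rw [hn, mul_comm]
    exact mul_le_mul_of_nonneg_left (Nat.cast_le.2 (Nat.le_floor hnw)) hρ.le
  | vcut hd hS' hw hk t₁ t₂ ih₁ ih₂ =>
    refine .vcut hd hS' ?_ hk (ih₁ fun i hi => hS i (by simp [hS', hi]))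
      (ih₂ fun i hi => hS i (by simp [hS', hi]))
    rw [← mul_add]
    exact mul_le_mul_of_nonneg_left
      (mod_cast floor_div_add_floor_div_le t₁.nonneg.1 t₂.nonneg.1 hρ hw) hρ.le
  | hcut hd hS' hh hk _ _ ih₁ ih₂ =>
    exact .hcut hd hS' hh hk (ih₁ fun i hi => hS i (by simp [hS', hi]))
      (ih₂ fun i hi => hS i (by simp [hS', hi]))

lemma le_height_of_width_lt (hρ : 0 < ρ) (hwd : ∀ i, 0 < wd i)
    (t : GuillotineTree (SingleItem wd ht) w h k S)
    (hS : ∀ i ∈ S, (∃ n : ℕ, wd i = n * ρ) ∨ δ ≤ ht i) (hw : ⌊w / ρ⌋₊ = 0) :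
    ∀ i ∈ S, δ ≤ ht i := by
  intro i hi
  refine (hS i hi).resolve_left fun ⟨n, hn⟩ => ?_
  have hnw : (n : ℝ) * ρ ≤ w := hn ▸ (t.fits i hi).1
  have hn0 : n ≤ ⌊w / ρ⌋₊ := Nat.le_floor ((le_div_iff₀ hρ).2 hnw)
  have hpos := hwd i
  rw [hn, Nat.le_zero.1 (hn0.trans_eq hw)] at hpos
  simp at hpos

lemma multiple_width_of_height_lt (hδ : 0 < δ) (t : GuillotineTree (SingleItem wd ht) w h k S)
    (hS : ∀ i ∈ S, (∃ n : ℕ, wd i = n * ρ) ∨ δ ≤ ht i) (hh : ⌊h / δ⌋₊ = 0) :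
    ∀ i ∈ S, ∃ n : ℕ, wd i = n * ρ := by
  rw [Nat.floor_eq_zero, div_lt_one hδ] at hh
  exact fun i hi => (hS i hi).resolve_right fun hi' => by linarith [(t.fits i hi).2]

/-- An upper bound for the number of pure leaves in a box of grid size `m`. -/
def pureLeafBound : ℕ → ℕ
  | 0 => 1
  | m + 1 => 2 * pureLeafBound m + 4

lemma pureLeafBound_mono : Monotone pureLeafBound :=
  monotone_nat_of_le_succ fun m => by simp only [pureLeafBound]; omega

lemma one_le_pureLeafBound (m : ℕ) : 1 ≤ pureLeafBound m := pureLeafBound_mono m.zero_le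

/-- A packing of a `w × h` box in which a block `A` of high items is split off on one side, then a
block `B` of items of lattice width at the bottom, and the rest has boundedly many pure leaves.
Splitting off `A` does not lower the lattice width of the box, so that more items of lattice width
can be added to `B`. -/
def PeeledPacking (wd ht : ι → ℝ) (ρ δ w h : ℝ) (m : ℕ) (S : Finset ι) : Prop :=
  ∃ (x y : ℝ) (A B R : Finset ι), ρ * ⌊w / ρ⌋₊ ≤ w - x ∧
    S = A ∪ (B ∪ R) ∧ Disjoint A (B ∪ R) ∧ Disjoint B R ∧
    (∀ i ∈ A, δ ≤ ht i) ∧ (∀ i ∈ B, ∃ n : ℕ, wd i = n * ρ) ∧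
    (∃ k, GuillotineTree (SingleItem wd ht) x h k A) ∧
    (∃ k, GuillotineTree (SingleItem wd ht) (w - x) y k B) ∧
    GuillotineTree (PureLeaf wd ht ρ δ) (w - x) (h - y) (pureLeafBound m) R

namespace PeeledPacking

lemma tree (c : PeeledPacking wd ht ρ δ w h m S) :
    GuillotineTree (PureLeaf wd ht ρ δ) w h (pureLeafBound m + 2) S := by
  obtain ⟨x, y, A, B, R, -, hS, hdA, hdB, hA, hB, ⟨kA, tA⟩, ⟨kB, tB⟩, tR⟩ := c
  refine .vcut hdA hS (add_sub_cancel x w).le (by omega : 1 + (1 + pureLeafBound m) ≤ _)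
    (.leaf tA.nonneg.1 tA.nonneg.2 le_rfl ⟨⟨kA, tA⟩, Or.inr hA⟩) ?_
  exact .hcut hdB rfl (add_sub_cancel y h).le le_rfl
    (.leaf tB.nonneg.1 tB.nonneg.2 le_rfl ⟨⟨kB, tB⟩, Or.inl hB⟩) tR

lemma of_tree (hρ : 0 < ρ)
    (t : GuillotineTree (PureLeaf wd ht ρ δ) w h (pureLeafBound m) S) :
    PeeledPacking wd ht ρ δ w h m S := by
  refine ⟨0, 0, ∅, ∅, S, ?_, by simp, by simp, by simp, by simp, by simp, ?_, ?_, ?_⟩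
  · simpa using mul_floor_div_le t.nonneg.1 hρ
  · exact ⟨1, .leaf le_rfl t.nonneg.2 le_rfl ⟨by simp, by simp⟩⟩
  · exact ⟨1, .leaf (by simpa using t.nonneg.1) le_rfl le_rfl ⟨by simp, by simp⟩⟩
  · simpa using t

lemma add_high {w₁ w₂ : ℝ} {S₁ S₂ : Finset ι} (hd : Disjoint S₁ S₂) (hw : w₁ + w₂ ≤ w)
    (t : GuillotineTree (SingleItem wd ht) w₁ h k S₁) (hS₁ : ∀ i ∈ S₁, δ ≤ ht i)
    (hfloor : ⌊w₂ / ρ⌋₊ = ⌊w / ρ⌋₊) (c : PeeledPacking wd ht ρ δ w₂ h m S₂) :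
    PeeledPacking wd ht ρ δ w h m (S₁ ∪ S₂) := by
  obtain ⟨x, y, A, B, R, hx, rfl, hdA, hdB, hA, hB, ⟨kA, tA⟩, ⟨kB, tB⟩, tR⟩ := c
  rw [Finset.disjoint_union_right] at hd
  refine ⟨w₁ + x, y, S₁ ∪ A, B, R, ?_, (Finset.union_assoc _ _ _).symm,
    Finset.disjoint_union_left.2 ⟨hd.2, hdA⟩, hdB, ?_, hB, ?_, ?_, ?_⟩
  · rw [← hfloor]; linarith
  · exact fun i hi => (Finset.mem_union.1 hi).elim (hS₁ i) (hA i)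
  · exact ⟨k + kA, .vcut hd.1 rfl le_rfl le_rfl t tA⟩
  · exact ⟨kB, tB.mono (fun _ _ _ _ _ => SingleItem.mono) (by linarith) le_rfl⟩
  · exact tR.mono (fun _ _ _ _ _ => PureLeaf.mono) (by linarith) le_rfl

lemma add_lattice_wide (hρ : 0 < ρ) {h₁ h₂ : ℝ} {S₁ S₂ : Finset ι} (hd : Disjoint S₁ S₂)
    (hh : h₁ + h₂ ≤ h) (t : GuillotineTree (SingleItem wd ht) w h₁ k S₁)
    (hS₁ : ∀ i ∈ S₁, ∃ n : ℕ, wd i = n * ρ) (c : PeeledPacking wd ht ρ δ w h₂ m S₂) :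
    PeeledPacking wd ht ρ δ w h m (S₁ ∪ S₂) := by
  obtain ⟨x, y, A, B, R, hx, rfl, hdA, hdB, hA, hB, ⟨kA, tA⟩, ⟨kB, tB⟩, tR⟩ := c
  simp only [Finset.disjoint_union_right] at hd hdA
  refine ⟨x, h₁ + y, A, S₁ ∪ B, R, hx, ?_, ?_, Finset.disjoint_union_left.2 ⟨hd.2.2, hdB⟩, hA, ?_,
    ?_, ?_, ?_⟩
  · rw [Finset.union_left_comm, Finset.union_assoc]
  · simp only [Finset.disjoint_union_right]
    exact ⟨⟨hd.1.symm, hdA.1⟩, hdA.2⟩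
  · exact fun i hi => (Finset.mem_union.1 hi).elim (hS₁ i) (hB i)
  · exact ⟨kA, tA.mono (fun _ _ _ _ _ => SingleItem.mono) le_rfl (by linarith [t.nonneg.2])⟩
  · exact ⟨k + kB, .hcut hd.2.1 rfl le_rfl le_rfl
      ((t.shrink_width hρ hS₁).mono (fun _ _ _ _ _ => SingleItem.mono) hx le_rfl) tB⟩
  · exact tR.mono (fun _ _ _ _ _ => PureLeaf.mono) le_rfl (by linarith)

lemma vcut_narrow (hρ : 0 < ρ) (hwd : ∀ i, 0 < wd i) {w₁ w₂ : ℝ} {S₁ S₂ : Finset ι}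
    (hd : Disjoint S₁ S₂) (hw : w₁ + w₂ ≤ w) (t : GuillotineTree (SingleItem wd ht) w₁ h k S₁)
    (hS₁ : ∀ i ∈ S₁, (∃ n : ℕ, wd i = n * ρ) ∨ δ ≤ ht i) (hw₁ : ⌊w₁ / ρ⌋₊ = 0)
    (hfloor : ⌊w₂ / ρ⌋₊ ≤ ⌊w / ρ⌋₊) (hm : ⌊w / ρ⌋₊ + ⌊h / δ⌋₊ ≤ m)
    (c : ∀ m, ⌊w₂ / ρ⌋₊ + ⌊h / δ⌋₊ ≤ m → PeeledPacking wd ht ρ δ w₂ h m S₂) :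
    PeeledPacking wd ht ρ δ w h m (S₁ ∪ S₂) := by
  have hhigh := le_height_of_width_lt hρ hwd t hS₁ hw₁
  rcases hfloor.eq_or_lt with heq | hlt
  · exact add_high hd hw t hhigh heq (c m (by omega))
  · obtain ⟨m, rfl⟩ := Nat.exists_eq_add_of_lt (Nat.lt_of_lt_of_le (by omega : 0 < _) hm)
    rw [zero_add] at hm ⊢
    exact of_tree hρ <| .vcut hd rfl hw (by simp only [pureLeafBound]; omega)
      (.leaf t.nonneg.1 t.nonneg.2 le_rfl ⟨⟨k, t⟩, Or.inr hhigh⟩) (c m (by omega)).tree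

end PeeledPacking

lemma GuillotineTree.peeledPacking (hρ : 0 < ρ) (hδ : 0 < δ) (hwd : ∀ i, 0 < wd i)
    (t : GuillotineTree (SingleItem wd ht) w h k S)
    (hS : ∀ i ∈ S, (∃ n : ℕ, wd i = n * ρ) ∨ δ ≤ ht i) (hm : ⌊w / ρ⌋₊ + ⌊h / δ⌋₊ ≤ m) :
    PeeledPacking wd ht ρ δ w h m S := by
  induction t generalizing m with
  | leaf hw hh hk hl =>
    refine .of_tree hρ (.leaf hw hh (one_le_pureLeafBound m) ⟨⟨_, .leaf hw hh hk hl⟩, ?_⟩)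
    rcases eq_empty_or_singleton_of_card_le_one hl.1 with rfl | ⟨x, rfl⟩
    · simp
    · simpa using hS
  | @vcut _ _ w₁ w₂ _ _ _ _ S₁ S₂ hd hS' hw _ t₁ t₂ ih₁ ih₂ =>
    subst hS'
    simp only [Finset.mem_union, or_imp, forall_and] at hS
    have hfloor := floor_div_add_floor_div_le t₁.nonneg.1 t₂.nonneg.1 hρ hw
    by_cases hw₁ : ⌊w₁ / ρ⌋₊ = 0
    · exact .vcut_narrow hρ hwd hd hw t₁ hS.1 hw₁ (by omega) hm fun _ => ih₂ hS.2
    by_cases hw₂ : ⌊w₂ / ρ⌋₊ = 0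
    · rw [Finset.union_comm]
      exact .vcut_narrow hρ hwd hd.symm (by linarith) t₂ hS.2 hw₂ (by omega) hm fun _ => ih₁ hS.1
    obtain ⟨m, rfl⟩ : ∃ m', m = m' + 1 := ⟨m - 1, by omega⟩
    exact .of_tree hρ <| .vcut hd rfl hw (by simp only [pureLeafBound]; omega)
      (ih₁ (m := m) hS.1 (by omega)).tree (ih₂ (m := m) hS.2 (by omega)).tree
  | @hcut _ _ h₁ h₂ _ _ _ _ S₁ S₂ hd hS' hh _ t₁ t₂ ih₁ ih₂ =>
    subst hS'
    simp only [Finset.mem_union, or_imp, forall_and] at hS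
    have hfloor := floor_div_add_floor_div_le t₁.nonneg.2 t₂.nonneg.2 hδ hh
    by_cases hh₁ : ⌊h₁ / δ⌋₊ = 0
    · exact .add_lattice_wide hρ hd hh t₁ (multiple_width_of_height_lt hδ t₁ hS.1 hh₁)
        (ih₂ hS.2 (by omega))
    by_cases hh₂ : ⌊h₂ / δ⌋₊ = 0
    · rw [Finset.union_comm]
      exact .add_lattice_wide hρ hd.symm (by linarith) t₂
        (multiple_width_of_height_lt hδ t₂ hS.2 hh₂) (ih₁ hS.1 (by omega))
    obtain ⟨m, rfl⟩ : ∃ m', m = m' + 1 := ⟨m - 1, by omega⟩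
    exact .of_tree hρ <| .hcut hd rfl hh (by simp only [pureLeafBound]; omega)
      (ih₁ (m := m) hS.1 (by omega)).tree (ih₂ (m := m) hS.2 (by omega)).tree

end PureLeaves

/-! ### Configurations and linear grouping -/

section Demand

variable {ι : Type u} {f : ι → ℝ} {ty : ι → ℕ} {S A B : Finset ι} {g : ℕ}

/-- The total size `f` of the items of type `g`. -/
def demand (f : ι → ℝ) (ty : ι → ℕ) (S : Finset ι) (g : ℕ) : ℝ := ∑ i ∈ S with ty i = g, f i

lemma demand_union [DecidableEq ι] (hd : Disjoint A B) (g : ℕ) :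
    demand f ty (A ∪ B) g = demand f ty A g + demand f ty B g := by
  rw [demand, Finset.filter_union, Finset.sum_union (Finset.disjoint_filter_filter hd), demand,
    demand]

lemma demand_nonneg (hf : ∀ i, 0 ≤ f i) : 0 ≤ demand f ty S g :=
  Finset.sum_nonneg fun i _ => hf i

lemma le_demand (hf : ∀ i, 0 ≤ f i) {i : ι} (hi : i ∈ S) : f i ≤ demand f ty S (ty i) :=
  Finset.single_le_sum (fun j _ => hf j) (Finset.mem_filter.2 ⟨hi, rfl⟩)

lemma demand_pred (g : ℕ) :
    demand f (fun i => ty i - 1) {i ∈ S | 1 ≤ ty i} g = demand f ty S (g + 1) := by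
  rw [demand, demand, Finset.filter_filter]
  congr 1
  ext i
  simp only [Finset.mem_filter, and_congr_right_iff]
  omega

lemma exists_split_demand [DecidableEq ι] (f : ι → ℝ) (ty : ι → ℕ) (S : Finset ι) (g : ℕ) {a b : ℝ}
    (ha : 0 ≤ a) (hb : 0 ≤ b) (hS : demand f ty S g ≤ a + b) :
    ∃ P ⊆ S, (∀ i ∈ P, ty i = g) ∧ ∑ i ∈ P, f i ≤ a ∧ ∃ R ⊆ S, Disjoint P R ∧
      (S \ (P ∪ R)).card ≤ 1 ∧ demand f ty R g ≤ b ∧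
      ∀ g' ≠ g, demand f ty R g' = demand f ty S g' := by
  obtain ⟨P, D, R, hPD, hPR, hDR, hS', hD, hP, hR⟩ := exists_split_of_sum_le_add f _ ha hb hS
  have hmem (i : ι) : i ∈ S ∧ ty i = g ↔ (i ∈ P ∨ i ∈ D) ∨ i ∈ R := by
    simpa only [Finset.mem_filter, Finset.mem_union] using Finset.ext_iff.1 hS' i
  rw [Finset.disjoint_left] at hPD hPR hDR
  refine ⟨P, fun i hi => ((hmem i).2 (by simp [hi])).1, fun i hi => ((hmem i).2 (by simp [hi])).2,
    hP, S \ (P ∪ D), Finset.sdiff_subset,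
    Finset.disjoint_sdiff.mono_left Finset.subset_union_left, ?_, ?_, ?_⟩
  · refine (Finset.card_le_card fun i hi => ?_).trans hD
    simp only [Finset.mem_sdiff, Finset.mem_union] at hi
    tauto
  · refine (Finset.sum_congr (Finset.ext fun i => ?_) fun _ _ => rfl).trans_le hR
    have := hmem i
    have := @hPR i
    have := @hDR i
    simp only [Finset.mem_filter, Finset.mem_sdiff, Finset.mem_union]
    tauto
  · refine fun g' hg' => Finset.sum_congr (Finset.ext fun i => ?_) fun _ _ => rfl
    simp only [Finset.mem_filter, Finset.mem_sdiff, Finset.mem_union, and_congr_left_iff]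
    rintro rfl
    have := hmem i
    tauto

end Demand

section Configurations

variable {ι : Type u} {wd ht : ι → ℝ} {ty : ι → ℕ} {u : ℕ → ℝ} {w h : ℝ} {k : ℕ} {S : Finset ι}

lemma finite_configurations (n m : ℕ) :
    {c : List ℕ | c.length ≤ m ∧ ∀ g ∈ c, g < n}.Finite := by
  refine ((List.finite_length_le (Fin n) m).image (List.map Fin.val)).subset ?_
  rintro c ⟨hlen, hc⟩
  refine ⟨c.pmap (fun g hg => ⟨g, hg⟩) hc, by simpa using hlen, ?_⟩
  rw [List.map_pmap]; simp

/-- The configurations with at most `m` columns of types less than `n`. -/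
noncomputable def configurations (n m : ℕ) : Finset (List ℕ) := (finite_configurations n m).toFinset

lemma mem_configurations {n m : ℕ} {c : List ℕ} :
    c ∈ configurations n m ↔ c.length ≤ m ∧ ∀ g ∈ c, g < n := by
  simp [configurations]

/-- A fractional packing of `S` into a strip of width `w` and height `h`: the strip is sliced
into horizontal slabs indexed by `J`, and a slab carries one column for each entry of its
configuration, a list of item types. Columns of type `g` have width `u g`. -/
structure FractionalConfig (ht : ι → ℝ) (ty : ι → ℕ) (u : ℕ → ℝ) (w h : ℝ) (S : Finset ι)
    (J : Type) [Fintype J] where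
  height : J → ℝ
  types : J → List ℕ
  height_nonneg : ∀ j, 0 ≤ height j
  sum_height : ∑ j, height j = h
  width_le : ∀ j, ((types j).map u).sum ≤ w
  exists_of_mem : ∀ j, ∀ g ∈ types j, ∃ i ∈ S, ty i = g
  demand_le : ∀ g, demand ht ty S g ≤ ∑ j, height j * (types j).count g

namespace FractionalConfig

/-- The fractional packing of no items. -/
def empty (ht : ι → ℝ) (ty : ι → ℕ) (u : ℕ → ℝ) (hw : 0 ≤ w) (hh : 0 ≤ h) :
    FractionalConfig ht ty u w h ∅ Unit where
  height _ := h
  types _ := []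
  height_nonneg _ := hh
  sum_height := by simp
  width_le _ := by simpa using hw
  exists_of_mem := by simp
  demand_le := by simp [demand]

/-- The fractional packing of a single item. -/
def single {x : ι} (hh : 0 ≤ h) (hux : u (ty x) ≤ w) (hx : ht x ≤ h) :
    FractionalConfig ht ty u w h {x} Unit where
  height _ := h
  types _ := [ty x]
  height_nonneg _ := hh
  sum_height := by simp
  width_le _ := by simpa using hux
  exists_of_mem := by simp
  demand_le g := by
    rcases eq_or_ne (ty x) g with rfl | hg
    · simpa [demand, Finset.filter_singleton] using hx
    · simp [demand, Finset.filter_singleton, hg]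

lemma config_mem {J : Type} [Fintype J] (c : FractionalConfig ht ty u w h S J)
    {β : ℝ} (hβ : 0 < β) {n m : ℕ} (hm : w / β ≤ m) (hβS : ∀ i ∈ S, β ≤ u (ty i))
    (hn : ∀ i ∈ S, ty i < n) (j : J) : c.types j ∈ configurations n m := by
  refine mem_configurations.2 ⟨?_, fun g hg => ?_⟩
  · have hlen : (c.types j).length * β ≤ w := by
      refine le_trans ?_ (c.width_le j)
      have := List.card_nsmul_le_sum ((c.types j).map u) β fun y hy => by
        obtain ⟨g, hg, rfl⟩ := List.mem_map.1 hy
        obtain ⟨i, hi, rfl⟩ := c.exists_of_mem j g hg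
        exact hβS i hi
      simpa using this
    exact_mod_cast ((le_div_iff₀ hβ).2 hlen).trans hm
  · obtain ⟨i, hi, rfl⟩ := c.exists_of_mem j g hg
    exact hn i hi

variable [DecidableEq ι] {S₁ S₂ : Finset ι} {J₁ J₂ : Type} [Fintype J₁] [Fintype J₂]

/-- Placing two fractional packings side by side: all pairs of slabs occur, with heights
proportional to the products of the two heights. -/
noncomputable def beside {w₁ w₂ : ℝ} (hd : Disjoint S₁ S₂) (hw : w₁ + w₂ ≤ w) (hh : 0 < h)
    (c₁ : FractionalConfig ht ty u w₁ h S₁ J₁) (c₂ : FractionalConfig ht ty u w₂ h S₂ J₂) :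
    FractionalConfig ht ty u w h (S₁ ∪ S₂) (J₁ × J₂) where
  height j := c₁.height j.1 * c₂.height j.2 / h
  types j := c₁.types j.1 ++ c₂.types j.2
  height_nonneg j := div_nonneg (mul_nonneg (c₁.height_nonneg _) (c₂.height_nonneg _)) hh.le
  sum_height := by
    rw [← Finset.sum_div, Fintype.sum_prod_type, ← Finset.sum_mul_sum, c₁.sum_height,
      c₂.sum_height]
    field_simp
  width_le j := by
    simp only [List.map_append, List.sum_append]
    linarith [c₁.width_le j.1, c₂.width_le j.2]
  exists_of_mem j g hg := by
    rcases List.mem_append.1 hg with hg | hg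
    · exact (c₁.exists_of_mem _ g hg).imp fun i hi => ⟨Finset.mem_union_left _ hi.1, hi.2⟩
    · exact (c₂.exists_of_mem _ g hg).imp fun i hi => ⟨Finset.mem_union_right _ hi.1, hi.2⟩
  demand_le g := by
    have hsplit (j : J₁ × J₂) :
        c₁.height j.1 * c₂.height j.2 / h * (c₁.types j.1 ++ c₂.types j.2).count g =
          ((c₁.height j.1 * (c₁.types j.1).count g) * c₂.height j.2 +
            c₁.height j.1 * (c₂.height j.2 * (c₂.types j.2).count g)) / h := by
      rw [List.count_append]; push_cast; ring
    simp only [hsplit]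
    rw [← Finset.sum_div, Finset.sum_add_distrib, Fintype.sum_prod_type, Fintype.sum_prod_type]
    dsimp only
    rw [← Finset.sum_mul_sum, ← Finset.sum_mul_sum, c₁.sum_height, c₂.sum_height, ← mul_comm h,
      ← mul_add, mul_div_cancel_left₀ _ hh.ne', demand_union hd]
    exact add_le_add (c₁.demand_le g) (c₂.demand_le g)

/-- Placing two fractional packings on top of each other; the last slab is slack. -/
def above {h₁ h₂ : ℝ} (hd : Disjoint S₁ S₂) (hh : h₁ + h₂ ≤ h) (hw : 0 ≤ w)
    (c₁ : FractionalConfig ht ty u w h₁ S₁ J₁) (c₂ : FractionalConfig ht ty u w h₂ S₂ J₂) :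
    FractionalConfig ht ty u w h (S₁ ∪ S₂) ((J₁ ⊕ J₂) ⊕ Unit) where
  height := Sum.elim (Sum.elim c₁.height c₂.height) fun _ => h - (h₁ + h₂)
  types := Sum.elim (Sum.elim c₁.types c₂.types) fun _ => []
  height_nonneg := by
    rintro ((j | j) | _)
    exacts [c₁.height_nonneg j, c₂.height_nonneg j, sub_nonneg.2 hh]
  sum_height := by simp [c₁.sum_height, c₂.sum_height]
  width_le := by
    rintro ((j | j) | j)
    exacts [c₁.width_le j, c₂.width_le j, by simpa using hw]
  exists_of_mem := by
    rintro ((j | j) | j) g hg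
    · exact (c₁.exists_of_mem _ g hg).imp fun i hi => ⟨Finset.mem_union_left _ hi.1, hi.2⟩
    · exact (c₂.exists_of_mem _ g hg).imp fun i hi => ⟨Finset.mem_union_right _ hi.1, hi.2⟩
    · simp at hg
  demand_le g := by
    rw [demand_union hd]
    simpa using add_le_add (c₁.demand_le g) (c₂.demand_le g)

end FractionalConfig

variable [DecidableEq ι]

lemma GuillotineTree.eq_empty_of_height_nonpos (hht : ∀ i, 0 < ht i)
    (t : GuillotineTree (SingleItem wd ht) w h k S) (hh : h ≤ 0) : S = ∅ :=
  Finset.eq_empty_of_forall_notMem fun i hi => by linarith [hht i, (t.fits i hi).2]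

lemma GuillotineTree.exists_fractionalConfig (hht : ∀ i, 0 < ht i)
    (t : GuillotineTree (SingleItem wd ht) w h k S) (hS : ∀ i ∈ S, u (ty i) ≤ wd i) :
    ∃ (J : Type) (_ : Fintype J), Nonempty (FractionalConfig ht ty u w h S J) := by
  induction t with
  | leaf hw hh _ hl =>
    refine ⟨Unit, inferInstance, ?_⟩
    rcases eq_empty_or_singleton_of_card_le_one hl.1 with rfl | ⟨x, rfl⟩
    · exact ⟨.empty ht ty u hw hh⟩
    · have hx := hl.2 x (by simp)
      exact ⟨.single hh ((hS x (by simp)).trans hx.1) hx.2⟩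
  | vcut hd hS' hw hk t₁ t₂ ih₁ ih₂ =>
    obtain ⟨J₁, _, ⟨c₁⟩⟩ := ih₁ fun i hi => hS i (by simp [hS', hi])
    obtain ⟨J₂, _, ⟨c₂⟩⟩ := ih₂ fun i hi => hS i (by simp [hS', hi])
    have tS := t₁.vcut hd hS' hw hk t₂
    rcases t₁.nonneg.2.eq_or_lt with hh | hh
    · rw [tS.eq_empty_of_height_nonpos hht hh.ge]
      exact ⟨Unit, inferInstance, ⟨.empty ht ty u tS.nonneg.1 tS.nonneg.2⟩⟩
    · exact ⟨_, inferInstance, ⟨hS' ▸ c₁.beside hd hw hh c₂⟩⟩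
  | hcut hd hS' hh _ t₁ _ ih₁ ih₂ =>
    obtain ⟨J₁, _, ⟨c₁⟩⟩ := ih₁ fun i hi => hS i (by simp [hS', hi])
    obtain ⟨J₂, _, ⟨c₂⟩⟩ := ih₂ fun i hi => hS i (by simp [hS', hi])
    exact ⟨_, inferInstance, ⟨hS' ▸ c₁.above hd hh t₁.nonneg.1 c₂⟩⟩

/-- Filling the columns of one slab greedily loses one item per column. -/
lemma exists_slab_packing (hu : ∀ g, 0 ≤ u g) (hh : 0 ≤ h) {b : ℕ → ℝ} (hb : ∀ g, 0 ≤ b g)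
    (c : List ℕ) (hS : ∀ i ∈ S, wd i ≤ u (ty i))
    (hdem : ∀ g, demand ht ty S g ≤ b g + h * c.count g) :
    ∃ P R : Finset ι, Disjoint P R ∧ P ∪ R ⊆ S ∧ (S \ (P ∪ R)).card ≤ c.length ∧
      GuillotineTree (Stacked wd ht) (c.map u).sum h (c.length + 1) P ∧
      ∀ g, demand ht ty R g ≤ b g := by
  induction c generalizing S with
  | nil =>
    exact ⟨∅, S, by simp, by simp, by simp,
      .leaf (by simp) hh (by simp) (Or.inl (by simpa using hh)), by simpa using hdem⟩
  | cons g c ih =>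
    have hg : demand ht ty S g ≤ h + (b g + h * c.count g) :=
      (hdem g).trans_eq (by rw [List.count_cons_self]; push_cast; ring)
    obtain ⟨P₀, hP₀S, hP₀, hP₀sum, R₀, hR₀S, hd, hcard, hR₀, hne⟩ :=
      exists_split_demand ht ty S g hh (by have := hb g; positivity) hg
    obtain ⟨P, R, hPR, hsub, hcard', t, hR⟩ := ih (fun i hi => hS i (hR₀S hi)) fun g' => by
      rcases eq_or_ne g' g with rfl | hg'
      · exact hR₀
      · rw [hne g' hg']
        simpa [List.count_cons_of_ne hg'.symm] using hdem g'
    have hd' : Disjoint P₀ (P ∪ R) := hd.mono_right hsub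
    refine ⟨P₀ ∪ P, R, ?_, ?_, ?_, ?_, hR⟩
    · exact Finset.disjoint_union_left.2 ⟨hd'.mono_right Finset.subset_union_right, hPR⟩
    · rw [Finset.union_assoc]
      exact Finset.union_subset hP₀S (hsub.trans hR₀S)
    · have hlost : S \ (P₀ ∪ P ∪ R) ⊆ S \ (P₀ ∪ R₀) ∪ R₀ \ (P ∪ R) := by
        intro i
        simp only [Finset.mem_sdiff, Finset.mem_union]
        tauto
      have := (Finset.card_le_card hlost).trans (Finset.card_union_le _ _)
      rw [List.length_cons]
      omega
    · refine .vcut (hd'.mono_right Finset.subset_union_left) rfl (by simp) (by simp [add_comm])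
        (.leaf (hu g) hh le_rfl (Or.inl ⟨fun i hi => ?_, hP₀sum⟩)) t
      exact (hS i (hP₀S hi)).trans_eq (by rw [hP₀ i hi])

lemma exists_slabs_packing (hht : ∀ i, 0 < ht i) (hu : ∀ g, 0 ≤ u g) (hw : 0 ≤ w) {m : ℕ}
    {X : List ℕ → ℝ} (hX : ∀ c, 0 ≤ X c) (F : Finset (List ℕ))
    (hF : ∀ c ∈ F, c.length ≤ m ∧ (c.map u).sum ≤ w) (hS : ∀ i ∈ S, wd i ≤ u (ty i))
    (hdem : ∀ g, demand ht ty S g ≤ ∑ c ∈ F, X c * c.count g) :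
    ∃ S' ⊆ S, (S \ S').card ≤ F.card * m ∧
      GuillotineTree (Stacked wd ht) w (∑ c ∈ F, X c) (F.card * (m + 1) + 1) S' := by
  induction F using Finset.induction_on generalizing S with
  | empty =>
    obtain rfl : S = ∅ := Finset.eq_empty_of_forall_notMem fun i hi => by
      have := (le_demand (ty := ty) (fun i => (hht i).le) hi).trans (hdem _)
      rw [Finset.sum_empty] at this
      linarith [hht i]
    exact ⟨∅, by simp, by simp, .leaf hw (by simp) (by simp) (Or.inl (by simp))⟩
  | insert c F hc ih =>
    have hF₀ (g : ℕ) : 0 ≤ ∑ c ∈ F, X c * c.count g :=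
      Finset.sum_nonneg fun c _ => mul_nonneg (hX c) (Nat.cast_nonneg _)
    obtain ⟨P, R, hPR, hsub, hcard, tP, hR⟩ := exists_slab_packing hu (hX c) hF₀ c hS
      (fun g => (hdem g).trans_eq (by rw [Finset.sum_insert hc, add_comm]))
    obtain ⟨S', hS'R, hcard', tS'⟩ := ih (fun c hc => hF c (by simp [hc]))
      (fun i hi => hS i (hsub (by simp [hi]))) hR
    have hlen := (hF c (by simp)).1
    refine ⟨P ∪ S', (Finset.union_subset_union le_rfl hS'R).trans hsub, ?_, ?_⟩
    · have hlost : S \ (P ∪ S') ⊆ S \ (P ∪ R) ∪ R \ S' := by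
        intro i
        simp only [Finset.mem_sdiff, Finset.mem_union]
        tauto
      have := (Finset.card_le_card hlost).trans (Finset.card_union_le _ _)
      rw [Finset.card_insert_of_notMem hc, add_mul]
      omega
    · rw [Finset.sum_insert hc, Finset.card_insert_of_notMem hc]
      refine .hcut (hPR.mono_right hS'R) rfl le_rfl ?_
        (tP.mono (fun _ _ _ _ _ => Stacked.mono) (hF c (by simp)).2 le_rfl) tS'
      rw [add_mul]
      omega

/-- An upper bound for the number of stacks needed to realise a fractional packing by configurations
with at most `m` columns of `n` types, and for the number of items lost in doing so. -/
noncomputable def configBound (n m : ℕ) : ℕ := (configurations n m).card * (m + 1) + 1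

/-- A packing of `S`, with widths rounded down to `u ∘ ty`, makes room for any `S'` whose
widths round up to the same values, with no larger demands. -/
lemma GuillotineTree.exists_config_packing (hht : ∀ i, 0 < ht i) {ty' : ι → ℕ} (hu : ∀ g, 0 ≤ u g)
    {β : ℝ} (hβ : 0 < β) {n m : ℕ} (hm : w / β ≤ m)
    (t : GuillotineTree (SingleItem wd ht) w h k S) (hS : ∀ i ∈ S, u (ty i) ≤ wd i)
    (hβS : ∀ i ∈ S, β ≤ u (ty i)) (hn : ∀ i ∈ S, ty i < n) {S' : Finset ι}
    (hS' : ∀ i ∈ S', wd i ≤ u (ty' i)) (hdem : ∀ g, demand ht ty' S' g ≤ demand ht ty S g) :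
    ∃ A ⊆ S', (S' \ A).card ≤ configBound n m ∧
      GuillotineTree (Stacked wd ht) w h (configBound n m) A := by
  obtain ⟨J, _, ⟨c⟩⟩ := t.exists_fractionalConfig hht hS
  have hc (j : J) (_ : j ∈ Finset.univ) :
      c.types j ∈ (configurations n m).filter fun c => (c.map u).sum ≤ w :=
    Finset.mem_filter.2 ⟨c.config_mem hβ hm hβS hn j, c.width_le j⟩
  obtain ⟨A, hAS', hcard, tA⟩ := exists_slabs_packing (wd := wd) (m := m) hht hu t.nonneg.1
    (X := fun l => ∑ j with c.types j = l, c.height j)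
    (fun l => Finset.sum_nonneg fun j _ => c.height_nonneg j) _
    (fun l hl => ⟨(mem_configurations.1 (Finset.mem_filter.1 hl).1).1, (Finset.mem_filter.1 hl).2⟩)
    hS' fun g => by
      refine (hdem g).trans ((c.demand_le g).trans_eq ?_)
      rw [← Finset.sum_fiberwise_of_maps_to hc]
      refine Finset.sum_congr rfl fun l _ => ?_
      rw [Finset.sum_mul]
      exact Finset.sum_congr rfl fun j hj => by rw [(Finset.mem_filter.1 hj).2]
  rw [Finset.sum_fiberwise_of_maps_to hc, c.sum_height] at tA
  have hle := Finset.card_filter_le (configurations n m) fun c => (c.map u).sum ≤ w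
  exact ⟨A, hAS', hcard.trans ((Nat.mul_le_mul hle m.le_succ).trans (Nat.le_succ _)),
    tA.mono_count (Nat.succ_le_succ (Nat.mul_le_mul_right _ hle))⟩

lemma GuillotineTree.exists_stacked_of_multiple (hwd : ∀ i, 0 < wd i) (hht : ∀ i, 0 < ht i) {ρ : ℝ}
    (hρ : 0 < ρ) {m : ℕ} (hm : w / ρ ≤ m) (t : GuillotineTree (SingleItem wd ht) w h k S)
    (hS : ∀ i ∈ S, ∃ n : ℕ, wd i = n * ρ) :
    ∃ A ⊆ S, (S \ A).card ≤ configBound (m + 1) m ∧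
      GuillotineTree (Stacked wd ht) w h (configBound (m + 1) m) A := by
  choose! ty hty using hS
  refine t.exists_config_packing (u := fun g => g * ρ) hht (fun g => by positivity) hρ hm
    (fun i hi => (hty i hi).ge) (fun i hi => ?_) (fun i hi => ?_) (fun i hi => (hty i hi).le)
    fun g => le_rfl
  · have hpos : 0 < ty i := Nat.pos_of_ne_zero fun h0 => by
      simpa [hty i hi, h0] using (hwd i).ne'
    exact le_mul_of_one_le_left hρ.le (mod_cast hpos)
  · have hle := (t.fits i hi).1
    rw [hty i hi, ← le_div_iff₀ hρ] at hle
    exact Nat.lt_succ_of_le (mod_cast hle.trans hm)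

end Configurations

section LinearGrouping

variable {ι : Type u} [DecidableEq ι] {key f : ι → ℝ} {τ : ℝ} {n : ℕ}

/-- Linear grouping: `S` is partitioned into at most `n` types in decreasing order of `key`. Apart
from the dropped items, every type has total size `f` at most `τ`; every type but the last one has
total size at least `τ` if the dropped items are included. -/
structure LinearGrouping (key f : ι → ℝ) (τ : ℝ) (n : ℕ) (S : Finset ι) where
  ty : ι → ℕ
  dropped : Finset ι
  dropped_subset : dropped ⊆ S
  card_dropped : dropped.card ≤ n
  ty_lt : ∀ i ∈ S, ty i < n
  demand_sdiff_le : ∀ g, demand f ty (S \ dropped) g ≤ τ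
  key_le : ∀ i ∈ S, ∀ j ∈ S, ty i < ty j → key j ≤ key i
  le_demand : ∀ j ∈ S, ∀ g < ty j, τ ≤ demand f ty S g

lemma demand_ite_zero (ty : ι → ℕ) (T R : Finset ι) :
    demand f (fun i => if i ∈ R then ty i + 1 else 0) T 0 = ∑ i ∈ T \ R, f i := by
  refine Finset.sum_congr (Finset.ext fun i => ?_) fun _ _ => rfl
  by_cases hi : i ∈ R <;> simp [hi]

lemma demand_ite_succ (ty : ι → ℕ) (T R : Finset ι) (g : ℕ) :
    demand f (fun i => if i ∈ R then ty i + 1 else 0) T (g + 1) = demand f ty (T ∩ R) g := by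
  refine Finset.sum_congr (Finset.ext fun i => ?_) fun _ _ => rfl
  by_cases hi : i ∈ R <;> simp [hi]

lemma union_sdiff_union_sdiff {P D R X : Finset ι} (hPD : Disjoint P D) (hPR : Disjoint P R)
    (hX : X ⊆ R) : ((P ∪ D ∪ R) \ (D ∪ X)) \ R = P := by
  rw [Finset.disjoint_left] at hPD hPR
  ext i
  have := @hPD i
  have := @hPR i
  have := @hX i
  simp only [Finset.mem_sdiff, Finset.mem_union]
  tauto

lemma union_sdiff_union_inter {P D R X : Finset ι} (hDR : Disjoint D R) :
    ((P ∪ D ∪ R) \ (D ∪ X)) ∩ R = R \ X := by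
  rw [Finset.disjoint_left] at hDR
  ext i
  have := @hDR i
  simp only [Finset.mem_inter, Finset.mem_sdiff, Finset.mem_union]
  tauto

/-- Prepending a type formed by `P` and the dropped items `D`. -/
def LinearGrouping.cons {P D R : Finset ι} (hPD : Disjoint P D) (hPR : Disjoint P R)
    (hDR : Disjoint D R) (hD : D.card ≤ 1) (hP : ∑ i ∈ P, f i ≤ τ)
    (hfull : R.Nonempty → τ ≤ ∑ i ∈ P, f i + ∑ i ∈ D, f i)
    (hkey : ∀ i ∈ P ∪ D, ∀ j ∈ R, key j ≤ key i) (G : LinearGrouping key f τ n R) :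
    LinearGrouping key f τ (n + 1) (P ∪ D ∪ R) where
  ty i := if i ∈ R then G.ty i + 1 else 0
  dropped := D ∪ G.dropped
  dropped_subset :=
    Finset.union_subset_union Finset.subset_union_right G.dropped_subset
  card_dropped := (Finset.card_union_le _ _).trans (by linarith [G.card_dropped])
  ty_lt i _ := by
    split_ifs with hi
    · exact Nat.succ_lt_succ (G.ty_lt i hi)
    · exact Nat.succ_pos n
  demand_sdiff_le g := by
    cases g with
    | zero => rwa [demand_ite_zero, union_sdiff_union_sdiff hPD hPR G.dropped_subset]
    | succ g =>
      rw [demand_ite_succ, union_sdiff_union_inter hDR]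
      exact G.demand_sdiff_le g
  key_le i hi j _ hij := by
    have hj : j ∈ R := by by_contra hj; simp [hj] at hij
    by_cases hiR : i ∈ R
    · exact G.key_le i hiR j hj (by simpa [hiR, hj] using hij)
    · exact hkey i ((Finset.mem_union.1 hi).resolve_right hiR) j hj
  le_demand j _ g hg := by
    have hj : j ∈ R := by by_contra hj; simp [hj] at hg
    cases g with
    | zero =>
      rw [demand_ite_zero,
        Finset.union_sdiff_cancel_right (Finset.disjoint_union_left.2 ⟨hPR, hDR⟩),
        Finset.sum_union hPD]
      exact hfull ⟨j, hj⟩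
    | succ g =>
      rw [demand_ite_succ, Finset.inter_eq_right.2 Finset.subset_union_right]
      exact G.le_demand j hj g (by simpa [hj] using hg)

lemma nonempty_linearGrouping (hf : ∀ i, 0 < f i) (hτ : 0 ≤ τ) (S : Finset ι)
    (hS : ∑ i ∈ S, f i ≤ n * τ) : Nonempty (LinearGrouping key f τ n S) := by
  induction n generalizing S with
  | zero =>
    obtain rfl : S = ∅ := Finset.eq_empty_of_forall_notMem fun i hi => by
      have := Finset.single_le_sum (fun j _ => (hf j).le) hi
      rw [Nat.cast_zero, zero_mul] at hS
      linarith [hf i]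
    exact ⟨⟨fun _ => 0, ∅, by simp, by simp, by simp, by simpa [demand] using hτ, by simp, by simp⟩⟩
  | succ n ih =>
    obtain ⟨P, D, R, hPD, hPR, hDR, rfl, hD, hP, hfull, hkey⟩ := exists_greedy_split key f S hτ
    obtain ⟨G⟩ := ih R (by
      rcases R.eq_empty_or_nonempty with rfl | hR
      · simpa using by positivity
      · rw [Finset.sum_union (Finset.disjoint_union_left.2 ⟨hPR, hDR⟩), Finset.sum_union hPD] at hS
        push_cast at hS
        linarith [hfull hR])
    exact ⟨G.cons hPD hPR hDR hD hP hfull hkey⟩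

namespace LinearGrouping

variable {S : Finset ι} (G : LinearGrouping key f τ n S)

lemma demand_succ_le (hf : ∀ i, 0 ≤ f i) (g : ℕ) :
    demand f G.ty (S \ G.dropped) (g + 1) ≤ demand f G.ty S g := by
  by_cases hne : ∃ j ∈ S, G.ty j = g + 1
  · obtain ⟨j, hj, hg⟩ := hne
    exact (G.demand_sdiff_le _).trans (G.le_demand j hj g (by omega))
  · refine le_of_eq_of_le ?_ (demand_nonneg hf)
    rw [demand, Finset.filter_false_of_mem fun i hi hg => hne ⟨i, (Finset.mem_sdiff.1 hi).1, hg⟩,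
      Finset.sum_empty]

/-- The smallest key of an item of type `g`, and `0` if there is none. -/
noncomputable def minKey (g : ℕ) : ℝ := sInf (key '' {i | i ∈ S ∧ G.ty i = g})

lemma minKey_nonneg (hkey : ∀ i, 0 ≤ key i) (g : ℕ) : 0 ≤ G.minKey g :=
  Real.sInf_nonneg (by rintro _ ⟨i, -, rfl⟩; exact hkey i)

lemma minKey_le {i : ι} (hi : i ∈ S) : G.minKey (G.ty i) ≤ key i :=
  csInf_le ((S.finite_toSet.subset fun _ hj => hj.1).image key).bddBelow ⟨i, ⟨hi, rfl⟩, rfl⟩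

lemma le_minKey {δ : ℝ} (hδ : ∀ i ∈ S, δ ≤ key i) {i : ι} (hi : i ∈ S) :
    δ ≤ G.minKey (G.ty i) :=
  le_csInf ⟨_, i, ⟨hi, rfl⟩, rfl⟩ (by rintro _ ⟨j, hj, rfl⟩; exact hδ j hj.1)

lemma le_minKey_pred (hτ : 0 < τ) {i : ι} (hi : i ∈ S) (h1 : 1 ≤ G.ty i) :
    key i ≤ G.minKey (G.ty i - 1) := by
  refine le_csInf (Set.Nonempty.image _ ?_) ?_
  · by_contra hempty
    have hτ' := G.le_demand i hi (G.ty i - 1) (by omega)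
    rw [demand, Finset.filter_false_of_mem fun j hj hg => hempty ⟨j, hj, hg⟩,
      Finset.sum_empty] at hτ'
    linarith
  · rintro _ ⟨j, ⟨hj, hg⟩, rfl⟩
    exact G.key_le j hj i hi (by omega)

/-- Each type but the first is moved into the room left by its predecessor. -/
lemma exists_config_packing {wd ht : ι → ℝ} {δ w h : ℝ} {m k : ℕ}
    (G : LinearGrouping wd ht τ n S) (hτ : 0 < τ) (hwd : ∀ i, 0 ≤ wd i) (hht : ∀ i, 0 < ht i)
    (hδ : 0 < δ) (hm : w / δ ≤ m) (t : GuillotineTree (SingleItem wd ht) w h k S)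
    (hS : ∀ i ∈ S, δ ≤ wd i) :
    ∃ A ⊆ {i ∈ S \ G.dropped | 1 ≤ G.ty i},
      ({i ∈ S \ G.dropped | 1 ≤ G.ty i} \ A).card ≤ configBound n m ∧
      GuillotineTree (Stacked wd ht) w h (configBound n m) A := by
  refine t.exists_config_packing (u := G.minKey) (ty := G.ty) (ty' := fun i => G.ty i - 1) hht
    (G.minKey_nonneg hwd) hδ hm (fun i => G.minKey_le) (fun i => G.le_minKey hS) G.ty_lt
    (fun i hi => ?_) fun g => ?_
  · obtain ⟨hi, h1⟩ := Finset.mem_filter.1 hi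
    exact G.le_minKey_pred hτ (Finset.mem_sdiff.1 hi).1 h1
  · rw [demand_pred]
    exact G.demand_succ_le (fun i => (hht i).le) g

end LinearGrouping

lemma GuillotineTree.exists_stacked_of_le_width {wd ht : ι → ℝ} {δ η w h : ℝ} {m k : ℕ}
    {S : Finset ι} (hwd : ∀ i, 0 ≤ wd i) (hht : ∀ i, 0 < ht i) (hδ : 0 < δ) (hη : 0 < η)
    (hm : w / δ ≤ m) (hn : w / (δ * η) ≤ n) (t : GuillotineTree (SingleItem wd ht) w h k S)
    (hS : ∀ i ∈ S, δ ≤ wd i) :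
    ∃ A ⊆ S, (S \ A).card ≤ n + configBound n m ∧
      GuillotineTree (Stacked wd ht) w ((1 + η) * h) (configBound n m + 1) A := by
  rcases t.nonneg.2.eq_or_lt with rfl | hh
  · obtain rfl := t.eq_empty_of_height_nonpos hht le_rfl
    exact ⟨∅, by simp, by simp, .leaf t.nonneg.1 (by simp) (by omega) (Or.inl (by simp))⟩
  have hsum : ∑ i ∈ S, ht i ≤ n * (η * h) := by
    refine le_of_mul_le_mul_left ?_ hδ
    calc δ * ∑ i ∈ S, ht i ≤ totalArea wd ht S := by
          rw [Finset.mul_sum]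
          exact Finset.sum_le_sum fun i hi => mul_le_mul_of_nonneg_right (hS i hi) (hht i).le
      _ ≤ w * h := t.totalArea_le fun i => (hht i).le
      _ ≤ n * (δ * η) * h := mul_le_mul_of_nonneg_right ((div_le_iff₀ (by positivity)).1 hn) hh.le
      _ = δ * (n * (η * h)) := by ring
  have hτ : 0 < η * h := by positivity
  obtain ⟨G⟩ := nonempty_linearGrouping (key := wd) hht hτ.le S hsum
  obtain ⟨A, hA, hcard, tA⟩ := G.exists_config_packing hτ hwd hht hδ hm t hS
  have hA' (i : ι) (hi : i ∈ A) : (i ∈ S ∧ i ∉ G.dropped) ∧ 1 ≤ G.ty i := by simpa using hA hi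
  refine ⟨{i ∈ S \ G.dropped | G.ty i = 0} ∪ A, fun i hi => ?_, ?_, ?_⟩
  · have := hA' i
    simp only [Finset.mem_union, Finset.mem_filter, Finset.mem_sdiff] at hi
    tauto
  · have hlost : S \ ({i ∈ S \ G.dropped | G.ty i = 0} ∪ A) ⊆
        G.dropped ∪ {i ∈ S \ G.dropped | 1 ≤ G.ty i} \ A := by
      intro i
      simp only [Finset.mem_sdiff, Finset.mem_union, Finset.mem_filter, Nat.one_le_iff_ne_zero]
      tauto
    have := (Finset.card_le_card hlost).trans (Finset.card_union_le _ _)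
    have := G.card_dropped
    omega
  · refine .hcut (h₁ := η * h) (Finset.disjoint_left.2 fun i hi hiA => ?_) rfl (by linarith)
      (by omega) (.leaf t.nonneg.1 hτ.le le_rfl (Or.inl ⟨fun i hi => ?_, G.demand_sdiff_le 0⟩)) tA
    · have := (hA' i hiA).2
      have := (Finset.mem_filter.1 hi).2
      omega
    · exact (t.fits i (Finset.mem_sdiff.1 (Finset.mem_filter.1 hi).1).1).1

end LinearGrouping

/-! ### Resource augmentation and next-fit decreasing height -/

section ResourceAugmentation

variable {ι : Type u} {wd ht : ι → ℝ} {ρ δ e w h : ℝ} {k : ℕ} {S : Finset ι}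

/-- The width of an item, rounded up to a multiple of `ρ` if it is at least `δ`. -/
noncomputable def roundedWidth (wd : ι → ℝ) (ρ δ : ℝ) (i : ι) : ℝ :=
  if δ ≤ wd i then ⌈wd i / ρ⌉₊ * ρ else wd i

lemma le_roundedWidth (hρ : 0 < ρ) (i : ι) : wd i ≤ roundedWidth wd ρ δ i := by
  unfold roundedWidth
  split_ifs
  · exact (div_le_iff₀ hρ).1 (Nat.le_ceil _)
  · exact le_rfl

lemma roundedWidth_le (hδ : 0 < δ) (he : 0 < e) {i : ι} (hi : 0 ≤ wd i) :
    roundedWidth wd (δ * e) δ i ≤ (1 + e) * wd i := by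
  unfold roundedWidth
  split_ifs with hδi
  · calc ⌈wd i / (δ * e)⌉₊ * (δ * e) ≤ (wd i / (δ * e) + 1) * (δ * e) := by
          gcongr
          exact (Nat.ceil_lt_add_one (by positivity)).le
      _ = wd i + δ * e := by field_simp
      _ ≤ wd i + wd i * e := by gcongr
      _ = (1 + e) * wd i := by ring
  · nlinarith

lemma roundedWidth_multiple_or_le_height {i : ι} (hi : δ ≤ wd i ∨ δ ≤ ht i) :
    (∃ n : ℕ, roundedWidth wd ρ δ i = n * ρ) ∨ δ ≤ ht i :=
  hi.imp_left fun hδi => ⟨_, if_pos hδi⟩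

/-- An upper bound for the number of stacks into which a pure leaf of width at most `2` and height
at most `1` is repacked, and for the number of items lost in doing so. -/
noncomputable def leafRepackBound (ρ δ e : ℝ) : ℕ :=
  configBound (⌈2 / ρ⌉₊ + 1) ⌈2 / ρ⌉₊ +
    (⌈1 / (δ * e)⌉₊ + configBound ⌈1 / (δ * e)⌉₊ ⌈1 / δ⌉₊) + 1

/-- An upper bound for the number of stacks needed, and the number of items lost, when the width of
the knapsack is augmented by a factor `1 + 3 * e`. -/
noncomputable def augmentationBound (δ e : ℝ) : ℕ :=
  (pureLeafBound (⌊2 / (δ * e)⌋₊ + ⌊1 / δ⌋₊) + 2) * leafRepackBound (δ * e) δ e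

variable [DecidableEq ι]

lemma PureLeaf.exists_stacked (hwd : ∀ i, 0 < wd i) (hht : ∀ i, 0 < ht i) (hρ : 0 < ρ) (hδ : 0 < δ)
    (he : 0 < e) (hw : w ≤ 2) (hh : h ≤ 1) (hS : PureLeaf wd ht ρ δ w h S) :
    ∃ A ⊆ S, (S \ A).card ≤ leafRepackBound ρ δ e ∧
      GuillotineTree (Stacked wd ht) ((1 + e) * w) h (leafRepackBound ρ δ e) A := by
  obtain ⟨⟨k, t⟩, hmul | hhigh⟩ := hS
  · obtain ⟨A, hA, hcard, tA⟩ := t.exists_stacked_of_multiple hwd hht hρ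
      ((div_le_div_of_nonneg_right hw hρ.le).trans (Nat.le_ceil _)) hmul
    have tA' : GuillotineTree (Stacked wd ht) ((1 + e) * w) h _ A :=
      tA.mono (fun _ _ _ _ _ => Stacked.mono) (by nlinarith [t.nonneg.1]) le_rfl
    exact ⟨A, hA, hcard.trans (by unfold leafRepackBound; omega),
      tA'.mono_count (by unfold leafRepackBound; omega)⟩
  · have tswap : GuillotineTree (SingleItem ht wd) h w k S := t.swap fun _ _ _ => SingleItem.swap
    obtain ⟨A, hA, hcard, tA⟩ := tswap.exists_stacked_of_le_width (fun i => (hht i).le) hwd hδ he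
      ((div_le_div_of_nonneg_right hh hδ.le).trans (Nat.le_ceil _))
      ((div_le_div_of_nonneg_right hh (by positivity)).trans (Nat.le_ceil _)) hhigh
    exact ⟨A, hA, hcard.trans (by unfold leafRepackBound; omega),
      (tA.swap fun _ _ _ => Stacked.swap).mono_count (by unfold leafRepackBound; omega)⟩

/-- Rounding the large widths up to multiples of `δ * e` costs one factor `1 + e`; repacking the
pure leaves of the rounded packing costs another one. -/
lemma GuillotineTree.exists_augmented_stacked (hwd : ∀ i, 0 < wd i) (hht : ∀ i, 0 < ht i)
    (hδ : 0 < δ) (he : 0 < e) (he1 : e ≤ 1) (hw : w ≤ 1) (hh : h ≤ 1)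
    (t : GuillotineTree (SingleItem wd ht) w h k S) (hS : ∀ i ∈ S, δ ≤ wd i ∨ δ ≤ ht i) :
    ∃ A ⊆ S, (S \ A).card ≤ augmentationBound δ e ∧
      GuillotineTree (Stacked wd ht) ((1 + 3 * e) * w) h (augmentationBound δ e) A := by
  have hρ : 0 < δ * e := by positivity
  set wd' := roundedWidth wd (δ * e) δ
  have hle (i : ι) : wd i ≤ wd' i := le_roundedWidth hρ i
  have hwd' (i : ι) : 0 < wd' i := (hwd i).trans_le (hle i)
  have t' : GuillotineTree (SingleItem wd' ht) ((1 + e) * w) h k S := by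
    rw [← one_mul h]
    refine t.map_scale (by positivity) zero_le_one fun w h S hS => ⟨hS.1, fun i hi => ⟨?_, ?_⟩⟩
    · exact (roundedWidth_le hδ he (hwd i).le).trans
        (mul_le_mul_of_nonneg_left (hS.2 i hi).1 (by positivity))
    · simpa using (hS.2 i hi).2
  have hw2 : (1 + e) * w ≤ 2 := by nlinarith
  have tpure := (t'.peeledPacking hρ hδ hwd'
    (fun i hi => roundedWidth_multiple_or_le_height (hS i hi))
    (add_le_add (Nat.floor_le_floor (div_le_div_of_nonneg_right hw2 hρ.le))
      (Nat.floor_le_floor (div_le_div_of_nonneg_right hh hδ.le)))).tree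
  obtain ⟨A, hA, hcard, tA⟩ := tpure.bind (L' := Stacked wd' ht) (a := 1 + e) (by positivity)
    fun w' h' S' hS' hw' hh' => hS'.exists_stacked hwd' hht hρ hδ he (hw'.trans hw2) (hh'.trans hh)
  have tA' : GuillotineTree (Stacked wd ht) ((1 + e) * ((1 + e) * w)) h (augmentationBound δ e) A :=
    tA.map fun _ _ _ => Or.imp (fun h => ⟨fun i hi => (hle i).trans (h.1 i hi), h.2⟩)
      fun h => ⟨h.1, (Finset.sum_le_sum fun i _ => hle i).trans h.2⟩
  refine ⟨A, hA, hcard, tA'.mono (fun _ _ _ _ _ => Stacked.mono) ?_ le_rfl⟩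
  rw [← mul_assoc]
  exact mul_le_mul_of_nonneg_right (by nlinarith) t.nonneg.1

end ResourceAugmentation

section NextFitDecreasingHeight

variable {ι : Type u} {wd ht : ι → ℝ} {a b m μ : ℝ} {S : Finset ι}

/-- A shelf filled up to width `c` has area at least `c` times the height of the next shelf. -/
lemma mul_le_totalArea {T : Finset ι} {c y : ℝ} (hwd : ∀ i, 0 ≤ wd i) (hy : 0 ≤ y)
    (hT : ∀ i ∈ T, y ≤ ht i) (hc : c ≤ ∑ i ∈ T, wd i) : c * y ≤ totalArea wd ht T :=
  calc c * y ≤ (∑ i ∈ T, wd i) * y := mul_le_mul_of_nonneg_right hc hy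
    _ = ∑ i ∈ T, wd i * y := Finset.sum_mul ..
    _ ≤ _ := Finset.sum_le_sum fun i hi => mul_le_mul_of_nonneg_left (hT i hi) (hwd i)

variable [DecidableEq ι]

lemma exists_shelf (hwd : ∀ i, 0 ≤ wd i) (hm : 0 ≤ m) (hS : ∀ i ∈ S, ht i ≤ m)
    (hsum : ∑ i ∈ S, wd i ≤ a) : ∃ k, GuillotineTree (SingleItem wd ht) a m k S := by
  induction S using Finset.induction_on generalizing a with
  | empty => exact ⟨1, .leaf (by simpa using hsum) hm le_rfl ⟨by simp, by simp⟩⟩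
  | insert x S hx ih =>
    rw [Finset.sum_insert hx] at hsum
    obtain ⟨k, t⟩ := ih (a := a - wd x) (fun i hi => hS i (by simp [hi])) (by linarith)
    exact ⟨1 + k, .vcut (by simpa using hx) (Finset.insert_eq x S) (by linarith) le_rfl
      (.leaf (hwd x) hm le_rfl ⟨by simp, by simpa using hS x (by simp)⟩) t⟩

/-- Next-fit decreasing height. -/
lemma exists_tree_of_totalArea_le (hwd : ∀ i, 0 ≤ wd i) (hht : ∀ i, 0 ≤ ht i) (hμ : 0 ≤ μ)
    (ha : μ < a) (hm : 0 ≤ m) (hmb : m ≤ b) (hSμ : ∀ i ∈ S, wd i ≤ μ) (hSm : ∀ i ∈ S, ht i ≤ m)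
    (hS : totalArea wd ht S ≤ (a - μ) * (b - m)) :
    ∃ k, GuillotineTree (SingleItem wd ht) a b k S := by
  induction S using Finset.strongInduction generalizing b m with
  | H S ih =>
    obtain ⟨P, D, R, hPD, hPR, hDR, rfl, hD, hP, hfull, hkey⟩ :=
      exists_greedy_split ht wd S (sub_nonneg.2 ha.le)
    have hdR : Disjoint (P ∪ D) R := Finset.disjoint_union_left.2 ⟨hPR, hDR⟩
    have hshelf : ∑ i ∈ P ∪ D, wd i ≤ a := by
      have : ∑ i ∈ D, wd i ≤ μ := by
        rcases eq_empty_or_singleton_of_card_le_one hD with rfl | ⟨x, rfl⟩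
        · simpa using hμ
        · simpa using hSμ x (by simp)
      rw [Finset.sum_union hPD]
      linarith
    obtain ⟨k₁, t₁⟩ := exists_shelf hwd hm (fun i hi => hSm i (Finset.mem_union_left _ hi)) hshelf
    rcases R.eq_empty_or_nonempty with rfl | hR
    · rw [Finset.union_empty]
      exact ⟨k₁, t₁.mono (fun _ _ _ _ _ => SingleItem.mono) le_rfl hmb⟩
    obtain ⟨r, hr, hmax⟩ := R.exists_max_image ht hR
    have hwide : a - μ ≤ ∑ i ∈ P ∪ D, wd i := (hfull hR).trans_eq (Finset.sum_union hPD).symm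
    have harea : (a - μ) * ht r ≤ totalArea wd ht (P ∪ D) :=
      mul_le_totalArea hwd (hht r) (fun i hi => hkey i hi r hr) hwide
    have hrest : totalArea wd ht R ≤ (a - μ) * (b - m - ht r) := by
      rw [totalArea_union hdR] at hS
      linarith [mul_sub (a - μ) (b - m) (ht r)]
    have hrb : ht r ≤ b - m := by
      have := (totalArea_nonneg hwd hht).trans hrest
      linarith [nonneg_of_mul_nonneg_right this (sub_pos.2 ha)]
    have hssub : R ⊂ P ∪ D ∪ R := by
      refine Finset.ssubset_iff_subset_ne.2 ⟨Finset.subset_union_right, fun heq => ?_⟩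
      have hempty : P ∪ D = ∅ := hdR.eq_bot_of_le (Finset.union_eq_right.1 heq.symm)
      rw [hempty, Finset.sum_empty] at hwide
      linarith
    obtain ⟨k₂, t₂⟩ := ih R hssub (hht r) hrb (fun i hi => hSμ i (Finset.mem_union_right _ hi))
      hmax hrest
    exact ⟨k₁ + k₂, .hcut hdR rfl (add_sub_cancel m b).le le_rfl t₁ t₂⟩

end NextFitDecreasingHeight

/-! ### Adding small items -/

section Fillable

variable {ι : Type u} [DecidableEq ι] {wd ht : ι → ℝ} {ε u w h c c' c₁ c₂ : ℝ} {k k₁ k₂ : ℕ}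
  {S S₁ S₂ : Finset ι}

/-- The items of `S` can be packed into at most `k` containers of a `w × h` piece together with any
set of items of sides at most `u` and total area at most `c`, up to fewer than `k` of these. A
negative capacity counts as `0`. -/
def Fillable (wd ht : ι → ℝ) (ε u w h : ℝ) (S : Finset ι) (c : ℝ) (k : ℕ) : Prop :=
  ∀ Q : Finset ι, Disjoint S Q → (∀ i ∈ Q, wd i ≤ u ∧ ht i ≤ u) → totalArea wd ht Q ≤ max 0 c →
    ∃ Q' ⊆ Q, (Q \ Q').card < k ∧ GuillotineTree (ContainerLeaf wd ht ε) w h k (S ∪ Q')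

namespace Fillable

lemma mono (f : Fillable wd ht ε u w h S c k) (hc : c' ≤ c) : Fillable wd ht ε u w h S c' k :=
  fun Q hSQ hQ hQc => f Q hSQ hQ (hQc.trans (max_le_max_left 0 hc))

lemma swap (f : Fillable wd ht ε u w h S c k) : Fillable ht wd ε u h w S c k := by
  intro Q hSQ hQ hQc
  obtain ⟨Q', hQ', hcard, t⟩ := f Q hSQ (fun i hi => (hQ i hi).symm) (totalArea_swap.trans_le hQc)
  exact ⟨Q', hQ', hcard, t.swap fun _ _ _ => ContainerLeaf.swap⟩

lemma vcut {w₁ w₂ : ℝ} (hd : Disjoint S₁ S₂) (hw : w₁ + w₂ ≤ w)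
    (f₁ : Fillable wd ht ε u w₁ h S₁ c₁ k₁) (f₂ : Fillable wd ht ε u w₂ h S₂ c₂ k₂) :
    Fillable wd ht ε u w h (S₁ ∪ S₂) (c₁ + c₂) (k₁ + k₂) := by
  intro Q hSQ hQ hQc
  rw [Finset.disjoint_union_left] at hSQ
  have hmax : max 0 (c₁ + c₂) ≤ max 0 c₁ + max 0 c₂ :=
    max_le (by positivity) (add_le_add (le_max_right _ _) (le_max_right _ _))
  obtain ⟨P, D, R, -, hPR, -, rfl, hD, hP, hR⟩ :=
    exists_split_of_sum_le_add (fun i => wd i * ht i) Q (le_max_left 0 c₁) (le_max_left 0 c₂)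
      (hQc.trans hmax)
  have hPQ : P ⊆ P ∪ D ∪ R := Finset.subset_union_left.trans Finset.subset_union_left
  have hRQ : R ⊆ P ∪ D ∪ R := Finset.subset_union_right
  obtain ⟨P', hP', hcardP, tP⟩ := f₁ P (hSQ.1.mono_right hPQ) (fun i hi => hQ i (hPQ hi)) hP
  obtain ⟨R', hR', hcardR, tR⟩ := f₂ R (hSQ.2.mono_right hRQ) (fun i hi => hQ i (hRQ hi)) hR
  refine ⟨P' ∪ R', Finset.union_subset (hP'.trans hPQ) (hR'.trans hRQ), ?_,
    .vcut ?_ (Finset.union_union_union_comm ..) hw le_rfl tP tR⟩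
  · have hPD : ((P ∪ D) \ P').card ≤ (P \ P').card + D.card := by
      simpa using card_union_sdiff_union_le P D P' ∅
    have := card_union_sdiff_union_le (P ∪ D) R P' R'
    omega
  · rw [Finset.disjoint_union_left, Finset.disjoint_union_right, Finset.disjoint_union_right]
    exact ⟨⟨hd, hSQ.1.mono_right (hR'.trans hRQ)⟩, (hSQ.2.mono_right (hP'.trans hPQ)).symm,
      hPR.mono hP' hR'⟩

lemma hcut {h₁ h₂ : ℝ} (hd : Disjoint S₁ S₂) (hh : h₁ + h₂ ≤ h)
    (f₁ : Fillable wd ht ε u w h₁ S₁ c₁ k₁) (f₂ : Fillable wd ht ε u w h₂ S₂ c₂ k₂) :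
    Fillable wd ht ε u w h (S₁ ∪ S₂) (c₁ + c₂) (k₁ + k₂) :=
  (f₁.swap.vcut hd hh f₂.swap).swap

end Fillable

lemma Stacked.fillable_zero (hwd : ∀ i, 0 < wd i) (hht : ∀ i, 0 < ht i) (hw : 0 ≤ w) (hh : 0 ≤ h)
    (hS : Stacked wd ht w h S) : Fillable wd ht ε u w h S 0 1 := by
  intro Q _ _ hQc
  rw [eq_empty_of_totalArea_nonpos hwd hht (hQc.trans_eq (max_self 0))]
  exact ⟨∅, by simp, by simp, .leaf hw hh le_rfl (Or.inl (by simpa using hS))⟩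

lemma fillable_empty (hwd : ∀ i, 0 < wd i) (hht : ∀ i, 0 < ht i) (hε : 0 < ε) (hε1 : ε ≤ 1)
    (hu : 0 ≤ u) (hw : 0 ≤ w) (hh : 0 ≤ h) (hw1 : w ≤ 1) (hh1 : h ≤ 1) :
    Fillable wd ht ε u w h ∅ (w * h - 2 * u / ε) 1 := by
  intro Q _ hQ hQc
  rcases le_or_gt (w * h - 2 * u / ε) 0 with hcap | hcap
  · have hzero : Fillable wd ht ε u w h ∅ 0 1 :=
      Stacked.fillable_zero hwd hht hw hh (Or.inl (by simpa using hh))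
    exact hzero Q (Finset.disjoint_empty_left Q) hQ
      (hQc.trans_eq (by rw [max_eq_left hcap, max_self]))
  rw [max_eq_right hcap.le] at hQc
  have hu0 : 0 ≤ u / ε := by positivity
  have huε : u ≤ u / ε := by rw [le_div_iff₀ hε]; nlinarith
  rw [mul_div_assoc] at hcap hQc
  have hwε : u / ε < w := by nlinarith
  have hhε : u / ε < h := by nlinarith
  refine ⟨Q, le_rfl, by simp, .leaf hw hh le_rfl (Or.inr ⟨?_, fun i hi => ?_⟩)⟩
  · rw [Finset.empty_union]
    exact exists_tree_of_totalArea_le (fun i => (hwd i).le) (fun i => (hht i).le) hu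
      (huε.trans_lt hwε) hu (by linarith) (fun i hi => (hQ i hi).1) (fun i hi => (hQ i hi).2)
      (hQc.trans (by nlinarith))
  · rw [Finset.empty_union] at hi
    rw [div_lt_iff₀' hε] at hwε hhε
    exact ⟨(hQ i hi).1.trans hwε.le, (hQ i hi).2.trans hhε.le⟩

lemma fillable_strip (hwd : ∀ i, 0 < wd i) (hht : ∀ i, 0 < ht i) (hε : 0 < ε) (hε1 : ε ≤ 1)
    (hu : 0 ≤ u) {c : ℝ} (hc : 0 ≤ c) (hcw : c ≤ w) (hw1 : w ≤ 1) (hS : ∀ i ∈ S, wd i ≤ c)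
    (hsum : ∑ i ∈ S, ht i ≤ 1) :
    Fillable wd ht ε u w (∑ i ∈ S, ht i) S ((w - c) * ∑ i ∈ S, ht i - 2 * u / ε) 2 := by
  have h0 : 0 ≤ ∑ i ∈ S, ht i := Finset.sum_nonneg fun i _ => (hht i).le
  have left : Fillable wd ht ε u c (∑ i ∈ S, ht i) S 0 1 :=
    Stacked.fillable_zero hwd hht hc h0 (Or.inl ⟨hS, le_rfl⟩)
  have right : Fillable wd ht ε u (w - c) (∑ i ∈ S, ht i) ∅ _ 1 :=
    fillable_empty hwd hht hε hε1 hu (by linarith) h0 (by linarith) hsum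
  simpa using left.vcut (w := w) (Finset.disjoint_empty_right S) (by linarith) right

/-- A pile sorted by width is covered by a staircase with steps of length `w / K`; the rest of the
box is free. -/
lemma fillable_staircase (hwd : ∀ i, 0 < wd i) (hht : ∀ i, 0 < ht i) (hε : 0 < ε) (hε1 : ε ≤ 1)
    (hu : 0 ≤ u) (hw : 0 ≤ w) (hw1 : w ≤ 1) {K m : ℕ} (hmK : m ≤ K) (hh1 : h ≤ 1)
    (hS : ∀ i ∈ S, wd i ≤ m * (w / K)) (hsum : ∑ i ∈ S, ht i ≤ h) :
    Fillable wd ht ε u w h S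
      (w * h - totalArea wd ht S - w / K * ∑ i ∈ S, ht i - (m + 1) * (2 * u / ε)) (2 * m + 1) := by
  have sum_nonneg (T : Finset ι) : 0 ≤ ∑ i ∈ T, ht i := Finset.sum_nonneg fun i _ => (hht i).le
  induction m generalizing S h with
  | zero =>
    obtain rfl : S = ∅ := Finset.eq_empty_of_forall_notMem fun i hi =>
      ((hS i hi).trans_eq (by simp)).not_gt (hwd i)
    exact (fillable_empty hwd hht hε hε1 hu hw (by simpa using hsum) hw1 hh1).mono (by
      simp [totalArea])
  | succ m ih =>
    set A := S.filter fun i => ¬ wd i ≤ m * (w / K) with hA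
    set B := S.filter fun i => wd i ≤ m * (w / K) with hB
    have hd : Disjoint A B := (Finset.disjoint_filter_filter_not S S _).symm
    have hAB : A ∪ B = S := (Finset.union_comm A B).trans (Finset.filter_union_filter_not_eq _ S)
    have hsumS : ∑ i ∈ S, ht i = ∑ i ∈ A, ht i + ∑ i ∈ B, ht i := by
      rw [← hAB, Finset.sum_union hd]
    have hareaS : totalArea wd ht S = totalArea wd ht A + totalArea wd ht B := by
      rw [← hAB, totalArea_union hd]
    set b := ∑ i ∈ A, ht i with hb
    have hb0 : 0 ≤ b := sum_nonneg A
    have hB0 := sum_nonneg B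
    set s := w / K
    have hs0 : 0 ≤ s := by positivity
    have hstep : (m + 1) * s ≤ w := by
      have hK : (m + 1 : ℝ) ≤ K := by exact_mod_cast hmK
      calc (m + 1) * s ≤ K * s := mul_le_mul_of_nonneg_right hK hs0
        _ = w := mul_div_cancel₀ w (Nat.cast_ne_zero.2 (by omega))
    have fA : Fillable wd ht ε u w b A _ 2 :=
      fillable_strip hwd hht hε hε1 hu (by positivity) hstep hw1
        (fun i hi => by simpa using hS i (Finset.mem_filter.1 hi).1) (by linarith)
    have fB := ih (S := B) (h := h - b) (by omega) (by linarith)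
      (fun i hi => (Finset.mem_filter.1 hi).2) (by linarith)
    have f := fA.hcut (h := h) hd (by linarith) fB
    rw [hAB, show 2 + (2 * m + 1) = 2 * (m + 1) + 1 by omega] at f
    refine f.mono ?_
    have hareaA : m * s * b ≤ totalArea wd ht A := by
      rw [hb, Finset.mul_sum]
      exact Finset.sum_le_sum fun i hi =>
        mul_le_mul_of_nonneg_right (not_le.1 (Finset.mem_filter.1 hi).2).le (hht i).le
    rw [hareaS, hsumS]
    push_cast
    linarith

lemma fillable_pile (hwd : ∀ i, 0 < wd i) (hht : ∀ i, 0 < ht i) (hε : 0 < ε) (hε1 : ε ≤ 1)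
    (hu : 0 ≤ u) {K : ℕ} (hK : 0 < K) (hw : 0 ≤ w) (hw1 : w ≤ 1) (hh1 : h ≤ 1)
    (hS : ∀ i ∈ S, wd i ≤ w) (hsum : ∑ i ∈ S, ht i ≤ h) :
    Fillable wd ht ε u w h S
      ((1 - 1 / K) * (w * h) - totalArea wd ht S - (K + 1) * (2 * u / ε)) (2 * K + 1) := by
  refine (fillable_staircase hwd hht hε hε1 hu hw hw1 (le_refl K) hh1 (fun i hi => ?_) hsum).mono ?_
  · rw [mul_div_cancel₀ w (by positivity)]
    exact hS i hi
  · have : w / K * ∑ i ∈ S, ht i ≤ w / K * h := mul_le_mul_of_nonneg_left hsum (by positivity)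
    have : w / K * h = 1 / K * (w * h) := by ring
    linarith

lemma Stacked.fillable (hwd : ∀ i, 0 < wd i) (hht : ∀ i, 0 < ht i) (hε : 0 < ε) (hε1 : ε ≤ 1)
    (hu : 0 ≤ u) {K : ℕ} (hK : 0 < K) (hw : 0 ≤ w) (hh : 0 ≤ h) (hw1 : w ≤ 1) (hh1 : h ≤ 1)
    (hS : Stacked wd ht w h S) :
    Fillable wd ht ε u w h S
      ((1 - 1 / K) * (w * h) - totalArea wd ht S - (K + 1) * (2 * u / ε)) (2 * K + 1) := by
  rcases hS with ⟨hfit, hsum⟩ | ⟨hfit, hsum⟩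
  · exact fillable_pile hwd hht hε hε1 hu hK hw hw1 hh1 hfit hsum
  · rw [totalArea_swap, mul_comm w h]
    exact (fillable_pile hht hwd hε hε1 hu hK hh hh1 hw1 hfit hsum).swap

lemma GuillotineTree.exists_fillable (hwd : ∀ i, 0 < wd i) (hht : ∀ i, 0 < ht i) (hε : 0 < ε)
    (hε1 : ε ≤ 1) (hu : 0 ≤ u) {K : ℕ} (hK : 0 < K) {w' h' : ℝ}
    (t : GuillotineTree (Stacked wd ht) w h k S) (hw : w ≤ w') (hh : h ≤ h') (hw1 : w' ≤ 1)
    (hh1 : h' ≤ 1) :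
    ∃ k' ≤ k * (2 * K + 1), Fillable wd ht ε u w' h' S
      ((1 - 1 / K) * (w' * h') - totalArea wd ht S - k * ((K + 1) * (2 * u / ε))) k' := by
  set c := (K + 1 : ℝ) * (2 * u / ε)
  have hc : 0 ≤ c := by positivity
  induction t generalizing w' h' with
  | leaf hw0 hh0 hk hl =>
    refine ⟨2 * K + 1, Nat.le_mul_of_pos_left _ hk, ((hl.mono hw hh).fillable hwd hht hε hε1 hu hK
      (hw0.trans hw) (hh0.trans hh) hw1 hh1).mono (sub_le_sub_left ?_ _)⟩
    exact le_mul_of_one_le_left hc (mod_cast hk)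
  | @vcut _ _ w₁ _ _ _ _ _ _ _ hd hS hw12 hk t₁ t₂ ih₁ ih₂ =>
    have := t₁.nonneg
    have := t₂.nonneg
    obtain ⟨k₁', hk₁, f₁⟩ := ih₁ le_rfl hh (by linarith) hh1
    obtain ⟨k₂', hk₂, f₂⟩ := ih₂ (w' := w' - w₁) (by linarith) hh (by linarith) hh1
    refine ⟨k₁' + k₂', (add_le_add hk₁ hk₂).trans ?_, ?_⟩
    · exact (add_mul _ _ _).symm.trans_le (Nat.mul_le_mul_right _ hk)
    · rw [hS]
      refine (f₁.vcut hd (by linarith) f₂).mono ?_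
      have : (_ : ℝ) * c ≤ _ := mul_le_mul_of_nonneg_right (Nat.cast_le.2 hk) hc
      rw [totalArea_union hd]
      push_cast at this
      linarith
  | @hcut _ _ h₁ _ _ _ _ _ _ _ hd hS hh12 hk t₁ t₂ ih₁ ih₂ =>
    have := t₁.nonneg
    have := t₂.nonneg
    obtain ⟨k₁', hk₁, f₁⟩ := ih₁ hw le_rfl hw1 (by linarith)
    obtain ⟨k₂', hk₂, f₂⟩ := ih₂ (h' := h' - h₁) hw (by linarith) hw1 (by linarith)
    refine ⟨k₁' + k₂', (add_le_add hk₁ hk₂).trans ?_, ?_⟩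
    · exact (add_mul _ _ _).symm.trans_le (Nat.mul_le_mul_right _ hk)
    · rw [hS]
      refine (f₁.hcut hd (by linarith) f₂).mono ?_
      have : (_ : ℝ) * c ≤ _ := mul_le_mul_of_nonneg_right (Nat.cast_le.2 hk) hc
      rw [totalArea_union hd]
      push_cast at this
      linarith

end Fillable

/-! ### Realising position-free packings by placements -/

namespace Rect

variable {a b c : Rect}

/-- The mirror image of a rectangle in the diagonal; it lets every statement about vertical cuts be
reused for horizontal ones. -/
def transpose (r : Rect) : Rect := ⟨r.y1, r.y2, r.x1, r.x2⟩

lemma SubRect.refl (r : Rect) : r.SubRect r := ⟨le_rfl, le_rfl, le_rfl, le_rfl⟩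

lemma SubRect.trans (hab : a.SubRect b) (hbc : b.SubRect c) : a.SubRect c :=
  ⟨hbc.1.trans hab.1, hab.2.1.trans hbc.2.1, hbc.2.2.1.trans hab.2.2.1, hab.2.2.2.trans hbc.2.2.2⟩

lemma SubRect.transpose (hab : a.SubRect b) : a.transpose.SubRect b.transpose :=
  ⟨hab.2.2.1, hab.2.2.2, hab.1, hab.2.1⟩

lemma SubRect.toSet_subset (hab : a.SubRect b) : a.toSet ⊆ b.toSet := fun _ hp =>
  ⟨hab.1.trans_lt hp.1, hp.2.1.trans_le hab.2.1, hab.2.2.1.trans_lt hp.2.2.1,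
    hp.2.2.2.trans_le hab.2.2.2⟩

lemma disjoint_toSet_transpose (hab : Disjoint a.toSet b.toSet) :
    Disjoint a.transpose.toSet b.transpose.toSet := by
  rw [Set.disjoint_left] at hab ⊢
  rintro p ⟨hax1, hax2, hay1, hay2⟩ ⟨hbx1, hbx2, hby1, hby2⟩
  exact hab (a := p.swap) ⟨hay1, hay2, hax1, hax2⟩ ⟨hby1, hby2, hbx1, hbx2⟩

lemma disjoint_toSet_of_x2_le_x1 (hab : a.x2 ≤ b.x1) : Disjoint a.toSet b.toSet :=
  Set.disjoint_left.2 fun _ hpa hpb => (hpa.2.1.trans_le hab).not_gt hpb.1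

lemma disjoint_toSet_of_y2_le_y1 (hab : a.y2 ≤ b.y1) : Disjoint a.toSet b.toSet :=
  Set.disjoint_left.2 fun _ hpa hpb => (hpa.2.2.2.trans_le hab).not_gt hpb.2.2.1

end Rect

section Placement

variable {ι : Type u} {wd ht : ι → ℝ} {place place' : ι → Rect} {P P' P₁ P₂ : Rect}
  {S S₁ S₂ : Finset ι}

namespace GuillotineSep

lemma transpose (g : GuillotineSep place P S) :
    GuillotineSep (fun i => (place i).transpose) P.transpose S := by
  induction g with
  | base P S hS => exact .base _ _ hS
  | vcut P S c h₁ h₂ hcross _ _ ihL ihR => exact .hcut _ _ c h₁ h₂ hcross ihL ihR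
  | hcut P S c h₁ h₂ hcross _ _ ihB ihT => exact .vcut _ _ c h₁ h₂ hcross ihB ihT

lemma mono (g : GuillotineSep place P S) (hP : P.SubRect P') : GuillotineSep place P' S := by
  induction g generalizing P' with
  | base P S hS => exact .base _ _ hS
  | vcut P S c h₁ h₂ hcross _ _ ihL ihR =>
    obtain ⟨hx1, hx2, hy⟩ := hP
    exact .vcut _ _ c (hx1.trans_lt h₁) (h₂.trans_le hx2) hcross (ihL ⟨hx1, le_rfl, hy⟩)
      (ihR ⟨le_rfl, hx2, hy⟩)
  | hcut P S c h₁ h₂ hcross _ _ ihB ihT =>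
    obtain ⟨hx1, hx2, hy1, hy2⟩ := hP
    exact .hcut _ _ c (hy1.trans_lt h₁) (h₂.trans_le hy2) hcross (ihB ⟨hx1, hx2, hy1, le_rfl⟩)
      (ihT ⟨hx1, hx2, le_rfl, hy2⟩)

lemma congr (g : GuillotineSep place P S) (heq : ∀ i ∈ S, place' i = place i) :
    GuillotineSep place' P S := by
  induction g with
  | base P S hS => exact .base _ _ hS
  | vcut P S c h₁ h₂ hcross _ _ ihL ihR =>
    refine .vcut _ _ c h₁ h₂ (fun i hi => by rw [heq i hi]; exact hcross i hi) ?_ ?_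
    · rw [Finset.filter_congr (q := fun i => (place i).x2 ≤ c) fun i hi => by rw [heq i hi]]
      exact ihL fun i hi => heq i (Finset.mem_of_mem_filter i hi)
    · rw [Finset.filter_congr (q := fun i => ¬ (place i).x2 ≤ c) fun i hi => by rw [heq i hi]]
      exact ihR fun i hi => heq i (Finset.mem_of_mem_filter i hi)
  | hcut P S c h₁ h₂ hcross _ _ ihB ihT =>
    refine .hcut _ _ c h₁ h₂ (fun i hi => by rw [heq i hi]; exact hcross i hi) ?_ ?_
    · rw [Finset.filter_congr (q := fun i => (place i).y2 ≤ c) fun i hi => by rw [heq i hi]]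
      exact ihB fun i hi => heq i (Finset.mem_of_mem_filter i hi)
    · rw [Finset.filter_congr (q := fun i => ¬ (place i).y2 ≤ c) fun i hi => by rw [heq i hi]]
      exact ihT fun i hi => heq i (Finset.mem_of_mem_filter i hi)

end GuillotineSep

namespace IsPacking

lemma transpose (g : IsPacking wd ht S place P) :
    IsPacking ht wd S (fun i => (place i).transpose) P.transpose :=
  ⟨g.hh, g.hw, fun i hi => (g.hin i hi).transpose,
    fun i hi j hj hij => Rect.disjoint_toSet_transpose (g.hdisj i hi j hj hij)⟩

lemma mono (g : IsPacking wd ht S place P) (hP : P.SubRect P') : IsPacking wd ht S place P' :=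
  ⟨g.hw, g.hh, fun i hi => (g.hin i hi).trans hP, g.hdisj⟩

lemma congr (g : IsPacking wd ht S place P) (heq : ∀ i ∈ S, place' i = place i) :
    IsPacking wd ht S place' P := by
  refine ⟨fun i hi => ?_, fun i hi => ?_, fun i hi => ?_, fun i hi j hj hij => ?_⟩
  · rw [heq i hi, g.hw i hi]
  · rw [heq i hi, g.hh i hi]
  · rw [heq i hi]
    exact g.hin i hi
  · rw [heq i hi, heq j hj]
    exact g.hdisj i hi j hj hij

lemma x1_lt_x2 (hwd : ∀ i, 0 < wd i) (g : IsPacking wd ht S place P) {i : ι} (hi : i ∈ S) :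
    (place i).x1 < (place i).x2 :=
  sub_pos.1 ((hwd i).trans_eq (g.hw i hi).symm)

variable [DecidableEq ι]

lemma union (g₁ : IsPacking wd ht S₁ place P₁) (g₂ : IsPacking wd ht S₂ place P₂)
    (hP₁ : P₁.SubRect P) (hP₂ : P₂.SubRect P) (hP : Disjoint P₁.toSet P₂.toSet) :
    IsPacking wd ht (S₁ ∪ S₂) place P := by
  have hdisj {i j : ι} (hi : i ∈ S₁) (hj : j ∈ S₂) : Disjoint (place i).toSet (place j).toSet :=
    hP.mono (g₁.hin i hi).toSet_subset (g₂.hin j hj).toSet_subset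
  refine ⟨fun i hi => ?_, fun i hi => ?_, fun i hi => ?_, fun i hi j hj hij => ?_⟩
  · exact (Finset.mem_union.1 hi).elim (g₁.hw i) (g₂.hw i)
  · exact (Finset.mem_union.1 hi).elim (g₁.hh i) (g₂.hh i)
  · exact (Finset.mem_union.1 hi).elim (fun hi => (g₁.hin i hi).trans hP₁)
      fun hi => (g₂.hin i hi).trans hP₂
  · rcases Finset.mem_union.1 hi with hi | hi <;> rcases Finset.mem_union.1 hj with hj | hj
    exacts [g₁.hdisj i hi j hj hij, hdisj hi hj, (hdisj hj hi).symm, g₂.hdisj i hi j hj hij]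

end IsPacking

namespace GuillotinePacking

lemma transpose (g : GuillotinePacking wd ht S place P) :
    GuillotinePacking ht wd S (fun i => (place i).transpose) P.transpose :=
  ⟨g.1.transpose, g.2.transpose⟩

lemma mono (g : GuillotinePacking wd ht S place P) (hP : P.SubRect P') :
    GuillotinePacking wd ht S place P' :=
  ⟨g.1.mono hP, g.2.mono hP⟩

lemma congr (g : GuillotinePacking wd ht S place P) (heq : ∀ i ∈ S, place' i = place i) :
    GuillotinePacking wd ht S place' P :=
  ⟨g.1.congr heq, g.2.congr heq⟩

lemma empty : GuillotinePacking wd ht ∅ place P :=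
  ⟨⟨by simp, by simp, by simp, by simp⟩, .base _ _ (by simp)⟩

lemma singleton {x y : ℝ} {i : ι} (hi : place i = ⟨x, x + wd i, y, y + ht i⟩)
    (hP : Rect.SubRect ⟨x, x + wd i, y, y + ht i⟩ P) : GuillotinePacking wd ht {i} place P :=
  ⟨⟨by simp [hi, Rect.width], by simp [hi, Rect.height], by simpa [hi] using hP, by simp⟩,
    .base _ _ (by simp)⟩

variable [DecidableEq ι]

lemma vcut (hwd : ∀ i, 0 < wd i) {x1 x2 y1 y2 c : ℝ} (hx1 : x1 ≤ c) (hx2 : c ≤ x2)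
    (g₁ : GuillotinePacking wd ht S₁ place ⟨x1, c, y1, y2⟩)
    (g₂ : GuillotinePacking wd ht S₂ place ⟨c, x2, y1, y2⟩) :
    GuillotinePacking wd ht (S₁ ∪ S₂) place ⟨x1, x2, y1, y2⟩ := by
  have hP₁ : Rect.SubRect ⟨x1, c, y1, y2⟩ ⟨x1, x2, y1, y2⟩ := ⟨le_rfl, hx2, le_rfl, le_rfl⟩
  have hP₂ : Rect.SubRect ⟨c, x2, y1, y2⟩ ⟨x1, x2, y1, y2⟩ := ⟨hx1, le_rfl, le_rfl, le_rfl⟩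
  rcases S₁.eq_empty_or_nonempty with rfl | ⟨a, ha⟩
  · rw [Finset.empty_union]
    exact g₂.mono hP₂
  rcases S₂.eq_empty_or_nonempty with rfl | ⟨b, hb⟩
  · rw [Finset.union_empty]
    exact g₁.mono hP₁
  have hleft (i : ι) (hi : i ∈ S₁) : (place i).x2 ≤ c := (g₁.1.hin i hi).2.1
  have hright (i : ι) (hi : i ∈ S₂) : c ≤ (place i).x1 := (g₂.1.hin i hi).1
  have hright' (i : ι) (hi : i ∈ S₂) : ¬ (place i).x2 ≤ c :=
    ((hright i hi).trans_lt (g₂.1.x1_lt_x2 hwd hi)).not_ge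
  have hfilter₁ : (S₁ ∪ S₂).filter (fun i => (place i).x2 ≤ c) = S₁ := by
    rw [Finset.filter_union, Finset.filter_true_of_mem hleft, Finset.filter_false_of_mem hright',
      Finset.union_empty]
  have hfilter₂ : (S₁ ∪ S₂).filter (fun i => ¬ (place i).x2 ≤ c) = S₂ := by
    rw [Finset.filter_union, Finset.filter_true_of_mem hright', Finset.filter_false_of_mem
      (by simpa using hleft), Finset.empty_union]
  refine ⟨g₁.1.union g₂.1 hP₁ hP₂ (Rect.disjoint_toSet_of_x2_le_x1 le_rfl), .vcut _ _ c ?_ ?_ ?_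
    (by rw [hfilter₁]; exact g₁.2) (by rw [hfilter₂]; exact g₂.2)⟩
  · exact (g₁.1.hin a ha).1.trans_lt ((g₁.1.x1_lt_x2 hwd ha).trans_le (hleft a ha))
  · exact ((hright b hb).trans_lt (g₂.1.x1_lt_x2 hwd hb)).trans_le (g₂.1.hin b hb).2.1
  · exact fun i hi => (Finset.mem_union.1 hi).imp (hleft i) (hright i)

lemma hcut (hht : ∀ i, 0 < ht i) {x1 x2 y1 y2 c : ℝ} (hy1 : y1 ≤ c) (hy2 : c ≤ y2)
    (g₁ : GuillotinePacking wd ht S₁ place ⟨x1, x2, y1, c⟩)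
    (g₂ : GuillotinePacking wd ht S₂ place ⟨x1, x2, c, y2⟩) :
    GuillotinePacking wd ht (S₁ ∪ S₂) place ⟨x1, x2, y1, y2⟩ :=
  (vcut hht hy1 hy2 g₁.transpose g₂.transpose).transpose

end GuillotinePacking

variable {w h : ℝ}

lemma GuillotineTree.exists_guillotinePacking [DecidableEq ι] {k : ℕ}
    (hwd : ∀ i, 0 < wd i) (hht : ∀ i, 0 < ht i)
    (t : GuillotineTree (SingleItem wd ht) w h k S) (x y : ℝ) :
    ∃ place, GuillotinePacking wd ht S place ⟨x, x + w, y, y + h⟩ := by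
  induction t generalizing x y with
  | leaf _ _ _ hl =>
    refine ⟨fun i => ⟨x, x + wd i, y, y + ht i⟩, ?_⟩
    rcases eq_empty_or_singleton_of_card_le_one hl.1 with rfl | ⟨i, rfl⟩
    · exact .empty
    · obtain ⟨hiw, hih⟩ := hl.2 i (Finset.mem_singleton_self i)
      exact .singleton rfl ⟨le_rfl, by simpa using hiw, le_rfl, by simpa using hih⟩
  | @vcut _ _ w₁ _ _ _ _ _ S₁ _ hd hS hw _ t₁ t₂ ih₁ ih₂ =>
    have hw₁ := t₁.nonneg.1
    have hw₂ := t₂.nonneg.1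
    obtain ⟨p₁, g₁⟩ := ih₁ x y
    obtain ⟨p₂, g₂⟩ := ih₂ (x + w₁) y
    refine ⟨S₁.piecewise p₁ p₂, ?_⟩
    rw [hS]
    exact .vcut hwd (by linarith) (by linarith)
      (g₁.congr fun i hi => S₁.piecewise_eq_of_mem _ _ hi)
      ((g₂.congr fun i hi => S₁.piecewise_eq_of_notMem _ _ (Finset.disjoint_right.1 hd hi)).mono
        ⟨le_rfl, by dsimp only; linarith, le_rfl, le_rfl⟩)
  | @hcut _ _ h₁ _ _ _ _ _ S₁ _ hd hS hh _ t₁ t₂ ih₁ ih₂ =>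
    have hh₁ := t₁.nonneg.2
    have hh₂ := t₂.nonneg.2
    obtain ⟨p₁, g₁⟩ := ih₁ x y
    obtain ⟨p₂, g₂⟩ := ih₂ x (y + h₁)
    refine ⟨S₁.piecewise p₁ p₂, ?_⟩
    rw [hS]
    exact .hcut hht (by linarith) (by linarith)
      (g₁.congr fun i hi => S₁.piecewise_eq_of_mem _ _ hi)
      ((g₂.congr fun i hi => S₁.piecewise_eq_of_notMem _ _ (Finset.disjoint_right.1 hd hi)).mono
        ⟨le_rfl, le_rfl, le_rfl, by dsimp only; linarith⟩)

lemma exists_pile_packing (hht : ∀ i, 0 < ht i) (x y : ℝ) (hS : ∀ i ∈ S, wd i ≤ w)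
    (hsum : ∑ i ∈ S, ht i ≤ h) :
    ∃ place, GuillotinePacking wd ht S place ⟨x, x + w, y, y + h⟩ ∧
      ∀ i ∈ S, ∀ j ∈ S, i ≠ j → (place i).y2 ≤ (place j).y1 ∨ (place j).y2 ≤ (place i).y1 := by
  classical
  induction S using Finset.induction_on generalizing y h with
  | empty => exact ⟨fun _ => ⟨0, 0, 0, 0⟩, .empty, by simp⟩
  | insert a S ha ih =>
    rw [Finset.sum_insert ha] at hsum
    have hS0 : 0 ≤ ∑ i ∈ S, ht i := Finset.sum_nonneg fun i _ => (hht i).le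
    obtain ⟨p, g, hsep⟩ := ih (y + ht a) (h := h - ht a) (fun i hi => hS i (by simp [hi]))
      (by linarith)
    rw [add_add_sub_cancel] at g
    set q := Function.update p a ⟨x, x + wd a, y, y + ht a⟩
    have hqa : q a = ⟨x, x + wd a, y, y + ht a⟩ := Function.update_self ..
    have hqS (i : ι) (hi : i ∈ S) : q i = p i :=
      Function.update_of_ne (ne_of_mem_of_not_mem hi ha) ..
    refine ⟨q, ?_, fun i hi j hj hij => ?_⟩
    · rw [Finset.insert_eq]
      refine .hcut hht (by linarith [hht a]) (by linarith) (.singleton hqa ?_) (g.congr hqS)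
      exact ⟨le_rfl, by simpa using hS a (by simp), le_rfl, le_rfl⟩
    · rw [Finset.mem_insert] at hi hj
      rcases hi with rfl | hi <;> rcases hj with rfl | hj
      · exact absurd rfl hij
      · rw [hqa, hqS j hj]
        exact Or.inl (g.1.hin j hj).2.2.1
      · rw [hqa, hqS i hi]
        exact Or.inr (g.1.hin i hi).2.2.1
      · rw [hqS i hi, hqS j hj]
        exact hsep i hi j hj hij

end Placement

section ContainerPacking

/-- Whether two distinct items may share a container with the given label. -/
def CLabel.Compatible : CLabel → Rect → Rect → Prop
  | .large, _, _ => False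
  | .horizontal, r, s => r.y2 ≤ s.y1 ∨ s.y2 ≤ r.y1
  | .vertical, r, s => r.x2 ≤ s.x1 ∨ s.x2 ≤ r.x1
  | .area, _, _ => True

variable {ι : Type u} {κ κ₁ κ₂ : Type} {wd ht : ι → ℝ} {ε w h : ℝ} {k : ℕ} {P P₁ P₂ : Rect}
  {S S₁ S₂ : Finset ι} {place place' : ι → Rect}

/-- A guillotine-separable container packing inside a piece `P`, with containers indexed by an
arbitrary type instead of an initial segment of `ℕ`, so that two packings are merged by a sum
type. -/
structure ContainerPacking (wd ht : ι → ℝ) (ε : ℝ) (P : Rect) (S : Finset ι) (place : ι → Rect)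
    (cont : κ → Rect) (lab : κ → CLabel) (asg : ι → κ) : Prop where
  packing : GuillotinePacking wd ht S place P
  cont_subRect : ∀ j, (cont j).SubRect P
  cont_disjoint : Pairwise fun j j' => Disjoint (cont j).toSet (cont j').toSet
  place_subRect : ∀ i ∈ S, (place i).SubRect (cont (asg i))
  compatible : ∀ i ∈ S, ∀ i' ∈ S, asg i = asg i' → i ≠ i' →
    (lab (asg i)).Compatible (place i) (place i')
  small : ∀ i ∈ S, lab (asg i) = .area →
    (place i).width ≤ ε * (cont (asg i)).width ∧ (place i).height ≤ ε * (cont (asg i)).height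

namespace ContainerPacking

variable {cont : κ → Rect} {lab : κ → CLabel} {asg : ι → κ} {cont₁ : κ₁ → Rect}
  {lab₁ : κ₁ → CLabel} {asg₁ : ι → κ₁} {cont₂ : κ₂ → Rect} {lab₂ : κ₂ → CLabel} {asg₂ : ι → κ₂}

lemma single (l : CLabel) (g : GuillotinePacking wd ht S place P)
    (hl : ∀ i ∈ S, ∀ i' ∈ S, i ≠ i' → l.Compatible (place i) (place i'))
    (hsmall : l = .area → ∀ i ∈ S, wd i ≤ ε * P.width ∧ ht i ≤ ε * P.height) :
    ContainerPacking wd ht ε P S place (fun _ : Unit => P) (fun _ => l) fun _ => () where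
  packing := g
  cont_subRect _ := .refl P
  cont_disjoint := Subsingleton.pairwise
  place_subRect := g.1.hin
  compatible i hi i' hi' _ := hl i hi i' hi'
  small i hi h := by
    rw [g.1.hw i hi, g.1.hh i hi]
    exact hsmall h i hi

lemma congr (c : ContainerPacking wd ht ε P S place cont lab asg)
    (heq : ∀ i ∈ S, place' i = place i) : ContainerPacking wd ht ε P S place' cont lab asg where
  packing := c.packing.congr heq
  cont_subRect := c.cont_subRect
  cont_disjoint := c.cont_disjoint
  place_subRect i hi := by
    rw [heq i hi]
    exact c.place_subRect i hi
  compatible i hi i' hi' := by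
    rw [heq i hi, heq i' hi']
    exact c.compatible i hi i' hi'
  small i hi := by
    rw [heq i hi]
    exact c.small i hi

lemma containerLabelOK
    (c : ContainerPacking wd ht ε P S place cont lab asg) (e : κ ≃ Fin k) {cont' : ℕ → Rect}
    {lab' : ℕ → CLabel} (hcont : ∀ j, cont' (e j) = cont j) (hlab : ∀ j, lab' (e j) = lab j) :
    ContainerLabelOK S place k cont' lab' (fun i => e (asg i)) ε := by
  have hcompatible {l : CLabel} {j : ℕ} (hj : lab' j = l) {i i' : ι} (hi : i ∈ S) (hi' : i' ∈ S)
      (hij : e (asg i) = j) (hij' : e (asg i') = j) (hne : i ≠ i') :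
      l.Compatible (place i) (place i') := by
    rw [← hj, ← hij, hlab]
    exact c.compatible i hi i' hi' (e.injective (Fin.ext (hij.trans hij'.symm))) hne
  refine ⟨fun j _ hl i hi i' hi' hij hij' => ?_, fun j _ hl i hi i' hi' => hcompatible hl hi hi',
    fun j _ hl i hi i' hi' => hcompatible hl hi hi', ?_⟩
  · by_contra hne
    exact hcompatible hl hi hi' hij hij' hne
  · rintro j - hl i hi rfl
    rw [hcont]
    exact c.small i hi ((hlab _).symm.trans hl)

variable [DecidableEq ι]

lemma merge (c₁ : ContainerPacking wd ht ε P₁ S₁ place cont₁ lab₁ asg₁)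
    (c₂ : ContainerPacking wd ht ε P₂ S₂ place cont₂ lab₂ asg₂)
    (g : GuillotinePacking wd ht (S₁ ∪ S₂) place P) (hd : Disjoint S₁ S₂)
    (hP₁ : P₁.SubRect P) (hP₂ : P₂.SubRect P) (hP : Disjoint P₁.toSet P₂.toSet) :
    ContainerPacking wd ht ε P (S₁ ∪ S₂) place (Sum.elim cont₁ cont₂) (Sum.elim lab₁ lab₂)
      (S₁.piecewise (Sum.inl ∘ asg₁) (Sum.inr ∘ asg₂)) := by
  have hasg₁ {i : ι} (hi : i ∈ S₁) :
      S₁.piecewise (Sum.inl ∘ asg₁) (Sum.inr ∘ asg₂) i = .inl (asg₁ i) :=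
    S₁.piecewise_eq_of_mem _ _ hi
  have hasg₂ {i : ι} (hi : i ∈ S₂) :
      S₁.piecewise (Sum.inl ∘ asg₁) (Sum.inr ∘ asg₂) i = .inr (asg₂ i) :=
    S₁.piecewise_eq_of_notMem _ _ (Finset.disjoint_right.1 hd hi)
  have hdisj (j₁ : κ₁) (j₂ : κ₂) : Disjoint (cont₁ j₁).toSet (cont₂ j₂).toSet :=
    hP.mono (c₁.cont_subRect j₁).toSet_subset (c₂.cont_subRect j₂).toSet_subset
  refine ⟨g, ?_, ?_, fun i hi => ?_, fun i hi i' hi' => ?_, fun i hi => ?_⟩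
  · rintro (j | j)
    exacts [(c₁.cont_subRect j).trans hP₁, (c₂.cont_subRect j).trans hP₂]
  · rintro (j | j) (j' | j') hj
    exacts [c₁.cont_disjoint (hj <| congrArg _ ·), hdisj j j', (hdisj j' j).symm,
      c₂.cont_disjoint (hj <| congrArg _ ·)]
  · rcases Finset.mem_union.1 hi with hi | hi
    · rw [hasg₁ hi]
      exact c₁.place_subRect i hi
    · rw [hasg₂ hi]
      exact c₂.place_subRect i hi
  · rcases Finset.mem_union.1 hi with hi | hi <;> rcases Finset.mem_union.1 hi' with hi' | hi'
    · rw [hasg₁ hi, hasg₁ hi']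
      exact fun heq => c₁.compatible i hi i' hi' (Sum.inl_injective heq)
    · rw [hasg₁ hi, hasg₂ hi']
      exact fun heq => absurd heq Sum.inl_ne_inr
    · rw [hasg₂ hi, hasg₁ hi']
      exact fun heq => absurd heq Sum.inr_ne_inl
    · rw [hasg₂ hi, hasg₂ hi']
      exact fun heq => c₂.compatible i hi i' hi' (Sum.inr_injective heq)
  · rcases Finset.mem_union.1 hi with hi | hi
    · rw [hasg₁ hi]
      exact c₁.small i hi
    · rw [hasg₂ hi]
      exact c₂.small i hi

end ContainerPacking

end ContainerPacking

section ContainerRealization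

variable {ι : Type u} [DecidableEq ι] {wd ht : ι → ℝ} {ε w h : ℝ} {k : ℕ} {P : Rect}
  {S : Finset ι}

/-- The placement `place` of `S` is part of a guillotine-separable container packing inside `P` with
at most `k` containers. -/
def HasContainerPacking (wd ht : ι → ℝ) (ε : ℝ) (P : Rect) (S : Finset ι) (place : ι → Rect)
    (k : ℕ) : Prop :=
  ∃ (κ : Type) (_ : Fintype κ) (cont : κ → Rect) (lab : κ → CLabel) (asg : ι → κ),
    Fintype.card κ ≤ k ∧ ContainerPacking wd ht ε P S place cont lab asg

lemma HasContainerPacking.merge {P₁ P₂ : Rect} {S₁ S₂ : Finset ι} {k₁ k₂ : ℕ}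
    {place₁ place₂ : ι → Rect} (c₁ : HasContainerPacking wd ht ε P₁ S₁ place₁ k₁)
    (c₂ : HasContainerPacking wd ht ε P₂ S₂ place₂ k₂) (hd : Disjoint S₁ S₂) (hk : k₁ + k₂ ≤ k)
    (hP₁ : P₁.SubRect P) (hP₂ : P₂.SubRect P) (hP : Disjoint P₁.toSet P₂.toSet)
    (hcut : ∀ p, GuillotinePacking wd ht S₁ p P₁ → GuillotinePacking wd ht S₂ p P₂ →
      GuillotinePacking wd ht (S₁ ∪ S₂) p P) :
    HasContainerPacking wd ht ε P (S₁ ∪ S₂) (S₁.piecewise place₁ place₂) k := by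
  obtain ⟨κ₁, _, cont₁, lab₁, asg₁, hκ₁, c₁⟩ := c₁
  obtain ⟨κ₂, _, cont₂, lab₂, asg₂, hκ₂, c₂⟩ := c₂
  have c₁' := c₁.congr (place' := S₁.piecewise place₁ place₂) fun i hi =>
    S₁.piecewise_eq_of_mem _ _ hi
  have c₂' := c₂.congr (place' := S₁.piecewise place₁ place₂) fun i hi =>
    S₁.piecewise_eq_of_notMem _ _ (Finset.disjoint_right.1 hd hi)
  exact ⟨κ₁ ⊕ κ₂, inferInstance, _, _, _, by rw [Fintype.card_sum]; omega,
    c₁'.merge c₂' (hcut _ c₁'.packing c₂'.packing) hd hP₁ hP₂ hP⟩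

lemma ContainerLeaf.exists_hasContainerPacking (hwd : ∀ i, 0 < wd i) (hht : ∀ i, 0 < ht i)
    (hS : ContainerLeaf wd ht ε w h S) (hk : 1 ≤ k) (x y : ℝ) :
    ∃ place, HasContainerPacking wd ht ε ⟨x, x + w, y, y + h⟩ S place k := by
  rcases hS with (⟨hS, hsum⟩ | ⟨hS, hsum⟩) | ⟨⟨m, t⟩, hsmall⟩
  · obtain ⟨p, g, hsep⟩ := exists_pile_packing hht x y hS hsum
    exact ⟨p, Unit, inferInstance, _, _, _, hk, .single .horizontal g hsep (by simp)⟩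
  · obtain ⟨p, g, hsep⟩ := exists_pile_packing hwd y x hS hsum
    exact ⟨_, Unit, inferInstance, _, _, _, hk, .single .vertical g.transpose hsep (by simp)⟩
  · obtain ⟨p, g⟩ := t.exists_guillotinePacking hwd hht x y
    refine ⟨p, Unit, inferInstance, _, _, _, hk,
      .single .area g (fun _ _ _ _ _ => trivial) fun _ i hi => ?_⟩
    simpa only [Rect.width, Rect.height, add_sub_cancel_left] using hsmall i hi

lemma GuillotineTree.exists_hasContainerPacking (hwd : ∀ i, 0 < wd i) (hht : ∀ i, 0 < ht i)
    (t : GuillotineTree (ContainerLeaf wd ht ε) w h k S) (x y : ℝ) :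
    ∃ place, HasContainerPacking wd ht ε ⟨x, x + w, y, y + h⟩ S place k := by
  induction t generalizing x y with
  | leaf _ _ hk hS => exact hS.exists_hasContainerPacking hwd hht hk x y
  | @vcut w h w₁ w₂ _ _ _ _ S₁ _ hd hS hw hk t₁ t₂ ih₁ ih₂ =>
    have hw₁ := t₁.nonneg.1
    have hw₂ := t₂.nonneg.1
    obtain ⟨p₁, c₁⟩ := ih₁ x y
    obtain ⟨p₂, c₂⟩ := ih₂ (x + w₁) y
    have hx : x + w₁ + w₂ ≤ x + w := by linarith
    refine ⟨S₁.piecewise p₁ p₂, hS ▸ c₁.merge c₂ hd hk ?_ ⟨by simpa, hx, le_rfl, le_rfl⟩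
      (Rect.disjoint_toSet_of_x2_le_x1 le_rfl) fun p g₁ g₂ => ?_⟩
    · exact ⟨le_rfl, by dsimp only; linarith, le_rfl, le_rfl⟩
    · exact .vcut hwd (by linarith) (by linarith) g₁ (g₂.mono ⟨le_rfl, hx, le_rfl, le_rfl⟩)
  | @hcut w h h₁ h₂ _ _ _ _ S₁ _ hd hS hh hk t₁ t₂ ih₁ ih₂ =>
    have hh₁ := t₁.nonneg.2
    have hh₂ := t₂.nonneg.2
    obtain ⟨p₁, c₁⟩ := ih₁ x y
    obtain ⟨p₂, c₂⟩ := ih₂ x (y + h₁)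
    have hy : y + h₁ + h₂ ≤ y + h := by linarith
    refine ⟨S₁.piecewise p₁ p₂, hS ▸ c₁.merge c₂ hd hk ?_ ⟨le_rfl, le_rfl, by simpa, hy⟩
      (Rect.disjoint_toSet_of_y2_le_y1 le_rfl) fun p g₁ g₂ => ?_⟩
    · exact ⟨le_rfl, le_rfl, le_rfl, by dsimp only; linarith⟩
    · exact .hcut hht (by linarith) (by linarith) g₁ (g₂.mono ⟨le_rfl, le_rfl, le_rfl, hy⟩)

end ContainerRealization

section CornerRealization

variable {ι : Type u} [DecidableEq ι] {wd ht : ι → ℝ} {SH SV SC : Finset ι} {P : Rect}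
  {p₀ p : ι → Rect}

/-- The placement `p` extends the placement `p₀` of `SC` to a guillotine packing of the piece `P`
with `SH` in the horizontal arm and `SV` in the vertical arm of a boundary-L of `P`. -/
structure CornerPlacement (wd ht : ι → ℝ) (SH SV SC : Finset ι) (P : Rect)
    (p₀ p : ι → Rect) : Prop where
  eq_on : ∀ i ∈ SC, p i = p₀ i
  packing : GuillotinePacking wd ht (SH ∪ SV ∪ SC) p P
  horizontal_arm : ∀ i ∈ SH, (p i).SubRect ⟨P.x1, P.x2, P.y1, P.y1 + ∑ i ∈ SH, ht i⟩
  vertical_arm : ∀ i ∈ SV, (p i).SubRect ⟨P.x1, P.x1 + ∑ i ∈ SV, wd i, P.y1, P.y2⟩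

namespace CornerPlacement

lemma transpose (c : CornerPlacement wd ht SH SV SC P p₀ p) :
    CornerPlacement ht wd SV SH SC P.transpose (fun i => (p₀ i).transpose)
      fun i => (p i).transpose where
  eq_on i hi := by rw [c.eq_on i hi]
  packing := by
    rw [Finset.union_comm SV SH]
    exact c.packing.transpose
  horizontal_arm i hi := (c.vertical_arm i hi).transpose
  vertical_arm i hi := (c.horizontal_arm i hi).transpose

lemma insert_vertical (hwd : ∀ i, 0 < wd i) {x X y Y : ℝ} {a : ι}
    (c : CornerPlacement wd ht SH SV SC ⟨x + wd a, X, y, Y⟩ p₀ p) (haH : a ∉ SH) (haV : a ∉ SV)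
    (haC : a ∉ SC) (hX : x + wd a ≤ X) (hY : y + ht a ≤ Y) :
    CornerPlacement wd ht SH (insert a SV) SC ⟨x, X, y, Y⟩ p₀
      (Function.update p a ⟨x, x + wd a, y, y + ht a⟩) := by
  have hxa : x ≤ x + wd a := le_add_of_nonneg_right (hwd a).le
  have hSV : 0 ≤ ∑ i ∈ SV, wd i := Finset.sum_nonneg fun i _ => (hwd i).le
  set q := Function.update p a ⟨x, x + wd a, y, y + ht a⟩
  have hqa : q a = ⟨x, x + wd a, y, y + ht a⟩ := Function.update_self ..
  have hq {T : Finset ι} (haT : a ∉ T) (i : ι) (hi : i ∈ T) : q i = p i :=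
    Function.update_of_ne (ne_of_mem_of_not_mem hi haT) ..
  refine ⟨fun i hi => (hq haC i hi).trans (c.eq_on i hi), ?_, fun i hi => ?_, fun i hi => ?_⟩
  · rw [Finset.union_insert, Finset.insert_union, Finset.insert_eq]
    exact .vcut hwd hxa hX (.singleton hqa ⟨le_rfl, le_rfl, le_rfl, hY⟩)
      (c.packing.congr (hq (by simp [haH, haV, haC])))
  · rw [hq haH i hi]
    exact (c.horizontal_arm i hi).trans ⟨hxa, le_rfl, le_rfl, le_rfl⟩
  · rw [Finset.sum_insert haV]
    rcases Finset.mem_insert.1 hi with rfl | hi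
    · rw [hqa]
      exact ⟨le_rfl, by simpa, le_rfl, hY⟩
    · rw [hq haV i hi]
      exact (c.vertical_arm i hi).trans ⟨hxa, (add_assoc _ _ _).le, le_rfl, le_rfl⟩

end CornerPlacement

lemma CornerChain.exists_placement (hwd : ∀ i, 0 < wd i) (hht : ∀ i, 0 < ht i) {w h x X y Y : ℝ}
    (c : CornerChain wd ht w h SH SV) (hX : X = x + w) (hY : Y = y + h) (hH : Disjoint SH SC)
    (hV : Disjoint SV SC)
    (g : GuillotinePacking wd ht SC p₀ ⟨x + ∑ i ∈ SV, wd i, X, y + ∑ i ∈ SH, ht i, Y⟩) :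
    ∃ p, CornerPlacement wd ht SH SV SC ⟨x, X, y, Y⟩ p₀ p := by
  induction c generalizing x y with
  | nil => exact ⟨p₀, fun _ _ => rfl, by simpa using g, by simp, by simp⟩
  | consV a haV haH hw hh _ ih =>
    rw [Finset.disjoint_insert_left] at hV
    rw [Finset.sum_insert haV, ← add_assoc] at g
    obtain ⟨p, c⟩ := ih (by linarith) hY hH hV.2 g
    exact ⟨_, c.insert_vertical hwd haH haV hV.1 (by linarith) (by linarith)⟩
  | consH a haH haV hw hh _ ih =>
    rw [Finset.disjoint_insert_left] at hH
    rw [Finset.sum_insert haH, ← add_assoc] at g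
    obtain ⟨p, c⟩ := ih hX (by linarith) hH.2 hV g
    exact ⟨_, (c.transpose.insert_vertical hht haV haH hH.1 (by linarith) (by linarith)).transpose⟩

/-- An L&C packing of `S` into the `N × N` knapsack with coordinates forgotten: the items `SH` and
`SV` of the boundary-L are cut off one by one, and `SC` is packed into at most `k` containers in the
remaining rectangle. -/
def LCPackable (wd ht : ι → ℝ) (N ε : ℝ) (S : Finset ι) (k : ℕ) : Prop :=
  ∃ SH SV SC : Finset ι, S = SH ∪ SV ∪ SC ∧ Disjoint SH SV ∧ Disjoint SH SC ∧ Disjoint SV SC ∧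
    (∀ i ∈ SH, N / 2 < wd i ∧ ¬ N / 2 < ht i) ∧ (∀ i ∈ SV, N / 2 < ht i ∧ ¬ N / 2 < wd i) ∧
    CornerChain wd ht N N SH SV ∧
    GuillotineTree (ContainerLeaf wd ht ε) (N - ∑ i ∈ SV, wd i) (N - ∑ i ∈ SH, ht i) k SC

variable {N ε : ℝ} {S : Finset ι} {k : ℕ}

lemma LCPackable.swap (c : LCPackable wd ht N ε S k) : LCPackable ht wd N ε S k := by
  obtain ⟨SH, SV, SC, hS, hHV, hHC, hVC, hH, hV, c, t⟩ := c
  exact ⟨SV, SH, SC, by rw [hS, Finset.union_comm SH SV], hHV.symm, hVC, hHC, hV, hH, c.swap,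
    t.swap fun _ _ _ => ContainerLeaf.swap⟩

lemma ContainerPacking.isLCPacking (hwd : ∀ i, 0 < wd i) (hht : ∀ i, 0 < ht i) {κ : Type}
    {cont : κ → Rect} {lab : κ → CLabel} {asg : ι → κ} (c : CornerChain wd ht N N SH SV)
    (hp : CornerPlacement wd ht SH SV SC (knapsack N) p₀ p) (hHC : Disjoint SH SC)
    (hVC : Disjoint SV SC) (hH : ∀ i ∈ SH, N / 2 < wd i ∧ ¬ N / 2 < ht i)
    (hV : ∀ i ∈ SV, N / 2 < ht i ∧ ¬ N / 2 < wd i)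
    (d : ContainerPacking wd ht ε ⟨∑ i ∈ SV, wd i, N, ∑ i ∈ SH, ht i, N⟩ SC p cont lab asg)
    (e : κ ≃ Fin k) : IsLCPacking wd ht N ε (SH ∪ SV ∪ SC) p k := by
  have hSV : 0 ≤ ∑ i ∈ SV, wd i := Finset.sum_nonneg fun i _ => (hwd i).le
  have hSH : 0 ≤ ∑ i ∈ SH, ht i := Finset.sum_nonneg fun i _ => (hht i).le
  have hSC : (SH ∪ SV ∪ SC) \ (SH ∪ SV) = SC :=
    Finset.union_sdiff_cancel_left (Finset.disjoint_union_left.2 ⟨hHC, hVC⟩)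
  set cont' : ℕ → Rect := fun j => if hj : j < k then cont (e.symm ⟨j, hj⟩) else knapsack N
  set lab' : ℕ → CLabel := fun j => if hj : j < k then lab (e.symm ⟨j, hj⟩) else .area
  have hcont (j : κ) : cont' (e j) = cont j := by simp [cont']
  have hlab (j : κ) : lab' (e j) = lab j := by simp [lab']
  have hcont' (j : ℕ) (hj : j < k) : cont' j = cont (e.symm ⟨j, hj⟩) := dif_pos hj
  have hHarm (i : ι) (hi : i ∈ SH) : (p i).SubRect ⟨0, N, 0, ∑ i ∈ SH, ht i⟩ := by
    simpa only [knapsack, zero_add] using hp.horizontal_arm i hi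
  have hVarm (i : ι) (hi : i ∈ SV) : (p i).SubRect ⟨0, ∑ i ∈ SV, wd i, 0, N⟩ := by
    simpa only [knapsack, zero_add] using hp.vertical_arm i hi
  refine ⟨∑ i ∈ SH, ht i, ∑ i ∈ SV, wd i, SH ∪ SV, cont', lab', fun i => e (asg i), hSH,
    c.sums_le.2, hSV, c.sums_le.1, Finset.subset_union_left, hp.packing.1, hp.packing.2,
    fun i hi => ?_, fun i hi hw => ?_, fun i hi hw => ?_, fun j hj => ?_, fun j hj => ?_,
    fun j hj j' hj' hne => ?_, ?_, ?_⟩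
  · exact (Finset.mem_union.1 hi).imp (fun hi => (hH i hi).1) fun hi => (hV i hi).1
  · exact (Finset.mem_union.1 hi).elim (hHarm i) fun hi => absurd hw (hV i hi).2
  · exact (Finset.mem_union.1 hi).elim (fun hi => absurd (hH i hi).1 hw) (hVarm i)
  · exact hcont' j hj ▸ (d.cont_subRect _).trans ⟨hSV, le_rfl, hSH, le_rfl⟩
  · refine Disjoint.mono_left (hcont' j hj ▸ (d.cont_subRect _).toSet_subset) ?_
    exact Set.disjoint_union_right.2 ⟨(Rect.disjoint_toSet_of_y2_le_y1 le_rfl).symm,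
      (Rect.disjoint_toSet_of_x2_le_x1 le_rfl).symm⟩
  · rw [hcont' j hj, hcont' j' hj']
    exact d.cont_disjoint (by simpa using hne)
  · exact hSC.symm ▸ fun i hi => ⟨(e (asg i)).2, hcont (asg i) ▸ d.place_subRect i hi⟩
  · exact hSC.symm ▸ d.containerLabelOK e hcont hlab

lemma LCPackable.exists_isLCPacking (hwd : ∀ i, 0 < wd i) (hht : ∀ i, 0 < ht i)
    (c : LCPackable wd ht N ε S k) : ∃ place, ∃ k' ≤ k, IsLCPacking wd ht N ε S place k' := by
  obtain ⟨SH, SV, SC, rfl, -, hHC, hVC, hH, hV, c, t⟩ := c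
  obtain ⟨p₀, κ, _, cont, lab, asg, hκ, d⟩ :=
    t.exists_hasContainerPacking hwd hht (∑ i ∈ SV, wd i) (∑ i ∈ SH, ht i)
  rw [add_sub_cancel, add_sub_cancel] at d
  obtain ⟨p, hp⟩ := c.exists_placement (X := N) (Y := N) hwd hht (zero_add N).symm
    (zero_add N).symm hHC hVC (by simpa only [zero_add] using d.packing)
  exact ⟨p, _, hκ, (d.congr hp.eq_on).isLCPacking hwd hht c hp hHC hVC hH hV
    (Fintype.equivFin κ)⟩

end CornerRealization

/-! ### Sparse strips and the collapsed instance -/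

section Averaging

variable {α : Type*} {ι : Type u}

lemma exists_mul_card_filter_le (r : α → ι → Prop) [∀ i, DecidablePred (r · i)]
    {s : Finset α} (hs : s.Nonempty) (t : Finset ι) {c : ℕ}
    (hc : ∀ i ∈ t, (s.filter (r · i)).card ≤ c) :
    ∃ a ∈ s, s.card * (t.filter (r a)).card ≤ c * t.card := by
  by_contra! h
  have hcount : s.card * (c * t.card / s.card + 1) ≤ t.card * c :=
    Finset.card_mul_le_card_mul r (fun a ha => Nat.div_lt_of_lt_mul (h a ha)) hc
  exact (Nat.lt_mul_div_succ (c * t.card) hs.card_pos).not_ge (hcount.trans_eq (mul_comm _ _))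

lemma exists_subset_card_mul_sum_le (f : ι → ℝ) (S : Finset ι) {n : ℕ} (hn : n ≤ S.card) :
    ∃ T ⊆ S, T.card = n ∧ S.card * ∑ i ∈ T, f i ≤ n * ∑ i ∈ S, f i := by
  classical
  induction S using Finset.strongInduction with
  | H S ih =>
    rcases hn.eq_or_lt with rfl | hlt
    · exact ⟨S, subset_rfl, rfl, le_rfl⟩
    obtain ⟨m, hm, hmax⟩ := S.exists_max_image f (Finset.card_pos.1 (by omega))
    have hcard := Finset.card_erase_add_one hm
    obtain ⟨T, hT, hTn, hsum⟩ := ih (S.erase m) (Finset.erase_ssubset hm) (by omega)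
    refine ⟨T, hT.trans (Finset.erase_subset m S), hTn, ?_⟩
    have hTm : ∑ i ∈ T, f i ≤ n * f m := by
      rw [← hTn, ← nsmul_eq_mul]
      exact Finset.sum_le_card_nsmul _ _ _ fun i hi => hmax i (Finset.mem_of_mem_erase (hT hi))
    calc (S.card : ℝ) * ∑ i ∈ T, f i
        = (S.erase m).card * ∑ i ∈ T, f i + ∑ i ∈ T, f i := by rw [← hcard]; push_cast; ring
      _ ≤ n * ∑ i ∈ S.erase m, f i + n * f m := add_le_add hsum hTm
      _ = n * ∑ i ∈ S, f i := by rw [← Finset.sum_erase_add S f hm, mul_add]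

lemma exists_half_sum_le (f : ι → ℝ) (S : Finset ι) :
    ∃ T ⊆ S, S.card ≤ 2 * T.card + 1 ∧ 2 * ∑ i ∈ T, f i ≤ ∑ i ∈ S, f i := by
  classical
  obtain ⟨T, hT, hcard⟩ := Finset.exists_subset_card_eq (Nat.div_le_self S.card 2)
  have hsum := Finset.sum_sdiff (f := f) hT
  rcases le_total (∑ i ∈ T, f i) (∑ i ∈ S \ T, f i) with h | h
  · exact ⟨T, hT, by omega, by linarith⟩
  · exact ⟨S \ T, Finset.sdiff_subset, by rw [Finset.card_sdiff_of_subset hT]; omega, by linarith⟩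

end Averaging

section Strips

open Set

variable {ι : Type u} {x₁ x₂ : ι → ℝ}

lemma exists_sparse_strip (V : Finset ι) (a : ℝ) {δ : ℝ} (hδ : 0 < δ) {M : ℕ} (hM : 0 < M)
    (hV : ∀ i ∈ V, x₂ i - x₁ i ≤ δ) :
    ∃ j < M, ∃ B ⊆ V, M * B.card ≤ 2 * V.card ∧
      ∀ i ∈ V, i ∉ B → Disjoint (Ioo (x₁ i) (x₂ i)) (Ioo (a + j * δ) (a + (j + 1) * δ)) := by
  let meets (j : ℕ) (i : ι) : Prop := x₁ i < a + (j + 1) * δ ∧ a + j * δ < x₂ i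
  have meets_two (i : ι) (hi : i ∈ V) : ((Finset.range M).filter (meets · i)).card ≤ 2 := by
    rcases ((Finset.range M).filter (meets · i)).eq_empty_or_nonempty with h | h
    · simp [h]
    obtain ⟨m, hm, hmin⟩ := Finset.exists_min_image _ id h
    refine (Finset.card_le_card fun j hj => ?_).trans (Finset.card_le_two (a := m) (b := m + 1))
    have hmj : m ≤ j := hmin j hj
    have hjm : j < m + 2 := by
      have hlt : (j : ℝ) * δ < (m + 2 : ℝ) * δ := by
        linarith [hV i hi, (Finset.mem_filter.1 hm).2.1, (Finset.mem_filter.1 hj).2.2]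
      exact_mod_cast lt_of_mul_lt_mul_right hlt hδ.le
    simp only [Finset.mem_insert, Finset.mem_singleton]
    omega
  obtain ⟨j, hj, hcard⟩ :=
    exists_mul_card_filter_le meets (Finset.nonempty_range_iff.2 hM.ne') V meets_two
  refine ⟨j, Finset.mem_range.1 hj, V.filter (meets j), Finset.filter_subset _ _,
    by simpa using hcard, fun i hi hB => ?_⟩
  rw [Ioo_disjoint_Ioo, min_le_iff, le_max_iff, le_max_iff]
  by_contra! h
  exact hB (Finset.mem_filter.2 ⟨hi, h.2.1, h.1.2⟩)

lemma exists_sparse_side (W : Finset ι) {s : ℝ} (hW : ∀ i ∈ W, x₂ i - x₁ i ≤ 1 - 2 * s) :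
    ∃ a, (a = 0 ∨ a = 1 - s) ∧ ∃ B ⊆ W, 2 * B.card ≤ W.card ∧
      ∀ i ∈ W, i ∉ B → Disjoint (Ioo (x₁ i) (x₂ i)) (Ioo a (a + s)) := by
  have hcard := Finset.card_filter_add_card_filter_not (s := W) fun i => x₁ i < s
  rcases le_total (2 * (W.filter fun i => x₁ i < s).card) W.card with h | h
  · refine ⟨0, Or.inl rfl, _, Finset.filter_subset _ _, h, fun i hi hB => ?_⟩
    have hx : s ≤ x₁ i := not_lt.1 fun hx => hB (Finset.mem_filter.2 ⟨hi, hx⟩)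
    exact Ioo_disjoint_Ioo.2 ((min_le_right _ _).trans (by simpa using Or.inl hx))
  · refine ⟨1 - s, Or.inr rfl, W.filter fun i => ¬ x₁ i < s, Finset.filter_subset _ _, by omega,
      fun i hi hB => ?_⟩
    have hx : x₁ i < s := by_contra fun hx => hB (Finset.mem_filter.2 ⟨hi, hx⟩)
    exact Ioo_disjoint_Ioo.2 ((min_le_left _ _).trans
      (le_max_of_le_right (by linarith [hW i hi])))

end Strips

section UnitKnapsack

open MeasureTheory Set

lemma Rect.disjoint_xSpan_or_disjoint_ySpan {r s : Rect} (h : Disjoint r.toSet s.toSet) :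
    Disjoint r.xSpan s.xSpan ∨ Disjoint r.ySpan s.ySpan := by
  have toSet_eq (r : Rect) : r.toSet = r.xSpan ×ˢ r.ySpan := by
    ext p
    simp only [Rect.toSet, mem_ofPred_eq, mem_prod, mem_Ioo, and_assoc]
  rwa [toSet_eq, toSet_eq, disjoint_prod] at h

variable {ι : Type u} {wd ht : ι → ℝ} {S T : Finset ι} {place : ι → Rect}

namespace IsPacking

section

variable {P : Rect}

lemma x2_eq (g : IsPacking wd ht S place P) {i : ι} (hi : i ∈ S) :
    (place i).x2 = (place i).x1 + wd i := by
  rw [← g.hw i hi, Rect.width, add_sub_cancel]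

lemma y2_eq (g : IsPacking wd ht S place P) {i : ι} (hi : i ∈ S) :
    (place i).y2 = (place i).y1 + ht i := by
  rw [← g.hh i hi, Rect.height, add_sub_cancel]

end

variable {N : ℝ} {i j : ι}

lemma disjoint_ySpan_of_lt_add (g : IsPacking wd ht S place (knapsack N))
    (hi : i ∈ S) (hj : j ∈ S) (hij : i ≠ j) (hN : N < wd i + wd j) :
    Disjoint (place i).ySpan (place j).ySpan := by
  refine (Rect.disjoint_xSpan_or_disjoint_ySpan (g.hdisj i hi j hj hij)).resolve_left fun h => ?_
  obtain ⟨hi₀, hi₁, -⟩ := g.hin i hi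
  obtain ⟨hj₀, hj₁, -⟩ := g.hin j hj
  simp only [knapsack, g.x2_eq hi, g.x2_eq hj] at hi₀ hi₁ hj₀ hj₁
  rw [Ioo_disjoint_Ioo, min_le_iff, le_max_iff, le_max_iff, g.x2_eq hi, g.x2_eq hj] at h
  rcases h with (h | h) | h | h <;> linarith

lemma disjoint_xSpan_Ioo (hwd : ∀ i, 0 < wd i) (g : IsPacking wd ht S place (knapsack N))
    (hi : i ∈ S) (hj : j ∈ S) (hij : i ≠ j) (hy : ¬ Disjoint (place i).ySpan (place j).ySpan) :
    Disjoint (place i).xSpan (Ioo (N - wd j) (wd j)) := by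
  have h := (Rect.disjoint_xSpan_or_disjoint_ySpan (g.hdisj i hi j hj hij)).resolve_right hy
  obtain ⟨hj₀, hj₁, -⟩ := g.hin j hj
  simp only [knapsack] at hj₀ hj₁
  have hx := g.x2_eq hj
  rw [Ioo_disjoint_Ioo, min_le_iff, le_max_iff, le_max_iff] at h ⊢
  rcases h with (h | h) | h | h
  · exact Or.inl (Or.inl h)
  · exact Or.inl (Or.inr (by linarith))
  · exact Or.inr (Or.inl (by linarith))
  · linarith [hwd j]

lemma ySpan_subset (g : IsPacking wd ht S place (knapsack N)) (hi : i ∈ S) :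
    (place i).ySpan ⊆ Ioc 0 N :=
  Ioo_subset_Ioc_self.trans (Ioc_subset_Ioc (g.hin i hi).2.2.1 (g.hin i hi).2.2.2)

lemma volume_biUnion_ySpan {P : Rect} (hht : ∀ i, 0 ≤ ht i) (g : IsPacking wd ht S place P)
    (hTS : T ⊆ S) (hT : (T : Set ι).PairwiseDisjoint fun i => (place i).ySpan) :
    volume.real (⋃ i ∈ T, (place i).ySpan) = ∑ i ∈ T, ht i := by
  rw [measureReal_biUnion_finset hT (fun _ _ => measurableSet_Ioo) fun _ _ => measure_Ioo_lt_top.ne]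
  refine Finset.sum_congr rfl fun i hi => ?_
  have hy := g.y2_eq (hTS hi)
  rw [Real.volume_real_Ioo_of_le (by linarith [hht i]), hy, add_sub_cancel_left]

end IsPacking

namespace GuillotinePacking

lemma exists_tree_outside [DecidableEq ι] (g : GuillotinePacking wd ht S place (knapsack 1))
    (hTS : T ⊆ S)
    {Ux Uy : Set ℝ} (hUx : MeasurableSet Ux) (hUy : MeasurableSet Uy) (hUx1 : Ux ⊆ Ioc 0 1)
    (hUy1 : Uy ⊆ Ioc 0 1) (hx : ∀ i ∈ T, Disjoint (place i).xSpan Ux)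
    (hy : ∀ i ∈ T, Disjoint (place i).ySpan Uy) :
    ∃ k, GuillotineTree (SingleItem wd ht) (1 - volume.real Ux) (1 - volume.real Uy) k T := by
  obtain ⟨k, t⟩ := g.2.exists_tree_outside (wd := wd) (ht := ht) hUx hUy hTS fun i hi =>
    ⟨g.1.hin i (hTS hi), (g.1.hw i (hTS hi)).symm, (g.1.hh i (hTS hi)).symm, hx i hi, hy i hi⟩
  refine ⟨k, t.mono (fun _ _ _ _ _ => SingleItem.mono) ?_ ?_⟩
  · simpa [knapsack] using lengthOutside_le_sub zero_le_one hUx subset_rfl hUx1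
  · simpa [knapsack] using lengthOutside_le_sub zero_le_one hUy subset_rfl hUy1

lemma exists_tree [DecidableEq ι] (g : GuillotinePacking wd ht S place (knapsack 1)) (hTS : T ⊆ S) :
    ∃ k, GuillotineTree (SingleItem wd ht) 1 1 k T := by
  simpa using g.exists_tree_outside hTS (Ux := ∅) (Uy := ∅) .empty .empty (by simp) (by simp)
    (by simp) (by simp)

lemma totalArea_le_one (hht : ∀ i, 0 ≤ ht i) (g : GuillotinePacking wd ht S place (knapsack 1))
    (hTS : T ⊆ S) : totalArea wd ht T ≤ 1 := by
  classical
  obtain ⟨k, t⟩ := g.exists_tree hTS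
  simpa using t.totalArea_le hht

lemma mul_sum_width_le (hwd : ∀ i, 0 ≤ wd i) (hht : ∀ i, 0 ≤ ht i)
    (g : GuillotinePacking wd ht S place (knapsack 1)) (hTS : T ⊆ S) {a u : ℝ} (hu : 0 ≤ u)
    (hu2 : u ≤ 1 / 2) (hT : ∀ i ∈ T, a ≤ ht i)
    (hx : ∀ i ∈ T, Disjoint (place i).xSpan (Ioo u (1 - u))) : a * ∑ i ∈ T, wd i ≤ 2 * u := by
  classical
  obtain ⟨k, t⟩ := g.exists_tree_outside hTS measurableSet_Ioo .empty
    (Ioo_subset_Ioc_self.trans (Ioc_subset_Ioc hu (by linarith))) (empty_subset _) hx (by simp)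
  calc a * ∑ i ∈ T, wd i ≤ totalArea wd ht T := by
        rw [Finset.mul_sum, totalArea]
        refine Finset.sum_le_sum fun i hi => ?_
        rw [mul_comm]
        exact mul_le_mul_of_nonneg_left (hT i hi) (hwd i)
    _ ≤ (1 - volume.real (Ioo u (1 - u))) * (1 - volume.real ∅) := t.totalArea_le hht
    _ = 2 * u := by
        rw [Real.volume_real_Ioo_of_le (by linarith), measureReal_empty]; ring

lemma exists_collapsed_tree [DecidableEq ι] (hht : ∀ i, 0 ≤ ht i)
    (g : GuillotinePacking wd ht S place (knapsack 1)) {H E : Finset ι} (hH : H ⊆ S) (hE : E ⊆ S)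
    {c δ : ℝ} (hδ : 0 ≤ δ) (hc : 0 ≤ c) (hcδ : c + δ ≤ 1)
    (hHH : (H : Set ι).PairwiseDisjoint fun i => (place i).ySpan)
    (hx : ∀ i ∈ E, Disjoint (place i).xSpan (Ioo c (c + δ)))
    (hy : ∀ i ∈ E, ∀ l ∈ H, Disjoint (place i).ySpan (place l).ySpan) :
    ∃ k, GuillotineTree (SingleItem wd ht) (1 - δ) (1 - ∑ i ∈ H, ht i) k E := by
  obtain ⟨k, t⟩ := g.exists_tree_outside hE measurableSet_Ioo
    (H.measurableSet_biUnion fun l _ => measurableSet_Ioo)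
    (Ioo_subset_Ioc_self.trans (Ioc_subset_Ioc hc hcδ))
    (iUnion₂_subset fun l hl => g.1.ySpan_subset (hH hl)) hx
    fun i hi => disjoint_iUnion₂_right.2 (hy i hi)
  rw [Real.volume_real_Ioo_of_le (by linarith), add_sub_cancel_left,
    g.1.volume_biUnion_ySpan hht hH hHH] at t
  exact ⟨k, t⟩

end GuillotinePacking

end UnitKnapsack

section StripDeletion

open Set

variable {ι : Type u} {wd ht : ι → ℝ} {S H W V : Finset ι} {place : ι → Rect} {M : ℕ} {δ u : ℝ}

/-- The result of deleting a vertical strip of width `δ` and the horizontal strips of the items of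
`H₀` from a packing in the unit knapsack. Of the spanning items `H`, the wide items `W` and the
tall items `V`, the items of `E` survive in the collapsed knapsack, and the tall items of `Vs` are
set aside since they share their height range with an item of `H₀`. -/
structure StripDeletion [DecidableEq ι] (wd ht : ι → ℝ) (M : ℕ) (δ u : ℝ)
    (H W V H₀ E Vs : Finset ι) : Prop where
  spanning_subset : H₀ ⊆ H
  survivors_subset : E ⊆ W ∪ V
  aside_subset : Vs ⊆ V
  disjoint : Disjoint E Vs
  sum_height_le : ∑ i ∈ H₀, ht i ≤ 1 / 2
  card_spanning_le : H.card ≤ 2 * H₀.card + 1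
  sum_width_le : δ * ∑ i ∈ Vs, wd i ≤ 2 * u
  card_le : M * (W.card + 2 * V.card) ≤ M * (2 * E.card + 2 * Vs.card) + 4 * V.card
  exists_tree : ∃ k, GuillotineTree (SingleItem wd ht) (1 - δ) (1 - ∑ i ∈ H₀, ht i) k E

lemma IsPacking.exists_sparse_strip
    (g : IsPacking wd ht S place (knapsack 1)) (hW : W ⊆ S) (hV : V ⊆ S) (hM : 0 < M)
    (hδ : 0 < δ) (hMδ : M * δ ≤ 1) (hwdW : ∀ i ∈ W, wd i ≤ 1 - 2 * (M * δ))
    (hwdV : ∀ i ∈ V, wd i ≤ δ) :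
    ∃ c, 0 ≤ c ∧ c + δ ≤ 1 ∧ ∃ BW ⊆ W, ∃ BV ⊆ V, 2 * BW.card ≤ W.card ∧
      M * BV.card ≤ 2 * V.card ∧
      (∀ i ∈ W, i ∉ BW → Disjoint (place i).xSpan (Ioo c (c + δ))) ∧
      ∀ i ∈ V, i ∉ BV → Disjoint (place i).xSpan (Ioo c (c + δ)) := by
  obtain ⟨a, ha, BW, hBW, hcardW, hdisjW⟩ := exists_sparse_side (x₁ := fun i => (place i).x1)
    (x₂ := fun i => (place i).x2) W (s := M * δ)
    fun i hi => by linarith [g.x2_eq (hW hi), hwdW i hi]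
  obtain ⟨j, hj, BV, hBV, hcardV, hdisjV⟩ := _root_.exists_sparse_strip
    (x₁ := fun i => (place i).x1) (x₂ := fun i => (place i).x2) V a hδ hM
    fun i hi => by linarith [g.x2_eq (hV hi), hwdV i hi]
  have hstrip : a + (j + 1) * δ = a + j * δ + δ := by ring
  have hjM : (j + 1 : ℝ) * δ ≤ M * δ :=
    mul_le_mul_of_nonneg_right (by exact_mod_cast hj) hδ.le
  have ha₀ : 0 ≤ a := by rcases ha with rfl | rfl <;> linarith
  have ha₁ : a + M * δ ≤ 1 := by rcases ha with rfl | rfl <;> linarith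
  have hjδ : 0 ≤ (j : ℝ) * δ := by positivity
  rw [hstrip] at hdisjV
  refine ⟨a + j * δ, by linarith, by linarith, BW, hBW, BV, hBV, hcardW, hcardV,
    fun i hi hB => (hdisjW i hi hB).mono_right (Ioo_subset_Ioo ?_ ?_), hdisjV⟩ <;> linarith

lemma card_le_of_sparse [DecidableEq ι] (hWV : Disjoint W V) {BW BV Vs : Finset ι} (hBW : BW ⊆ W)
    (hBV : BV ⊆ V) (hcardW : 2 * BW.card ≤ W.card) (hcardV : M * BV.card ≤ 2 * V.card) :
    M * (W.card + 2 * V.card) ≤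
      M * (2 * ((W \ BW) ∪ ((V \ BV) \ Vs)).card + 2 * Vs.card) + 4 * V.card := by
  have hdisj : Disjoint (W \ BW) ((V \ BV) \ Vs) :=
    hWV.mono Finset.sdiff_subset (Finset.sdiff_subset.trans Finset.sdiff_subset)
  have hcard : W.card + 2 * V.card ≤
      2 * ((W \ BW) ∪ ((V \ BV) \ Vs)).card + 2 * Vs.card + 2 * BV.card := by
    have := Finset.card_sdiff_add_card_eq_card hBW
    have := Finset.card_sdiff_add_card_eq_card hBV
    have := Finset.le_card_sdiff Vs (V \ BV)
    rw [Finset.card_union_of_disjoint hdisj]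
    omega
  calc M * (W.card + 2 * V.card) ≤ _ := Nat.mul_le_mul_left M hcard
    _ = M * (2 * ((W \ BW) ∪ ((V \ BV) \ Vs)).card + 2 * Vs.card) + 2 * (M * BV.card) := by ring
    _ ≤ _ := by omega

lemma GuillotinePacking.exists_thin_half
    (g : GuillotinePacking wd ht S place (knapsack 1)) (hH : H ⊆ S)
    (hwdH : ∀ i ∈ H, 1 / 2 < wd i) :
    ∃ H₀ ⊆ H, H.card ≤ 2 * H₀.card + 1 ∧ ∑ i ∈ H₀, ht i ≤ 1 / 2 ∧
      (H₀ : Set ι).PairwiseDisjoint fun i => (place i).ySpan := by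
  classical
  obtain ⟨H₀, hH₀, hcard, hsum⟩ := exists_half_sum_le ht H
  have hheight : ∑ i ∈ H, ht i ≤ 1 := by
    obtain ⟨k, t⟩ := g.exists_tree hH
    exact (t.swap fun _ _ _ => SingleItem.swap).sum_width_le_of_tall le_rfl hwdH
  exact ⟨H₀, hH₀, hcard, by linarith, fun i hi l hl hil =>
    g.1.disjoint_ySpan_of_lt_add (hH (hH₀ hi)) (hH (hH₀ hl)) hil
      (by linarith [hwdH i (hH₀ hi), hwdH l (hH₀ hl)])⟩

variable [DecidableEq ι]

open Classical in
lemma GuillotinePacking.exists_stripDeletion (hwd : ∀ i, 0 < wd i) (hht : ∀ i, 0 ≤ ht i)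
    (g : GuillotinePacking wd ht S place (knapsack 1)) (hM : 0 < M) (hδ : 0 < δ)
    (hMδ : 2 * (M * δ) ≤ 1 / 4) (hu : 0 ≤ u) (huδ : u < δ) (hH : H ⊆ S) (hW : W ⊆ S) (hV : V ⊆ S)
    (hwdH : ∀ i ∈ H, 1 - u ≤ wd i) (hwdW : ∀ i ∈ W, δ ≤ wd i ∧ wd i < 1 - 2 * (M * δ))
    (hV' : ∀ i ∈ V, wd i < δ ∧ δ ≤ ht i) :
    ∃ H₀ E Vs, StripDeletion wd ht M δ u H W V H₀ E Vs := by
  have hδM : δ ≤ M * δ := le_mul_of_one_le_left hδ.le (by exact_mod_cast hM)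
  have hWV : Disjoint W V :=
    Finset.disjoint_left.2 fun i hiW hiV => (hwdW i hiW).1.not_gt (hV' i hiV).1
  obtain ⟨H₀, hH₀, hcardH, hheight, hpair⟩ :=
    g.exists_thin_half hH fun i hi => by linarith [hwdH i hi]
  obtain ⟨c, hc, hcδ, BW, hBW, BV, hBV, hcardW, hcardV, hxW, hxV⟩ := g.1.exists_sparse_strip hW hV
    hM hδ (by linarith) (fun i hi => (hwdW i hi).2.le) fun i hi => (hV' i hi).1.le
  let meets (i : ι) : Prop := ∃ l ∈ H₀, ¬ Disjoint (place i).ySpan (place l).ySpan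
  refine ⟨H₀, (W \ BW) ∪ ((V \ BV) \ V.filter meets), V.filter meets, hH₀,
    Finset.union_subset_union Finset.sdiff_subset (Finset.sdiff_subset.trans Finset.sdiff_subset),
    Finset.filter_subset _ _, ?_, hheight, hcardH, ?_, card_le_of_sparse hWV hBW hBV hcardW hcardV,
    g.exists_collapsed_tree hht (hH₀.trans hH) ?_ hδ.le hc hcδ hpair ?_ ?_⟩
  · exact Finset.disjoint_union_left.2
      ⟨hWV.mono Finset.sdiff_subset (Finset.filter_subset _ _), Finset.sdiff_disjoint⟩
  · refine g.mul_sum_width_le (fun i => (hwd i).le) hht ((Finset.filter_subset _ _).trans hV) hu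
      (by linarith) (fun i hi => (hV' i (Finset.mem_of_mem_filter i hi)).2) fun i hi => ?_
    obtain ⟨hiV, l, hl, hil⟩ := Finset.mem_filter.1 hi
    have hl' := hwdH l (hH₀ hl)
    have hne : i ≠ l := by rintro rfl; linarith [hV' i hiV]
    exact (g.1.disjoint_xSpan_Ioo hwd (hV hiV) (hH (hH₀ hl)) hne hil).mono_right
      (Ioo_subset_Ioo (by linarith) hl')
  · exact Finset.union_subset (Finset.sdiff_subset.trans hW)
      ((Finset.sdiff_subset.trans Finset.sdiff_subset).trans hV)
  · simp only [Finset.mem_union, Finset.mem_sdiff]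
    rintro i (⟨hiW, hiB⟩ | ⟨⟨hiV, hiB⟩, -⟩)
    exacts [hxW i hiW hiB, hxV i hiV hiB]
  · simp only [Finset.mem_union, Finset.mem_sdiff]
    rintro i (⟨hiW, -⟩ | ⟨⟨hiV, -⟩, him⟩) l hl
    · have hl' := hwdH l (hH₀ hl)
      have hne : i ≠ l := by rintro rfl; linarith [hwdW i hiW]
      exact g.1.disjoint_ySpan_of_lt_add (hW hiW) (hH (hH₀ hl)) hne (by linarith [hwdW i hiW])
    · by_contra hil
      exact him (Finset.mem_filter.2 ⟨hiV, l, hl, hil⟩)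

end StripDeletion

/-! ### One half of the wide items can be given up -/

section ScaleParameters

/-- The parameters chosen for the scale `t`: the deleted vertical strip is one of `M` strips of
width `δ`, small items have sides less than `u`, and shelves are refined `K` times. -/
structure ScaleParameters (ε t : ℝ) where
  /-- The number of candidate strips in each side of the knapsack. -/
  M : ℕ
  /-- The fineness of the packing of the small items. -/
  K : ℕ
  /-- The width of the deleted strip, and the least long side of a non-small item. -/
  δ : ℝ
  /-- The bound on the sides of small items, and the next smaller scale. -/
  u : ℝ
  M_pos : 0 < M
  K_pos : 0 < K
  δ_pos : 0 < δ
  u_pos : 0 < u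
  two_div_le : 2 / M ≤ ε
  two_mul_eq : 2 * (M * δ) = t
  le_quarter : t ≤ 1 / 4
  waste_le : 1 / K + 4 * u / δ + (augmentationBound δ (δ / 6) + 1) * ((K + 1) * (2 * u / ε)) + u ≤
    δ / (16 * M)

namespace ScaleParameters

variable {ε t : ℝ}

lemma nonempty (hε : 0 < ε) (ht : 0 < t) (ht' : t ≤ 1 / 4) : Nonempty (ScaleParameters ε t) := by
  obtain ⟨M, hM⟩ := exists_nat_gt (2 / ε)
  have hMp : (0 : ℝ) < M := lt_trans (by positivity) hM
  set δ := t / (2 * M)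
  have hδ : 0 < δ := by positivity
  obtain ⟨K, hK⟩ := exists_nat_gt (32 * M / δ)
  have hKp : (0 : ℝ) < K := lt_trans (by positivity) hK
  have hKδ : 1 / (K : ℝ) ≤ δ / (32 * M) := by
    rw [one_div_le hKp (by positivity), one_div_div]
    exact hK.le
  set A : ℝ := 4 / δ + (augmentationBound δ (δ / 6) + 1) * ((K + 1) * (2 / ε)) + 1 with hA
  have hA₀ : 0 < A := by positivity
  set u := δ / (32 * M) / A
  have hAu : A * u = δ / (32 * M) := mul_div_cancel₀ _ hA₀.ne'
  have hwaste : 4 * u / δ + (augmentationBound δ (δ / 6) + 1) * ((K + 1) * (2 * u / ε)) + u =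
      δ / (32 * M) := by
    rw [← hAu, hA]
    ring
  refine ⟨⟨M, K, δ, u, mod_cast hMp, mod_cast hKp, hδ, by positivity,
    (div_le_comm₀ hMp hε).2 hM.le, ?_, ht', ?_⟩⟩
  · simp only [δ]
    field_simp
  · calc _ = 1 / (K : ℝ) + (4 * u / δ +
          (augmentationBound δ (δ / 6) + 1) * ((K + 1) * (2 * u / ε)) + u) := by ring
      _ ≤ δ / (32 * M) + δ / (32 * M) := add_le_add hKδ hwaste.le
      _ = δ / (16 * M) := by field_simp; norm_num

lemma ε_pos (p : ScaleParameters ε t) : 0 < ε :=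
  lt_of_lt_of_le (div_pos two_pos (Nat.cast_pos.2 p.M_pos)) p.two_div_le

variable (p : ScaleParameters ε t)

/-- The number of stacks into which the surviving large items are repacked. -/
noncomputable def numStacks : ℕ := augmentationBound p.δ (p.δ / 6)

/-- The number of containers that suffice for all items of the scale. -/
noncomputable def numContainers : ℕ := (p.numStacks + 1) * (2 * p.K + 1)

/-- The number of items lost to rounding, including those of both sides at least `δ`. It also bounds
the number of containers. -/
noncomputable def loss : ℕ := p.numContainers + p.numStacks + 2 + ⌈1 / (p.δ * p.δ)⌉₊

lemma one_le_M : (1 : ℝ) ≤ p.M := mod_cast p.M_pos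

lemma waste_le_numStacks : 1 / (p.K : ℝ) + 4 * p.u / p.δ +
    (p.numStacks + 1) * ((p.K + 1) * (2 * p.u / ε)) + p.u ≤ p.δ / (16 * p.M) := p.waste_le

lemma two_mul_δ_le : 2 * p.δ ≤ t := by
  have := le_mul_of_one_le_left p.δ_pos.le p.one_le_M
  linarith [p.two_mul_eq]

lemma δ_le : p.δ ≤ 1 / 8 := by linarith [p.two_mul_δ_le, p.le_quarter]

lemma one_div_K_add_u_le : 1 / (p.K : ℝ) + 4 * p.u / p.δ + p.u ≤ p.δ / 16 := by
  have hε := p.ε_pos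
  have hu := p.u_pos
  have hlost : 0 ≤ (p.numStacks + 1 : ℝ) * ((p.K + 1) * (2 * p.u / ε)) := by positivity
  have hM : p.δ / (16 * p.M) ≤ p.δ / 16 :=
    div_le_div_of_nonneg_left p.δ_pos.le (by norm_num) (by linarith [p.one_le_M])
  linarith [p.waste_le_numStacks]

lemma u_lt_δ : p.u < p.δ := by
  have hu := p.u_pos
  have hδ := p.δ_pos
  have : 0 ≤ 1 / (p.K : ℝ) + 4 * p.u / p.δ := by positivity
  linarith [p.one_div_K_add_u_le]

lemma u_lt : p.u < t := by linarith [p.u_lt_δ, p.two_mul_δ_le, p.δ_pos]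

end ScaleParameters

end ScaleParameters

section HalfOfWideItems

variable {ι : Type u} {wd ht : ι → ℝ} {ε t : ℝ} {p : ScaleParameters ε t}
  {S H W V Q H₀ E Vs : Finset ι} {place : ι → Rect}

lemma exists_subset_sum_le_mul {f : ι → ℝ} {θ : ℝ} (hf : ∀ i ∈ S, 0 ≤ f i)
    (hθ₀ : 0 ≤ θ) (hθ₁ : θ ≤ 1) :
    ∃ T ⊆ S, θ * S.card - 1 ≤ T.card ∧ ∑ i ∈ T, f i ≤ θ * ∑ i ∈ S, f i := by
  have hn : ⌊θ * S.card⌋₊ ≤ S.card :=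
    Nat.floor_le_of_le (mul_le_of_le_one_left (Nat.cast_nonneg _) hθ₁)
  obtain ⟨T, hT, hcard, hsum⟩ := exists_subset_card_mul_sum_le f S hn
  refine ⟨T, hT, hcard ▸ (Nat.sub_one_lt_floor _).le, ?_⟩
  rcases S.eq_empty_or_nonempty with rfl | hS
  · simp [Finset.subset_empty.1 hT]
  · refine le_of_mul_le_mul_left (hsum.trans ?_) (Nat.cast_pos.2 hS.card_pos : (0 : ℝ) < S.card)
    calc (⌊θ * S.card⌋₊ : ℝ) * ∑ i ∈ S, f i ≤ θ * S.card * ∑ i ∈ S, f i :=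
          mul_le_mul_of_nonneg_right (Nat.floor_le (by positivity)) (Finset.sum_nonneg hf)
      _ = S.card * (θ * ∑ i ∈ S, f i) := by ring

/-- The items of `S` under consideration at the scale `t`: the spanning items `H`, the other wide
items `W`, the tall items `V` and the small items `Q`. -/
structure SizeClasses [DecidableEq ι] (p : ScaleParameters ε t) (wd ht : ι → ℝ)
    (S H W V Q : Finset ι) : Prop where
  subset : H ∪ W ∪ V ∪ Q ⊆ S
  spanning : ∀ i ∈ H, 1 - p.u ≤ wd i ∧ ht i < p.δ
  wide : ∀ i ∈ W, p.δ ≤ wd i ∧ wd i < 1 - t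
  tall : ∀ i ∈ V, wd i < p.δ ∧ p.δ ≤ ht i
  small : ∀ i ∈ Q, wd i ≤ p.u ∧ ht i ≤ p.u

variable [DecidableEq ι]

namespace SizeClasses

lemma spanning_subset (s : SizeClasses p wd ht S H W V Q) : H ⊆ S :=
  (Finset.subset_union_left.trans (Finset.subset_union_left.trans Finset.subset_union_left)).trans
    s.subset

lemma wide_subset (s : SizeClasses p wd ht S H W V Q) : W ⊆ S :=
  (Finset.subset_union_right.trans (Finset.subset_union_left.trans Finset.subset_union_left)).trans
    s.subset

lemma tall_subset (s : SizeClasses p wd ht S H W V Q) : V ⊆ S :=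
  (Finset.subset_union_right.trans Finset.subset_union_left).trans s.subset

lemma disjoint_spanning (s : SizeClasses p wd ht S H W V Q) : Disjoint H (W ∪ V) := by
  have := p.u_lt
  have := p.u_lt_δ
  have := p.δ_le
  refine Finset.disjoint_left.2 fun i hH hWV => ?_
  rcases Finset.mem_union.1 hWV with hW | hV
  · linarith [s.spanning i hH, s.wide i hW]
  · linarith [s.spanning i hH, s.tall i hV]

lemma disjoint_small (s : SizeClasses p wd ht S H W V Q) : Disjoint (H ∪ (W ∪ V)) Q := by
  have := p.u_lt_δ
  have := p.δ_le
  refine Finset.disjoint_left.2 fun i hi hQ => ?_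
  rcases Finset.mem_union.1 hi with hH | hWV
  · linarith [s.spanning i hH, s.small i hQ]
  rcases Finset.mem_union.1 hWV with hW | hV
  · linarith [s.wide i hW, s.small i hQ]
  · linarith [s.tall i hV, s.small i hQ]

lemma exists_stripDeletion (s : SizeClasses p wd ht S H W V Q) (hwd : ∀ i, 0 < wd i)
    (hht : ∀ i, 0 ≤ ht i) (g : GuillotinePacking wd ht S place (knapsack 1)) :
    ∃ H₀ E Vs, StripDeletion wd ht p.M p.δ p.u H W V H₀ E Vs :=
  g.exists_stripDeletion hwd hht p.M_pos p.δ_pos (p.two_mul_eq.trans_le p.le_quarter) p.u_pos.le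
    p.u_lt_δ s.spanning_subset s.wide_subset s.tall_subset (fun i hi => (s.spanning i hi).1)
    (fun i hi => by rw [p.two_mul_eq]; exact s.wide i hi) s.tall

end SizeClasses

/-- The area left for small items once `E` has been repacked below the strips of `H₀`. -/
noncomputable def ScaleParameters.capacity (p : ScaleParameters ε t) (wd ht : ι → ℝ)
    (H₀ E : Finset ι) : ℝ :=
  1 - ∑ i ∈ H₀, ht i - totalArea wd ht E - (p.δ / (16 * p.M) - p.u)

namespace StripDeletion

lemma exists_repacking (d : StripDeletion wd ht p.M p.δ p.u H W V H₀ E Vs)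
    (s : SizeClasses p wd ht S H W V Q) (hwd : ∀ i, 0 < wd i) (hht : ∀ i, 0 < ht i) :
    ∃ E' ⊆ E, (E \ E').card ≤ p.numStacks ∧
      GuillotineTree (Stacked wd ht) (∑ i ∈ Vs with ¬ 1 / 2 < ht i, wd i +
        (1 + 3 * (p.δ / 6)) * (1 - p.δ)) (1 - ∑ i ∈ H₀, ht i) (p.numStacks + 1)
        ((Vs.filter fun i => ¬ 1 / 2 < ht i) ∪ E') := by
  have hδ := p.δ_pos
  have hδ8 := p.δ_le
  have hH₀ : 0 ≤ ∑ i ∈ H₀, ht i := Finset.sum_nonneg fun i _ => (hht i).le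
  have hhalf := d.sum_height_le
  obtain ⟨k, t⟩ := d.exists_tree
  obtain ⟨E', hE', hcard, tE'⟩ := t.exists_augmented_stacked (δ := p.δ) (e := p.δ / 6) hwd hht hδ
    (by positivity) (by linarith) (by linarith) (by linarith) fun i hi =>
      (Finset.mem_union.1 (d.survivors_subset hi)).imp (fun hi => (s.wide i hi).1)
        fun hi => (s.tall i hi).2
  have hstack : Stacked wd ht (∑ i ∈ Vs with ¬ 1 / 2 < ht i, wd i) (1 - ∑ i ∈ H₀, ht i)
      (Vs.filter fun i => ¬ 1 / 2 < ht i) :=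
    Or.inr ⟨fun i hi => by linarith [(Finset.mem_filter.1 hi).2], le_rfl⟩
  exact ⟨E', hE', hcard, .vcut (d.disjoint.symm.mono (Finset.filter_subset _ _) hE') rfl le_rfl
    (add_comm _ _).le
    (.leaf (Finset.sum_nonneg fun i _ => (hwd i).le) (by linarith) le_rfl hstack) tE'⟩

lemma sum_width_long_add_short_le (d : StripDeletion wd ht p.M p.δ p.u H W V H₀ E Vs) :
    ∑ i ∈ Vs with 1 / 2 < ht i, wd i + ∑ i ∈ Vs with ¬ 1 / 2 < ht i, wd i ≤ 2 * p.u / p.δ := by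
  rw [Finset.sum_filter_add_sum_filter_not, le_div_iff₀' p.δ_pos]
  exact d.sum_width_le

lemma capacity_le (d : StripDeletion wd ht p.M p.δ p.u H W V H₀ E Vs) (hwd : ∀ i, 0 ≤ wd i)
    (hht : ∀ i, 0 ≤ ht i) {E' : Finset ι} (hE' : E' ⊆ E) :
    p.capacity wd ht H₀ E ≤
      (1 - 1 / p.K) * ((1 - ∑ i ∈ Vs with 1 / 2 < ht i, wd i) * (1 - ∑ i ∈ H₀, ht i)) -
        totalArea wd ht ((Vs.filter fun i => ¬ 1 / 2 < ht i) ∪ E') -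
        (p.numStacks + 1 : ℕ) * ((p.K + 1) * (2 * p.u / ε)) := by
  set X := ∑ i ∈ Vs with 1 / 2 < ht i, wd i
  set Y := ∑ i ∈ H₀, ht i with hYdef
  have hX : 0 ≤ X := Finset.sum_nonneg fun i _ => hwd i
  have hY : 0 ≤ Y := Finset.sum_nonneg fun i _ => hht i
  have hY2 : Y ≤ 1 / 2 := d.sum_height_le
  have hsum := d.sum_width_long_add_short_le
  have hshort : totalArea wd ht (Vs.filter fun i => ¬ 1 / 2 < ht i) ≤
      ∑ i ∈ Vs with ¬ 1 / 2 < ht i, wd i :=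
    Finset.sum_le_sum fun i hi =>
      mul_le_of_le_one_right (hwd i) (by linarith [(Finset.mem_filter.1 hi).2])
  have hE : totalArea wd ht E' ≤ totalArea wd ht E :=
    Finset.sum_le_sum_of_subset_of_nonneg hE' fun i _ _ => mul_nonneg (hwd i) (hht i)
  have hXu : 4 * p.u / p.δ = 2 * (2 * p.u / p.δ) := by ring
  have hshort₀ := totalArea_nonneg (S := Vs.filter fun i => ¬ 1 / 2 < ht i) hwd hht
  have hprod : 1 - Y - X ≤ (1 - X) * (1 - Y) := by linarith [mul_nonneg hX hY]
  have hround : 1 / (p.K : ℝ) * ((1 - X) * (1 - Y)) ≤ 1 / p.K :=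
    mul_le_of_le_one_right (by positivity)
      (mul_le_one₀ (by linarith) (by linarith) (by linarith))
  rw [totalArea_union (d.disjoint.symm.mono (Finset.filter_subset _ _) hE'),
    ScaleParameters.capacity, ← hYdef, one_sub_mul]
  push_cast
  linarith [p.waste_le_numStacks]

lemma exists_fillable (d : StripDeletion wd ht p.M p.δ p.u H W V H₀ E Vs)
    (s : SizeClasses p wd ht S H W V Q) (hwd : ∀ i, 0 < wd i) (hht : ∀ i, 0 < ht i)
    (hε : ε ≤ 1) :
    ∃ E' ⊆ E, (E \ E').card ≤ p.numStacks ∧ ∃ k ≤ p.numContainers,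
      Fillable wd ht ε p.u (1 - ∑ i ∈ Vs with 1 / 2 < ht i, wd i) (1 - ∑ i ∈ H₀, ht i)
        ((Vs.filter fun i => ¬ 1 / 2 < ht i) ∪ E') (p.capacity wd ht H₀ E) k := by
  obtain ⟨E', hE', hcard, t⟩ := d.exists_repacking s hwd hht
  have hX : 0 ≤ ∑ i ∈ Vs with 1 / 2 < ht i, wd i := Finset.sum_nonneg fun i _ => (hwd i).le
  have hY : 0 ≤ ∑ i ∈ H₀, ht i := Finset.sum_nonneg fun i _ => (hht i).le
  have hroom : ∑ i ∈ Vs with ¬ 1 / 2 < ht i, wd i + (1 + 3 * (p.δ / 6)) * (1 - p.δ) ≤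
      1 - ∑ i ∈ Vs with 1 / 2 < ht i, wd i := by
    have hXu : 4 * p.u / p.δ = 2 * (2 * p.u / p.δ) := by ring
    have hK : 0 ≤ 1 / (p.K : ℝ) := by positivity
    have hexpand : (1 + 3 * (p.δ / 6)) * (1 - p.δ) = 1 - p.δ / 2 - p.δ * p.δ / 2 := by ring
    linarith [d.sum_width_long_add_short_le, p.one_div_K_add_u_le, p.u_pos, p.δ_pos,
      mul_pos p.δ_pos p.δ_pos, hexpand]
  obtain ⟨k, hk, f⟩ := t.exists_fillable hwd hht p.ε_pos hε p.u_pos.le p.K_pos hroom le_rfl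
    (by linarith) (by linarith)
  exact ⟨E', hE', hcard, k, hk, f.mono (d.capacity_le (fun i => (hwd i).le) (fun i => (hht i).le)
    hE')⟩

lemma totalArea_add_le_one (d : StripDeletion wd ht p.M p.δ p.u H W V H₀ E Vs)
    (s : SizeClasses p wd ht S H W V Q) (hht : ∀ i, 0 ≤ ht i)
    (g : GuillotinePacking wd ht S place (knapsack 1)) :
    totalArea wd ht H₀ + totalArea wd ht E + totalArea wd ht Q ≤ 1 := by
  have hsub := Finset.union_subset_union d.spanning_subset d.survivors_subset
  rw [← totalArea_union (s.disjoint_spanning.mono d.spanning_subset d.survivors_subset),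
    ← totalArea_union (s.disjoint_small.mono_left hsub)]
  refine g.totalArea_le_one hht (subset_trans ?_ s.subset)
  rw [Finset.union_assoc H]
  exact Finset.union_subset_union_left hsub

/-- If the small items have area less than `δ / 8`, they fit into the deleted strip. Otherwise a
`1 / M` fraction of them is given up. -/
lemma exists_small_subset (d : StripDeletion wd ht p.M p.δ p.u H W V H₀ E Vs)
    (s : SizeClasses p wd ht S H W V Q) (hwd : ∀ i, 0 ≤ wd i) (hht : ∀ i, 0 ≤ ht i)
    (g : GuillotinePacking wd ht S place (knapsack 1)) :
    ∃ Q₁ ⊆ Q, (1 - ε) * Q.card - 1 ≤ Q₁.card ∧ totalArea wd ht Q₁ ≤ p.capacity wd ht H₀ E := by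
  have hδ := p.δ_pos
  have hu := p.u_pos
  have hM := p.one_le_M
  have hY2 := d.sum_height_le
  unfold ScaleParameters.capacity
  set Y := ∑ i ∈ H₀, ht i with hYdef
  rcases le_total (totalArea wd ht Q) (p.δ / 8) with hsmall | hlarge
  · obtain ⟨k, t⟩ := d.exists_tree
    have hE := t.totalArea_le hht
    have hstrip : p.δ * (1 / 2) ≤ p.δ * (1 - Y) := mul_le_mul_of_nonneg_left (by linarith) hδ.le
    have hεQ : 0 ≤ ε * Q.card := mul_nonneg p.ε_pos.le (Nat.cast_nonneg _)
    have hδM : p.δ / (16 * p.M) ≤ p.δ / 16 :=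
      div_le_div_of_nonneg_left hδ.le (by norm_num) (by linarith)
    exact ⟨Q, subset_rfl, by linarith, by linarith [one_sub_mul p.δ (1 - Y)]⟩
  · have hpacked := d.totalArea_add_le_one s hht g
    have hH₀ : (1 - p.u) * Y ≤ totalArea wd ht H₀ := by
      rw [hYdef, Finset.mul_sum]
      exact Finset.sum_le_sum fun i hi =>
        mul_le_mul_of_nonneg_right (s.spanning i (d.spanning_subset hi)).1 (hht i)
    obtain ⟨Q₁, hQ₁, hcard, harea⟩ := exists_subset_sum_le_mul (S := Q) (θ := 1 - 1 / p.M)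
      (fun i _ => mul_nonneg (hwd i) (hht i)) (sub_nonneg.2 (div_le_one_of_le₀ hM (by linarith)))
      (sub_le_self _ (by positivity))
    have hMε : 1 / (p.M : ℝ) ≤ ε := p.two_div_le.trans' (by gcongr; norm_num)
    refine ⟨Q₁, hQ₁, hcard.trans' (by gcongr), harea.trans ?_⟩
    have hfree : p.δ / (16 * p.M) * 2 ≤ 1 / p.M * totalArea wd ht Q := by
      calc p.δ / (16 * p.M) * 2 = 1 / p.M * (p.δ / 8) := by field_simp; norm_num
        _ ≤ _ := by gcongr
    have hpos : 0 < p.δ / (16 * p.M) := by positivity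
    have huY : p.u * Y ≤ p.u * 1 := mul_le_mul_of_nonneg_left (by linarith) hu.le
    rw [one_sub_mul] at hH₀ ⊢
    change totalArea wd ht Q - 1 / p.M * totalArea wd ht Q ≤ _
    linarith

lemma cornerChain (d : StripDeletion wd ht p.M p.δ p.u H W V H₀ E Vs)
    (s : SizeClasses p wd ht S H W V Q) (hwd : ∀ i, 0 < wd i) (hht : ∀ i, 0 < ht i)
    (g : GuillotinePacking wd ht S place (knapsack 1)) :
    CornerChain wd ht 1 1 H₀ (Vs.filter fun i => 1 / 2 < ht i) := by
  have hlong : (Vs.filter fun i => 1 / 2 < ht i) ⊆ V :=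
    (Finset.filter_subset _ _).trans d.aside_subset
  obtain ⟨k, t⟩ := g.exists_tree (Finset.union_subset
    (d.spanning_subset.trans s.spanning_subset) (hlong.trans s.tall_subset))
  refine t.cornerChain (fun i => (hwd i).le) (fun i => (hht i).le)
    (s.disjoint_spanning.mono d.spanning_subset (hlong.trans Finset.subset_union_right))
    le_rfl le_rfl (fun i hi => ?_) fun i hi => (Finset.mem_filter.1 hi).2
  linarith [s.spanning i (d.spanning_subset hi), p.u_lt_δ, p.δ_le]

lemma exists_lcPackable (d : StripDeletion wd ht p.M p.δ p.u H W V H₀ E Vs)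
    (s : SizeClasses p wd ht S H W V Q) (hwd : ∀ i, 0 < wd i) (hht : ∀ i, 0 < ht i)
    (hε : ε ≤ 1) (g : GuillotinePacking wd ht S place (knapsack 1)) :
    ∃ E' ⊆ E, (E \ E').card ≤ p.numStacks ∧ ∃ Q₂ ⊆ Q,
      (1 - ε) * Q.card - 1 ≤ Q₂.card + p.numContainers ∧
      LCPackable wd ht 1 ε (H₀ ∪ Vs ∪ E' ∪ Q₂) p.numContainers := by
  have hδ := p.δ_le
  have hu := p.u_lt_δ
  set long := Vs.filter fun i => 1 / 2 < ht i
  set short := Vs.filter fun i => ¬ 1 / 2 < ht i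
  obtain ⟨E', hE', hcardE, k, hk, f⟩ := d.exists_fillable s hwd hht hε
  obtain ⟨Q₁, hQ₁, hcardQ, hareaQ⟩ := d.exists_small_subset s (fun i => (hwd i).le)
    (fun i => (hht i).le) g
  have hlong : long ⊆ Vs := Finset.filter_subset _ _
  have hshort : short ⊆ Vs := Finset.filter_subset _ _
  have hVs : Vs ⊆ W ∪ V := d.aside_subset.trans Finset.subset_union_right
  have hE'WV : E' ⊆ W ∪ V := hE'.trans d.survivors_subset
  have hHVs : Disjoint H₀ Vs := s.disjoint_spanning.mono d.spanning_subset hVs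
  have hshortE : short ∪ E' ⊆ W ∪ V := Finset.union_subset (hshort.trans hVs) hE'WV
  have hHQ : Disjoint H Q := s.disjoint_small.mono_left Finset.subset_union_left
  have hWVQ : Disjoint (W ∪ V) Q := s.disjoint_small.mono_left Finset.subset_union_right
  obtain ⟨Q₂, hQ₂, hcardQ₂, t⟩ := f Q₁ (hWVQ.mono hshortE hQ₁) (fun i hi => s.small i (hQ₁ hi))
    (le_max_of_le_right hareaQ)
  have hQ₂Q : Q₂ ⊆ Q := hQ₂.trans hQ₁
  have hHC : Disjoint H₀ (short ∪ E' ∪ Q₂) := Finset.disjoint_union_right.2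
    ⟨s.disjoint_spanning.mono d.spanning_subset hshortE, hHQ.mono d.spanning_subset hQ₂Q⟩
  have hVC : Disjoint long (short ∪ E' ∪ Q₂) := Finset.disjoint_union_right.2
    ⟨Finset.disjoint_union_right.2 ⟨Finset.disjoint_filter_filter_not _ _ _,
      d.disjoint.symm.mono hlong hE'⟩, hWVQ.mono (hlong.trans hVs) hQ₂Q⟩
  refine ⟨E', hE', hcardE, Q₂, hQ₂Q, ?_, H₀, long, short ∪ E' ∪ Q₂, ?_, hHVs.mono_right hlong,
    hHC, hVC, fun i hi => ?_, fun i hi => ⟨(Finset.mem_filter.1 hi).2, ?_⟩,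
    d.cornerChain s hwd hht g, t.mono_count hk⟩
  · have : Q₁.card ≤ Q₂.card + p.numContainers := by
      have := Finset.card_sdiff_add_card_eq_card hQ₂
      omega
    exact hcardQ.trans (mod_cast this)
  · rw [← (Finset.filter_union_filter_not_eq _ _ : long ∪ short = Vs)]
    simp only [Finset.union_assoc, long, short]
  · have := s.spanning i (d.spanning_subset hi)
    exact ⟨by linarith, by linarith⟩
  · linarith [s.tall i (d.aside_subset (hlong hi))]

lemma card_le_card_survivors (d : StripDeletion wd ht p.M p.δ p.u H W V H₀ E Vs) :
    (W.card / 2 + (1 - ε) * V.card : ℝ) ≤ E.card + Vs.card := by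
  have hM : (0 : ℝ) < p.M := Nat.cast_pos.2 p.M_pos
  have hcard : (p.M * (W.card + 2 * V.card) : ℝ) ≤ p.M * (2 * E.card + 2 * Vs.card) + 4 * V.card :=
    mod_cast d.card_le
  have hdiv : (W.card + 2 * V.card : ℝ) ≤ 2 * E.card + 2 * Vs.card + 2 * (2 / p.M * V.card) := by
    refine le_of_mul_le_mul_left (hcard.trans_eq ?_) hM
    field_simp
    ring
  linarith [mul_le_mul_of_nonneg_right p.two_div_le (Nat.cast_nonneg V.card)]

end StripDeletion

lemma SizeClasses.exists_lcPackable (s : SizeClasses p wd ht S H W V Q) (hwd : ∀ i, 0 < wd i)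
    (hht : ∀ i, 0 < ht i) (hε : ε ≤ 1) (g : GuillotinePacking wd ht S place (knapsack 1)) :
    ∃ T ⊆ H ∪ W ∪ V ∪ Q, LCPackable wd ht 1 ε T p.numContainers ∧
      ((H.card + W.card) / 2 + (1 - ε) * (V.card + Q.card) -
        (p.numContainers + p.numStacks + 2) : ℝ) ≤ T.card := by
  obtain ⟨H₀, E, Vs, d⟩ := s.exists_stripDeletion hwd (fun i => (hht i).le) g
  obtain ⟨E', hE', hcardE, Q₂, hQ₂, hcardQ, c⟩ := d.exists_lcPackable s hwd hht hε g
  have hVsV : Vs ⊆ W ∪ V := d.aside_subset.trans Finset.subset_union_right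
  have hE'WV : E' ⊆ W ∪ V := hE'.trans d.survivors_subset
  have hsub : H₀ ∪ Vs ∪ E' ⊆ H ∪ (W ∪ V) := by
    rw [Finset.union_assoc]
    exact Finset.union_subset_union d.spanning_subset (Finset.union_subset hVsV hE'WV)
  refine ⟨_, Finset.union_subset_union (by rwa [Finset.union_assoc H]) hQ₂, c, ?_⟩
  have hcard : (H₀ ∪ Vs ∪ E' ∪ Q₂).card = H₀.card + Vs.card + E'.card + Q₂.card := by
    rw [Finset.card_union_of_disjoint (s.disjoint_small.mono hsub hQ₂),
      Finset.card_union_of_disjoint (Finset.disjoint_union_left.2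
        ⟨s.disjoint_spanning.mono d.spanning_subset hE'WV, d.disjoint.symm.mono_right hE'⟩),
      Finset.card_union_of_disjoint (s.disjoint_spanning.mono d.spanning_subset hVsV)]
  have hEE' : (E.card : ℝ) ≤ E'.card + p.numStacks := by
    have := Finset.card_sdiff_add_card_eq_card hE'
    exact_mod_cast (by omega : E.card ≤ E'.card + p.numStacks)
  have hHH₀ : (H.card : ℝ) ≤ 2 * H₀.card + 1 := mod_cast d.card_spanning_le
  rw [hcard]
  push_cast
  linarith [d.card_le_card_survivors]

end HalfOfWideItems

/-! ### Choosing a scale with few critical items -/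

section CriticalItems

open Set

variable {t u a b : ℝ}

/-- An item of size `a × b` is critical for the scales `u < t` if one of its sides is nearly, but
not almost exactly, as long as the unit knapsack, or if its longer side lies between the two
scales. -/
def IsCritical (t u a b : ℝ) : Prop :=
  1 - a ∈ Ioc u t ∨ 1 - b ∈ Ioc u t ∨ max a b ∈ Ico u t

lemma IsCritical.symm (h : IsCritical t u a b) : IsCritical t u b a := by
  rw [IsCritical, max_comm, or_left_comm]
  exact h

lemma lt_or_le_of_not_isCritical (h : ¬ IsCritical t u a b) : a < 1 - t ∨ 1 - u ≤ a := by
  by_contra! hc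
  exact h (Or.inl ⟨by linarith, by linarith⟩)

lemma lt_and_lt_of_not_isCritical (h : ¬ IsCritical t u a b) (ha : a < t) (hb : b < t) :
    a < u ∧ b < u :=
  max_lt_iff.1 (not_le.1 fun hu => h (Or.inr (Or.inr ⟨hu, max_lt ha hb⟩)))

open Classical in
lemma card_filter_mem_le_one {α : Type*} {A : ℕ → Set α} (hA : Pairwise (Function.onFun Disjoint A))
    (r : Finset ℕ) (x : α) : (r.filter (x ∈ A ·)).card ≤ 1 :=
  Finset.card_le_one.2 fun _ hi _ hj => by_contra fun hij =>
    (hA hij).notMem_of_mem_left (Finset.mem_filter.1 hi).2 (Finset.mem_filter.1 hj).2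

variable {s : ℕ → ℝ}

open Classical in
lemma card_filter_isCritical_le (hs : Antitone s) (r : Finset ℕ) (a b : ℝ) :
    (r.filter fun j => IsCritical (s j) (s (j + 1)) a b).card ≤ 3 := by
  have hIoc : Pairwise (Function.onFun Disjoint fun j => Ioc (s (j + 1)) (s j)) :=
    hs.pairwise_disjoint_on_Ioc_succ
  have hIco : Pairwise (Function.onFun Disjoint fun j => Ico (s (j + 1)) (s j)) :=
    hs.pairwise_disjoint_on_Ico_succ
  refine (Finset.card_le_card fun j hj => ?_).trans ((Finset.card_union_le _ _).trans
    (add_le_add (card_filter_mem_le_one hIoc r (1 - a)) ((Finset.card_union_le _ _).trans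
      (add_le_add (card_filter_mem_le_one hIoc r (1 - b))
        (card_filter_mem_le_one hIco r (max a b))))))
  simpa only [IsCritical, Finset.mem_union, Finset.mem_filter, ← and_or_left] using
    Finset.mem_filter.1 hj

open Classical in
lemma exists_mul_card_filter_isCritical_le {ι : Type u} (hs : Antitone s) {J : ℕ} (hJ : 0 < J)
    (wd ht : ι → ℝ) (S : Finset ι) :
    ∃ j < J, J * (S.filter fun i => IsCritical (s j) (s (j + 1)) (wd i) (ht i)).card ≤
      3 * S.card := by
  obtain ⟨j, hj, hcard⟩ := exists_mul_card_filter_le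
    (fun j i => IsCritical (s j) (s (j + 1)) (wd i) (ht i)) (Finset.nonempty_range_iff.2 hJ.ne') S
    fun i _ => card_filter_isCritical_le hs (Finset.range J) (wd i) (ht i)
  exact ⟨j, Finset.mem_range.1 hj, by rwa [Finset.card_range] at hcard⟩

lemma exists_scales {ε : ℝ} (hε : 0 < ε) :
    ∃ (s : ℕ → ℝ) (p : ∀ j, ScaleParameters ε (s j)), ∀ j, s (j + 1) = (p j).u := by
  let next (q : Σ t, ScaleParameters ε t) : Σ t, ScaleParameters ε t :=
    ⟨q.2.u, (ScaleParameters.nonempty hε q.2.u_pos (q.2.u_lt.le.trans q.2.le_quarter)).some⟩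
  let start : Σ t, ScaleParameters ε t :=
    ⟨1 / 4, (ScaleParameters.nonempty hε (by norm_num) le_rfl).some⟩
  exact ⟨fun j => (next^[j] start).1, fun j => (next^[j] start).2, fun j => by
    simp only [Function.iterate_succ_apply', next]⟩

end CriticalItems

section NoncriticalItems

variable {ι : Type u} {wd ht : ι → ℝ} {ε t δ : ℝ} {S T : Finset ι} {place : ι → Rect}

/-- The items of `T` of width at least and height less than `δ`. -/
noncomputable def flatItems (wd ht : ι → ℝ) (δ : ℝ) (T : Finset ι) : Finset ι :=
  T.filter fun i => δ ≤ wd i ∧ ht i < δ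

/-- The items of `T` with both sides less than `δ`. -/
noncomputable def smallItems (wd ht : ι → ℝ) (δ : ℝ) (T : Finset ι) : Finset ι :=
  T.filter fun i => wd i < δ ∧ ht i < δ

/-- The items of `T` with both sides at least `δ`. -/
noncomputable def bigItems (wd ht : ι → ℝ) (δ : ℝ) (T : Finset ι) : Finset ι :=
  T.filter fun i => δ ≤ wd i ∧ δ ≤ ht i

lemma card_flatItems_add_card_flatItems_swap_add_card_smallItems_add_card_bigItems :
    (flatItems wd ht δ T).card + (flatItems ht wd δ T).card + (smallItems wd ht δ T).card +
      (bigItems wd ht δ T).card = T.card := by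
  simp only [flatItems, smallItems, bigItems, Finset.card_filter, ← Finset.sum_add_distrib]
  rw [Finset.card_eq_sum_ones]
  refine Finset.sum_congr rfl fun i _ => ?_
  rcases lt_or_ge (wd i) δ with hw | hw <;> rcases lt_or_ge (ht i) δ with hh | hh <;>
    simp [hw, hh, not_le.2, not_lt.2]

lemma card_bigItems_le (hht : ∀ i, 0 ≤ ht i) (hδ : 0 < δ)
    (g : GuillotinePacking wd ht S place (knapsack 1)) (hTS : T ⊆ S) :
    (bigItems wd ht δ T).card ≤ 1 / (δ * δ) := by
  rw [le_div_iff₀ (mul_pos hδ hδ), ← nsmul_eq_mul]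
  refine (Finset.card_nsmul_le_sum _ _ _ fun i hi => ?_).trans
    (g.totalArea_le_one hht ((Finset.filter_subset _ T).trans hTS))
  obtain ⟨-, hwi, hhi⟩ := Finset.mem_filter.1 hi
  exact mul_le_mul hwi hhi hδ.le (hδ.le.trans hwi)

variable [DecidableEq ι]

lemma SizeClasses.of_noncritical (p : ScaleParameters ε t) (hTS : T ⊆ S)
    (hT : ∀ i ∈ T, ¬ IsCritical t p.u (wd i) (ht i)) :
    SizeClasses p wd ht S ((flatItems wd ht p.δ T).filter (1 - p.u ≤ wd ·))
      ((flatItems wd ht p.δ T).filter (¬ 1 - p.u ≤ wd ·)) (flatItems ht wd p.δ T)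
      (smallItems wd ht p.δ T) where
  subset := by
    rw [Finset.filter_union_filter_not_eq]
    exact (Finset.union_subset (Finset.union_subset (Finset.filter_subset _ _)
      (Finset.filter_subset _ _)) (Finset.filter_subset _ _)).trans hTS
  spanning i hi := by
    obtain ⟨hflat, hwi⟩ := Finset.mem_filter.1 hi
    exact ⟨hwi, (Finset.mem_filter.1 hflat).2.2⟩
  wide i hi := by
    obtain ⟨hflat, hwi⟩ := Finset.mem_filter.1 hi
    obtain ⟨hiT, hδ, -⟩ := Finset.mem_filter.1 hflat
    exact ⟨hδ, (lt_or_le_of_not_isCritical (hT i hiT)).resolve_right hwi⟩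
  tall i hi := (Finset.mem_filter.1 hi).2.symm
  small i hi := by
    obtain ⟨hiT, hw, hh⟩ := Finset.mem_filter.1 hi
    have hδt : p.δ ≤ t := by linarith [p.two_mul_δ_le, p.δ_pos]
    exact (lt_and_lt_of_not_isCritical (hT i hiT) (hw.trans_le hδt) (hh.trans_le hδt)).imp
      le_of_lt le_of_lt

lemma LCPackable.mono_count {N : ℝ} {k k' : ℕ} (l : LCPackable wd ht N ε S k) (hk : k ≤ k') :
    LCPackable wd ht N ε S k' := by
  obtain ⟨SH, SV, SC, hS, hHV, hHC, hVC, hSH, hSV, hcorner, t⟩ := l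
  exact ⟨SH, SV, SC, hS, hHV, hHC, hVC, hSH, hSV, hcorner, t.mono_count hk⟩

lemma exists_lcPackable_of_card_flatItems_le (p : ScaleParameters ε t) (hε : ε ≤ 1)
    (hwd : ∀ i, 0 < wd i) (hht : ∀ i, 0 < ht i)
    (g : GuillotinePacking wd ht S place (knapsack 1)) (hTS : T ⊆ S)
    (hT : ∀ i ∈ T, ¬ IsCritical t p.u (wd i) (ht i))
    (hle : (flatItems wd ht p.δ T).card ≤ (flatItems ht wd p.δ T).card) :
    ∃ T' ⊆ T, LCPackable wd ht 1 ε T' p.loss ∧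
      ((3 / 4 - ε) * T.card - p.loss : ℝ) ≤ T'.card := by
  obtain ⟨T', hT', l, hcard⟩ :=
    (SizeClasses.of_noncritical p hTS hT).exists_lcPackable hwd hht hε g
  refine ⟨T', hT'.trans (SizeClasses.of_noncritical p subset_rfl hT).subset,
    l.mono_count (by unfold ScaleParameters.loss; omega), hcard.trans' ?_⟩
  have hbig : ((bigItems wd ht p.δ T).card : ℝ) ≤ ⌈1 / (p.δ * p.δ)⌉₊ :=
    (card_bigItems_le (fun i => (hht i).le) p.δ_pos g hTS).trans (Nat.le_ceil _)
  have hflat : (((flatItems wd ht p.δ T).filter (1 - p.u ≤ wd ·)).card +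
      ((flatItems wd ht p.δ T).filter (¬ 1 - p.u ≤ wd ·)).card : ℝ) =
      (flatItems wd ht p.δ T).card := by
    exact_mod_cast Finset.card_filter_add_card_filter_not (1 - p.u ≤ wd ·)
  have hle' : ((flatItems wd ht p.δ T).card : ℝ) ≤ (flatItems ht wd p.δ T).card := mod_cast hle
  have hεflat : 0 ≤ ε * (flatItems wd ht p.δ T).card :=
    mul_nonneg p.ε_pos.le (Nat.cast_nonneg _)
  have hεbig : 0 ≤ ε * (bigItems wd ht p.δ T).card := mul_nonneg p.ε_pos.le (Nat.cast_nonneg _)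
  have hsmall : (0 : ℝ) ≤ (smallItems wd ht p.δ T).card := Nat.cast_nonneg _
  rw [hflat, ScaleParameters.loss,
    ← card_flatItems_add_card_flatItems_swap_add_card_smallItems_add_card_bigItems (wd := wd)
      (ht := ht) (δ := p.δ) (T := T)]
  push_cast
  linarith [hsmall]

lemma exists_lcPackable_of_noncritical (p : ScaleParameters ε t) (hε : ε ≤ 1)
    (hwd : ∀ i, 0 < wd i) (hht : ∀ i, 0 < ht i)
    (g : GuillotinePacking wd ht S place (knapsack 1)) (hTS : T ⊆ S)
    (hT : ∀ i ∈ T, ¬ IsCritical t p.u (wd i) (ht i)) :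
    ∃ T' ⊆ T, LCPackable wd ht 1 ε T' p.loss ∧
      ((3 / 4 - ε) * T.card - p.loss : ℝ) ≤ T'.card := by
  rcases le_total (flatItems wd ht p.δ T).card (flatItems ht wd p.δ T).card with hle | hle
  · exact exists_lcPackable_of_card_flatItems_le p hε hwd hht g hTS hT hle
  · obtain ⟨T', hT', l, hcard⟩ := exists_lcPackable_of_card_flatItems_le p hε hht hwd g.transpose
      hTS (fun i hi h => hT i hi h.symm) hle
    exact ⟨T', hT', l.swap, hcard⟩

end NoncriticalItems

section UnitKnapsackTheorem

variable {ι : Type u} [DecidableEq ι] {wd ht : ι → ℝ} {ε : ℝ} {S : Finset ι} {place : ι → Rect}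

lemma GuillotinePacking.lcPackable (g : GuillotinePacking wd ht S place (knapsack 1)) :
    LCPackable wd ht 1 ε S (max 1 S.card) := by
  obtain ⟨k, t⟩ := g.exists_tree subset_rfl
  refine ⟨∅, ∅, S, by simp, by simp, by simp, by simp, by simp, by simp,
    .nil zero_le_one zero_le_one, ?_⟩
  simpa using t.toStacked.map (L' := ContainerLeaf wd ht ε) fun _ _ _ => Or.inl

open Classical in
lemma exists_lcPackable_of_scales {s : ℕ → ℝ} {p : ∀ j, ScaleParameters ε (s j)}
    (hs : ∀ j, s (j + 1) = (p j).u) {J : ℕ} (hJ : 3 ≤ ε * J) (hε : ε ≤ 1)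
    (hwd : ∀ i, 0 < wd i) (hht : ∀ i, 0 < ht i)
    (g : GuillotinePacking wd ht S place (knapsack 1)) :
    ∃ T ⊆ S, LCPackable wd ht 1 ε T (∑ j ∈ Finset.range J, (p j).loss) ∧
      ((3 / 4 - 2 * ε) * S.card - ↑(∑ j ∈ Finset.range J, (p j).loss) : ℝ) ≤ T.card := by
  have hε₀ := (p 0).ε_pos
  have hJ₀ : (0 : ℝ) < J := pos_of_mul_pos_right (by linarith) hε₀.le
  have hanti : Antitone s := antitone_nat_of_succ_le fun j => (hs j).trans_le (p j).u_lt.le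
  obtain ⟨j, hj, hcrit⟩ :=
    exists_mul_card_filter_isCritical_le hanti (Nat.cast_pos.1 hJ₀) wd ht S
  obtain ⟨T, hT, l, hcard⟩ := exists_lcPackable_of_noncritical (p j) hε hwd hht g
    (Finset.filter_subset (fun i => ¬ IsCritical (s j) (s (j + 1)) (wd i) (ht i)) S)
    fun i hi => hs j ▸ (Finset.mem_filter.1 hi).2
  have hloss : (p j).loss ≤ ∑ j ∈ Finset.range J, (p j).loss :=
    Finset.single_le_sum (f := fun j => (p j).loss) (fun _ _ => Nat.zero_le _)
      (Finset.mem_range.2 hj)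
  refine ⟨T, hT.trans (Finset.filter_subset _ _), l.mono_count hloss, hcard.trans' ?_⟩
  have hsplit := Finset.card_filter_add_card_filter_not (s := S)
    fun i => IsCritical (s j) (s (j + 1)) (wd i) (ht i)
  set B := S.filter fun i => IsCritical (s j) (s (j + 1)) (wd i) (ht i)
  have hB : (B.card : ℝ) ≤ ε * S.card := by
    refine le_of_mul_le_mul_left ?_ hJ₀
    calc (J * B.card : ℝ) ≤ 3 * S.card := mod_cast hcrit
      _ ≤ ε * J * S.card := by gcongr
      _ = J * (ε * S.card) := by ring
  have hεB : 0 ≤ ε * B.card := mul_nonneg hε₀.le (Nat.cast_nonneg _)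
  have hloss' : ((p j).loss : ℝ) ≤ ↑(∑ j ∈ Finset.range J, (p j).loss) := mod_cast hloss
  have hsplit' : (B.card + (S.filter fun i => ¬ IsCritical (s j) (s (j + 1)) (wd i) (ht i)).card :
      ℝ) = S.card := mod_cast hsplit
  rw [← hsplit'] at hB ⊢
  nlinarith

theorem exists_lcPackable_unit {ε : ℝ} (hε : 0 < ε) :
    ∃ K : ℕ, ∀ (ι : Type u) [DecidableEq ι] (wd ht : ι → ℝ) (S : Finset ι) (place : ι → Rect),
      (∀ i, 0 < wd i) → (∀ i, 0 < ht i) → GuillotinePacking wd ht S place (knapsack 1) →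
        ∃ T ⊆ S, LCPackable wd ht 1 ε T K ∧ ((3 / 4 - 3 * ε) * S.card : ℝ) ≤ T.card := by
  obtain ⟨s, p, hs⟩ := exists_scales hε
  obtain ⟨J, hJ⟩ := exists_nat_gt (3 / ε)
  have hJε : 3 ≤ ε * J := ((div_lt_iff₀' hε).1 hJ).le
  set loss := ∑ j ∈ Finset.range J, (p j).loss
  obtain ⟨L, hL⟩ := exists_nat_gt (loss / ε)
  refine ⟨max loss (max 1 L), fun ι _ wd ht S place hwd hht g => ?_⟩
  have hS : (0 : ℝ) ≤ S.card := Nat.cast_nonneg _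
  rcases lt_or_ge 1 ε with hε₁ | hε₁
  · have gempty : GuillotinePacking wd ht ∅ place (knapsack 1) := .empty
    refine ⟨∅, Finset.empty_subset S, gempty.lcPackable.mono_count (by simp), ?_⟩
    rw [Finset.card_empty, Nat.cast_zero]
    exact mul_nonpos_of_nonpos_of_nonneg (by linarith) hS
  rcases le_or_gt S.card L with hSL | hSL
  · refine ⟨S, subset_rfl, g.lcPackable.mono_count (by omega), ?_⟩
    exact mul_le_of_le_one_left hS (by linarith)
  · obtain ⟨T, hTS, l, hcard⟩ := exists_lcPackable_of_scales hs hJε hε₁ hwd hht g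
    refine ⟨T, hTS, l.mono_count (le_max_left _ _), hcard.trans' ?_⟩
    have hloss : (loss : ℝ) ≤ ε * S.card :=
      ((div_lt_iff₀' hε).1 hL).le.trans (by gcongr)
    linarith

end UnitKnapsackTheorem

/-! ### Scaling to an arbitrary knapsack -/

section Scaling

variable {ι : Type u} {wd ht : ι → ℝ} {c ε w h : ℝ} {k : ℕ} {S : Finset ι} {place : ι → Rect}
  {P : Rect}

/-- The image of a rectangle under the dilation with factor `c` about the origin. -/
noncomputable def Rect.scale (c : ℝ) (r : Rect) : Rect :=
  ⟨c * r.x1, c * r.x2, c * r.y1, c * r.y2⟩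

lemma GuillotineSep.scale (hc : 0 < c) (g : GuillotineSep place P S) :
    GuillotineSep (fun i => (place i).scale c) (P.scale c) S := by
  induction g with
  | base P S hS => exact .base _ _ hS
  | vcut P S x h₁ h₂ hcross _ _ ihL ihR =>
    refine .vcut _ _ (c * x) (mul_lt_mul_of_pos_left h₁ hc) (mul_lt_mul_of_pos_left h₂ hc)
      (fun i hi => (hcross i hi).imp (mul_le_mul_of_nonneg_left · hc.le)
        (mul_le_mul_of_nonneg_left · hc.le)) ?_ ?_
    · simpa only [Rect.scale, mul_le_mul_iff_right₀ hc] using ihL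
    · simpa only [Rect.scale, mul_le_mul_iff_right₀ hc] using ihR
  | hcut P S y h₁ h₂ hcross _ _ ihL ihR =>
    refine .hcut _ _ (c * y) (mul_lt_mul_of_pos_left h₁ hc) (mul_lt_mul_of_pos_left h₂ hc)
      (fun i hi => (hcross i hi).imp (mul_le_mul_of_nonneg_left · hc.le)
        (mul_le_mul_of_nonneg_left · hc.le)) ?_ ?_
    · simpa only [Rect.scale, mul_le_mul_iff_right₀ hc] using ihL
    · simpa only [Rect.scale, mul_le_mul_iff_right₀ hc] using ihR

lemma IsPacking.scale (hc : 0 < c) (g : IsPacking wd ht S place P) :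
    IsPacking (c * wd ·) (c * ht ·) S (fun i => (place i).scale c) (P.scale c) where
  hw i hi := by
    rw [← g.hw i hi]
    exact (mul_sub c _ _).symm
  hh i hi := by
    rw [← g.hh i hi]
    exact (mul_sub c _ _).symm
  hin i hi :=
    have ⟨hx₁, hx₂, hy₁, hy₂⟩ := g.hin i hi
    ⟨mul_le_mul_of_nonneg_left hx₁ hc.le, mul_le_mul_of_nonneg_left hx₂ hc.le,
      mul_le_mul_of_nonneg_left hy₁ hc.le, mul_le_mul_of_nonneg_left hy₂ hc.le⟩
  hdisj i hi j hj hij := by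
    have hpre (r : Rect) :
        (r.scale c).toSet = (fun z : ℝ × ℝ => (z.1 / c, z.2 / c)) ⁻¹' r.toSet := by
      ext z
      simp only [Rect.toSet, Rect.scale, Set.mem_preimage, Set.mem_ofPred_eq, lt_div_iff₀' hc,
        div_lt_iff₀' hc]
    rw [hpre, hpre]
    exact (g.hdisj i hi j hj hij).preimage _

lemma GuillotinePacking.scale (hc : 0 < c) (g : GuillotinePacking wd ht S place P) :
    GuillotinePacking (c * wd ·) (c * ht ·) S (fun i => (place i).scale c) (P.scale c) :=
  ⟨g.1.scale hc, g.2.scale hc⟩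

lemma IsPacking.congr_size {wd' ht' : ι → ℝ} (g : IsPacking wd ht S place P)
    (hsize : ∀ i ∈ S, wd' i = wd i ∧ ht' i = ht i) : IsPacking wd' ht' S place P where
  hw i hi := (g.hw i hi).trans (hsize i hi).1.symm
  hh i hi := (g.hh i hi).trans (hsize i hi).2.symm
  hin := g.hin
  hdisj := g.hdisj

lemma SingleItem.scale (hc : 0 ≤ c) (hS : SingleItem wd ht w h S) :
    SingleItem (c * wd ·) (c * ht ·) (c * w) (c * h) S :=
  hS.imp_right fun hfit i hi => (hfit i hi).imp (mul_le_mul_of_nonneg_left · hc)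
    (mul_le_mul_of_nonneg_left · hc)

lemma Stacked.scale (hc : 0 ≤ c) (hS : Stacked wd ht w h S) :
    Stacked (c * wd ·) (c * ht ·) (c * w) (c * h) S := by
  simp only [Stacked, ← Finset.mul_sum]
  exact hS.imp
    (And.imp (fun hfit i hi => mul_le_mul_of_nonneg_left (hfit i hi) hc)
      (mul_le_mul_of_nonneg_left · hc))
    (And.imp (fun hfit i hi => mul_le_mul_of_nonneg_left (hfit i hi) hc)
      (mul_le_mul_of_nonneg_left · hc))

variable [DecidableEq ι]

lemma ContainerLeaf.scale (hc : 0 ≤ c) (hS : ContainerLeaf wd ht ε w h S) :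
    ContainerLeaf (c * wd ·) (c * ht ·) ε (c * w) (c * h) S := by
  refine hS.imp (Stacked.scale hc) fun ⟨⟨m, t⟩, hsmall⟩ =>
    ⟨⟨m, t.map_scale hc hc fun _ _ _ => SingleItem.scale hc⟩, fun i hi => ?_⟩
  simp only [mul_left_comm ε c]
  exact (hsmall i hi).imp (mul_le_mul_of_nonneg_left · hc) (mul_le_mul_of_nonneg_left · hc)

lemma CornerChain.scale (hc : 0 ≤ c) {SH SV : Finset ι} (l : CornerChain wd ht w h SH SV) :
    CornerChain (c * wd ·) (c * ht ·) (c * w) (c * h) SH SV := by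
  induction l with
  | nil hw hh => exact .nil (mul_nonneg hc hw) (mul_nonneg hc hh)
  | consV i hi hi' hw hh _ ih =>
    exact .consV i hi hi' (mul_le_mul_of_nonneg_left hw hc) (mul_le_mul_of_nonneg_left hh hc)
      (mul_sub c _ _ ▸ ih)
  | consH i hi hi' hw hh _ ih =>
    exact .consH i hi hi' (mul_le_mul_of_nonneg_left hw hc) (mul_le_mul_of_nonneg_left hh hc)
      (mul_sub c _ _ ▸ ih)

lemma LCPackable.scale (hc : 0 < c) (l : LCPackable wd ht 1 ε S k) :
    LCPackable (c * wd ·) (c * ht ·) c ε S k := by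
  obtain ⟨SH, SV, SC, hS, hHV, hHC, hVC, hSH, hSV, hcorner, t⟩ := l
  have hlong (a : ℝ) : c / 2 < c * a ↔ 1 / 2 < a := by
    rw [div_eq_mul_one_div, mul_lt_mul_iff_right₀ hc]
  refine ⟨SH, SV, SC, hS, hHV, hHC, hVC, by simpa only [hlong] using hSH,
    by simpa only [hlong] using hSV, by simpa only [mul_one] using hcorner.scale hc.le, ?_⟩
  simpa only [← Finset.mul_sum, mul_sub, mul_one] using
    t.map_scale hc.le hc.le fun _ _ _ => ContainerLeaf.scale (ε := ε) hc.le

lemma IsLCPacking.congr_size {wd' ht' : ι → ℝ} {N : ℝ} (g : IsLCPacking wd ht N ε S place k)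
    (hsize : ∀ i ∈ S, wd' i = wd i ∧ ht' i = ht i) : IsLCPacking wd' ht' N ε S place k := by
  obtain ⟨N₁, N₂, SL, cont, lab, asg, hN₁, hN₁', hN₂, hN₂', hSL, hpack, hsep, hlong, hwide, htall,
    hcont⟩ := g
  refine ⟨N₁, N₂, SL, cont, lab, asg, hN₁, hN₁', hN₂, hN₂', hSL, hpack.congr_size hsize, hsep,
    fun i hi => ?_, fun i hi => ?_, fun i hi => ?_, hcont⟩
  · rw [(hsize i (hSL hi)).1, (hsize i (hSL hi)).2]
    exact hlong i hi
  · rw [(hsize i (hSL hi)).1]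
    exact hwide i hi
  · rw [(hsize i (hSL hi)).1]
    exact htall i hi

end Scaling

theorem LC_packing_three_fourths_cardinality_general {ε : ℝ} (hε : 0 < ε) :
    ∃ kb : ℕ, ∀ (ι : Type u) [DecidableEq ι] (wd ht : ι → ℝ) (N : ℝ) (OPT : Finset ι), 0 < N →
      (∀ i ∈ OPT, 0 < wd i ∧ 0 < ht i) →
      (∃ place, GuillotinePacking wd ht OPT place (knapsack N)) →
      ∃ (S : Finset ι) (place : ι → Rect) (k : ℕ), S ⊆ OPT ∧ k ≤ kb ∧
        IsLCPacking wd ht N ε S place k ∧ (3 / 4 - 3 * ε) * (OPT.card : ℝ) ≤ (S.card : ℝ) := by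
  obtain ⟨kb, hkb⟩ := exists_lcPackable_unit hε
  refine ⟨kb, fun ι _ wd ht N OPT hN hpos ⟨place, g⟩ => ?_⟩
  let wd' (i : ι) : ℝ := if i ∈ OPT then wd i else 1
  let ht' (i : ι) : ℝ := if i ∈ OPT then ht i else 1
  have hsize (i : ι) (hi : i ∈ OPT) : wd' i = wd i ∧ ht' i = ht i := ⟨if_pos hi, if_pos hi⟩
  have hwd' (i : ι) : 0 < wd' i := by
    by_cases hi : i ∈ OPT
    · simpa only [wd', if_pos hi] using (hpos i hi).1
    · simp only [wd', if_neg hi, zero_lt_one]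
  have hht' (i : ι) : 0 < ht' i := by
    by_cases hi : i ∈ OPT
    · simpa only [ht', if_pos hi] using (hpos i hi).2
    · simp only [ht', if_neg hi, zero_lt_one]
  have hunit : (knapsack N).scale N⁻¹ = knapsack 1 := by
    simp [Rect.scale, knapsack, hN.ne']
  have g' := GuillotinePacking.scale (inv_pos.2 hN) ⟨g.1.congr_size hsize, g.2⟩
  rw [hunit] at g'
  obtain ⟨S, hS, l, hcard⟩ := hkb ι _ _ OPT _ (fun i => mul_pos (inv_pos.2 hN) (hwd' i))
    (fun i => mul_pos (inv_pos.2 hN) (hht' i)) g'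
  have l' : LCPackable wd' ht' N ε S kb := by
    simpa only [mul_inv_cancel_left₀ hN.ne'] using l.scale hN
  obtain ⟨place', k, hk, hLC⟩ := l'.exists_isLCPacking hwd' hht'
  exact ⟨S, place', k, hS, hk,
    hLC.congr_size fun i hi => (hsize i (hS hi)).imp Eq.symm Eq.symm, hcard⟩

/-- For cardinality 2GGK with guillotine cuts, a best guillotine
separable `L&C` packing has cardinality at least `(3/4 - O(ε))` times the optimum. -/
theorem LC_packing_three_fourths_cardinality :
    ∃ C : ℝ, 0 < C ∧
    ∀ ε : ℝ, 0 < ε → ε < 1 →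
    ∃ kb : ℕ,
    ∀ (ι : Type) [DecidableEq ι] (items : Finset ι) (wd ht : ι → ℕ) (N : ℕ),
      0 < N →
      (∀ i ∈ items, 0 < wd i ∧ 0 < ht i) →
      ∀ OPT : Finset ι, OPT ⊆ items →
        (∃ place, GuillotinePacking (fun i => (wd i : ℝ)) (fun i => (ht i : ℝ))
            OPT place (knapsack (N : ℝ))) →
        (∀ T : Finset ι, T ⊆ items →
          (∃ place, GuillotinePacking (fun i => (wd i : ℝ)) (fun i => (ht i : ℝ))
              T place (knapsack (N : ℝ))) →
          T.card ≤ OPT.card) →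
        ∃ (S : Finset ι) (place : ι → Rect) (k : ℕ),
          S ⊆ items ∧ k ≤ kb ∧
          IsLCPacking (fun i => (wd i : ℝ)) (fun i => (ht i : ℝ)) (N : ℝ) ε S place k ∧
          (3 / 4 - C * ε) * (OPT.card : ℝ) ≤ (S.card : ℝ) := by
  refine ⟨3, by norm_num, fun ε hε _ => ?_⟩
  obtain ⟨kb, hkb⟩ := LC_packing_three_fourths_cardinality_general hε
  refine ⟨kb, fun ι _ items wd ht N hN hpos OPT hOPT hpack _ => ?_⟩
  obtain ⟨S, place, k, hS, hk, hLC, hcard⟩ := hkb ι (wd ·) (ht ·) N OPT (Nat.cast_pos.2 hN)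
    (fun i hi => (hpos i (hOPT hi)).imp Nat.cast_pos.2 Nat.cast_pos.2) hpack
  exact ⟨S, place, k, hS.trans hOPT, hk, hLC, hcard⟩
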